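/- arXiv:2010.00478 — 4 statements merged into one kernel-verified Lean document; each statement's English description precedes it below -/
import Mathlib

section
/- Let k and d be positive integers. Given any d probability measures μ₁, …, μ_d on ℝ^d, each absolutely continuous with respect to the Lebesgue measure, there exists a convex partition of ℝ^d into k parts C₁, …, C_k such that μ_i(C_j) = 1/k for every i = 1, …, d and every j = 1, …, k. -/
open MeasureTheory

/-!
For a prime `p`, take the cells where one of `p` affine functions on `ℝ^d` is the largest. A
limiting argument replaces the measures of the cells by their softmax versions, which depend
continuously on the `(d + 1) p` coefficients and are equivariant under cyclic shifts of the `p`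
functions. Among the coefficients, consider those in the join of `d + 1` copies of the boundary of
a `(p - 1)`-simplex; it contains the join of `(d + 1) (p - 1)` free `ℤ/p`-orbits. Where the masses
of some measure are not almost equal, the cells of largest mass form a proper nonempty subset of
`ℤ/p`, and its mean in `ℤ/p`, coloured by the measure and the size of the subset, is an
equivariant label. There are only `d (p - 1)` colours, which contradicts a `ℤ/p`-version of
Tucker's lemma: the labelling would induce an equivariant chain map into the periodic resolution of
`ℤ/p`, which carries a nontrivial index in degrees up to `(d + 1) (p - 1) - 1` but must vanish in
degrees at least the number of colours.

In the limit some of the `p` functions may coincide, but not all of them, so the cells form a convex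
partition whose parts have measures `w / p` with `0 < w < p`, simultaneously for all `d` measures.
If `p` divides `k`, each part is divided further by induction on `k`, applied to the conditional
measures, into `w k / p` parts.
-/

namespace ConvexEquipartition

/-! ### Chains on lists of points -/

section Chains

variable (R : Type*) [CommRing R] {X Y V : Type*} [AddCommGroup V] [Module R V]

/-- Simplicial chains over `R` on the full simplex with vertex set `X`: formal combinations of
ordered, possibly degenerate, simplices, each encoded by the list of its vertices. The complex is
augmented: the empty list spans the chains of dimension `-1`. -/
abbrev Chain (X : Type*) := List X →₀ R

/-- The chain consisting of the ordered simplex `l` with coefficient one. -/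
noncomputable abbrev simplex (l : List X) : Chain R X := Finsupp.single l 1

/-- Chains all of whose simplices belong to `s`. -/
abbrev chainsIn (s : Set (List X)) : Submodule R (Chain R X) := Finsupp.supported R R s

variable {R}

lemma simplex_mem_chainsIn {s : Set (List X)} {l : List X} (hl : l ∈ s) :
    simplex R l ∈ chainsIn R s :=
  Finsupp.single_mem_supported R 1 hl

lemma mem_chainsIn_of_subset {s t : Set (List X)} {c : Chain R X} (hc : c ∈ chainsIn R s)
    (hst : ∀ l ∈ s, l ∈ t) : c ∈ chainsIn R t :=
  Finsupp.supported_mono hst hc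

lemma apply_mem_of_mem_chainsIn {s : Set (List X)} {W : Submodule R V} {f : Chain R X →ₗ[R] V}
    (hf : ∀ l ∈ s, f (simplex R l) ∈ W) {c : Chain R X} (hc : c ∈ chainsIn R s) : f c ∈ W := by
  rw [chainsIn, Finsupp.supported_eq_span_single] at hc
  refine (Submodule.span_le (p := W.comap f)).2 ?_ hc
  rintro _ ⟨l, hl, rfl⟩
  exact hf l hl

lemma eq_of_mem_chainsIn {s : Set (List X)} {f g : Chain R X →ₗ[R] V}
    (hfg : ∀ l ∈ s, f (simplex R l) = g (simplex R l)) {c : Chain R X}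
    (hc : c ∈ chainsIn R s) : f c = g c := by
  have hmem : (f - g) c ∈ (⊥ : Submodule R V) :=
    apply_mem_of_mem_chainsIn (fun l hl => by simpa [sub_eq_zero] using hfg l hl) hc
  simpa [sub_eq_zero] using hmem

lemma hom_ext_simplex {f g : Chain R X →ₗ[R] V}
    (hfg : ∀ l, f (simplex R l) = g (simplex R l)) : f = g :=
  Finsupp.lhom_ext' fun l => LinearMap.ext_ring (hfg l)

/-- The cone operator with apex `a`, which prepends the vertex `a` to every simplex. -/
noncomputable def cone (a : X) : Module.End R (Chain R X) :=
  Finsupp.lmapDomain R R (List.cons a)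

@[simp] lemma cone_simplex (a : X) (l : List X) :
    cone a (simplex R l) = simplex R (a :: l) := by
  simp [cone]

/-- The chain map induced by a map of vertices. -/
noncomputable def mapChain (f : X → Y) : Chain R X →ₗ[R] Chain R Y :=
  Finsupp.lmapDomain R R (List.map f)

@[simp] lemma mapChain_simplex (f : X → Y) (l : List X) :
    mapChain f (simplex R l) = simplex R (l.map f) := by
  simp [mapChain]

lemma mapChain_cone (f : X → Y) (a : X) (c : Chain R X) :
    mapChain f (cone a c) = cone (f a) (mapChain f c) :=
  LinearMap.congr_fun (f := mapChain f ∘ₗ cone a) (g := cone (f a) ∘ₗ mapChain f)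
    (hom_ext_simplex fun l => by simp) c

lemma mapChain_pow (f : X → X) (n : ℕ) :
    (mapChain f : Module.End R (Chain R X)) ^ n = mapChain f^[n] := by
  induction n with
  | zero => exact hom_ext_simplex fun l => by simp
  | succ n ih => exact hom_ext_simplex fun l => by simp [pow_succ, ih]

/-- The simplicial boundary operator of the augmented chain complex. -/
noncomputable def boundary : Module.End R (Chain R X) :=
  Finsupp.linearCombination R fun l : List X =>
    ∑ i : Fin l.length, (-1 : R) ^ (i : ℕ) • simplex R (l.eraseIdx i)

lemma boundary_simplex (l : List X) : boundary (simplex R l) =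
    ∑ i : Fin l.length, (-1 : R) ^ (i : ℕ) • simplex R (l.eraseIdx i) := by
  simp [boundary]

@[simp] lemma boundary_simplex_nil : boundary (simplex R ([] : List X)) = 0 := by
  simp [boundary_simplex]

lemma boundary_simplex_cons (a : X) (l : List X) :
    boundary (simplex R (a :: l)) = simplex R l - cone a (boundary (simplex R l)) := by
  rw [boundary_simplex, boundary_simplex, map_sum]
  simp only [List.length_cons, Fin.sum_univ_succ, Fin.val_zero, Fin.val_succ, pow_zero, one_smul,
    List.eraseIdx_zero, List.tail_cons, List.eraseIdx_cons_succ, pow_succ, mul_neg, mul_one,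
    neg_smul, Finset.sum_neg_distrib, map_smul, cone_simplex, sub_eq_add_neg]

lemma boundary_cone (a : X) (c : Chain R X) :
    boundary (cone a c) = c - cone a (boundary c) :=
  LinearMap.congr_fun (f := boundary ∘ₗ cone a) (g := LinearMap.id - cone a ∘ₗ boundary)
    (hom_ext_simplex fun l => by simp [boundary_simplex_cons]) c

lemma boundary_boundary (c : Chain R X) : boundary (boundary c) = 0 := by
  refine LinearMap.congr_fun (f := boundary ∘ₗ boundary) (g := 0) (hom_ext_simplex fun l => ?_) c
  induction l with
  | nil => simp
  | cons a l ih =>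
    have ih : boundary (boundary (simplex R l)) = 0 := ih
    simp [boundary_simplex_cons, boundary_cone, ih]

lemma mapChain_boundary (f : X → Y) (c : Chain R X) :
    mapChain f (boundary c) = boundary (mapChain f c) := by
  refine LinearMap.congr_fun (f := mapChain f ∘ₗ boundary) (g := boundary ∘ₗ mapChain f)
    (hom_ext_simplex fun l => ?_) c
  induction l with
  | nil => simp
  | cons a l ih =>
    have ih : mapChain f (boundary (simplex R l)) = boundary (simplex R (l.map f)) := by
      simpa using ih
    simp [boundary_simplex_cons, mapChain_cone, ih]

lemma boundary_simplex_mem (l : List X) :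
    boundary (simplex R l) ∈ chainsIn R {l' | l'.Sublist l ∧ l'.length + 1 = l.length} := by
  rw [boundary_simplex]
  refine Submodule.sum_mem _ fun i _ => Submodule.smul_mem _ _ (simplex_mem_chainsIn ⟨?_, ?_⟩)
  · exact List.eraseIdx_sublist l i
  · exact List.length_eraseIdx_add_one i.isLt

end Chains

/-! ### Cyclic towers -/

section CyclicTowers

/-- The differentials of the periodic resolution of the cyclic group `⟨τ⟩` of order `p`:
`τ - 1` in even degrees and the norm element `1 + τ + ⋯ + τ ^ (p - 1)` in odd degrees. -/
def cyclicDiff {A : Type*} [Ring A] (p : ℕ) (τ : A) (n : ℕ) : A :=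
  if Even n then τ - 1 else ∑ i ∈ Finset.range p, τ ^ i

lemma cyclicDiff_succ_mul_cyclicDiff {A : Type*} [Ring A] {p : ℕ} {τ : A} (hτ : τ ^ p = 1)
    (n : ℕ) : cyclicDiff p τ (n + 1) * cyclicDiff p τ n = 0 := by
  by_cases hn : Even n
  · simp [cyclicDiff, hn, Nat.even_add_one, geom_sum_mul, hτ]
  · simp [cyclicDiff, hn, Nat.even_add_one, mul_geom_sum, hτ]

variable {R V V' : Type*} [CommRing R] [AddCommGroup V] [Module R V] [AddCommGroup V'] [Module R V']
  {τ : Module.End R V} {τ' : Module.End R V'} {W : Submodule R V} {p : ℕ}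

lemma cyclicDiff_apply_mem (hτ : ∀ x ∈ W, τ x ∈ W) (n : ℕ) {x : V} (hx : x ∈ W) :
    cyclicDiff p τ n x ∈ W := by
  have hpow (i : ℕ) : (τ ^ i) x ∈ W := Module.End.pow_apply_mem_of_forall_mem i hτ x hx
  unfold cyclicDiff
  split_ifs
  · exact W.sub_mem (hτ x hx) hx
  · rw [LinearMap.sum_apply]
    exact W.sum_mem fun i _ => hpow i

lemma map_cyclicDiff {f : V →ₗ[R] V'} (hτ : ∀ x ∈ W, τ x ∈ W)
    (hf : ∀ x ∈ W, f (τ x) = τ' (f x)) (n : ℕ) {x : V} (hx : x ∈ W) :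
    f (cyclicDiff p τ n x) = cyclicDiff p τ' n (f x) := by
  have hpow (i : ℕ) : f ((τ ^ i) x) = (τ' ^ i) (f x) := by
    induction i with
    | zero => simp
    | succ i ih =>
      have hmem : (τ ^ i) x ∈ W := Module.End.pow_apply_mem_of_forall_mem i hτ x hx
      simp only [pow_succ', Module.End.mul_apply, hf _ hmem, ih]
  unfold cyclicDiff
  split_ifs
  · simp [hf x hx]
  · simp [LinearMap.sum_apply, map_sum, hpow]

/-- A sequence of chains `c 0, …, c N` in a complex with an operator `τ` such that each
`c (n + 1)` bounds the image of `c n` under the `n`-th differential of the periodic resolution. -/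
def IsCyclicTower (p N : ℕ) (d τ : Module.End R V) (c : ℕ → V) : Prop :=
  ∀ n < N, d (c (n + 1)) = cyclicDiff p τ n (c n)

lemma IsCyclicTower.map {N : ℕ} {d : Module.End R V} {d' : Module.End R V'} {c : ℕ → V}
    (hc : IsCyclicTower p N d τ c) (hτ : ∀ x ∈ W, τ x ∈ W) (hcW : ∀ n ≤ N, c n ∈ W)
    {f : V →ₗ[R] V'} (hfd : ∀ x ∈ W, f (d x) = d' (f x)) (hfτ : ∀ x ∈ W, f (τ x) = τ' (f x)) :
    IsCyclicTower p N d' τ' fun n => f (c n) := fun n hn => by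
  rw [← hfd _ (hcW (n + 1) hn), hc n hn, map_cyclicDiff hτ hfτ n (hcW n hn.le)]

end CyclicTowers

/-! ### Sorting the vertices of simplices -/

section Sorting

variable {R : Type*} [CommRing R] {L L' α : Type*} [LinearOrder α] (key : L → α)

/-- Signed insertion of the vertex `a` into a simplex whose vertices have decreasing keys; the
result vanishes when a vertex with the same key is already present. -/
noncomputable def insertSimplex (a : L) : List L → Chain R L
  | [] => simplex R [a]
  | b :: l =>
    if key b < key a then simplex R (a :: b :: l)
    else if key b = key a then 0 else -cone b (insertSimplex a l)

/-- The linear extension of `insertSimplex` to chains. -/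
noncomputable def insertVertex (a : L) : Module.End R (Chain R L) :=
  Finsupp.linearCombination R (insertSimplex key a)

/-- The linear operator that arranges the vertices of a simplex by decreasing keys, with the sign
of the permutation, and sends simplices with a repeated key to zero. -/
noncomputable def sortChain : Module.End R (Chain R L) :=
  Finsupp.linearCombination R fun l => l.foldr (fun a => insertVertex key a) (simplex R [])

variable {key}

@[simp] lemma insertVertex_simplex (a : L) (l : List L) :
    insertVertex key a (simplex R l) = insertSimplex key a l := by
  simp [insertVertex]

@[simp] lemma sortChain_simplex_nil : sortChain key (simplex R []) = simplex R [] := by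
  simp [sortChain]

@[simp] lemma sortChain_simplex_cons (a : L) (l : List L) :
    sortChain key (simplex R (a :: l)) = insertVertex key a (sortChain key (simplex R l)) := by
  simp [sortChain]

lemma sortChain_cone (a : L) (c : Chain R L) :
    sortChain key (cone a c) = insertVertex key a (sortChain key c) :=
  LinearMap.congr_fun (f := sortChain key ∘ₗ cone a) (g := insertVertex key a ∘ₗ sortChain key)
    (hom_ext_simplex fun l => by simp) c

lemma insertSimplex_of_forall_lt {a : L} {l : List L} (hl : ∀ x ∈ l, key x < key a) :
    insertSimplex key a l = simplex R (a :: l) := by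
  cases l with
  | nil => rfl
  | cons b l => rw [insertSimplex, if_pos (hl b List.mem_cons_self)]

lemma insertVertex_eq_cone {a : L} {c : Chain R L}
    (hc : c ∈ chainsIn R {l | ∀ x ∈ l, key x < key a}) : insertVertex key a c = cone a c :=
  eq_of_mem_chainsIn (fun l hl => by simp [insertSimplex_of_forall_lt hl]) hc

lemma insertVertex_cone_of_lt {a b : L} (hab : key a < key b) (c : Chain R L) :
    insertVertex key a (cone b c) = -cone b (insertVertex key a c) :=
  LinearMap.congr_fun (f := insertVertex key a ∘ₗ cone b)
    (g := -((cone b : Module.End R _) ∘ₗ insertVertex key a))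
    (hom_ext_simplex fun l => by simp [insertSimplex, hab.not_gt, hab.ne']) c

lemma insertVertex_cone_of_eq {a b : L} (hab : key b = key a) (c : Chain R L) :
    insertVertex key a (cone b c) = 0 :=
  LinearMap.congr_fun (f := insertVertex key a ∘ₗ cone b) (g := 0)
    (hom_ext_simplex fun l => by simp [insertSimplex, hab]) c

lemma forall_mem_cons_lt {a b : L} {l : List L} (hl : ∀ x ∈ l, key x < key b)
    (hba : key b < key a) : ∀ x ∈ b :: l, key x < key a :=
  List.forall_mem_cons.2 ⟨hba, fun x hx => (hl x hx).trans hba⟩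

/-- Inserting a vertex behaves like coning over it, because the sign of an insertion compensates
the sign of the face opposite to the new vertex. -/
lemma boundary_insertSimplex {a : L} {l : List L} (hl : l.Pairwise fun x y => key y < key x)
    (ha : ∀ b ∈ l, key b = key a → b = a) :
    boundary (insertSimplex key a l) =
      simplex R l - insertVertex key a (boundary (simplex R l)) := by
  induction l with
  | nil => simp [insertSimplex, boundary_simplex_cons]
  | cons b l ih =>
    obtain ⟨hb, hl⟩ := List.pairwise_cons.1 hl
    rcases lt_trichotomy (key b) (key a) with hba | hba | hab
    · have hlt : ∀ x ∈ b :: l, key x < key a := forall_mem_cons_lt hb hba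
      have hfaces : boundary (simplex R (b :: l)) ∈ chainsIn R {l | ∀ x ∈ l, key x < key a} :=
        mem_chainsIn_of_subset (boundary_simplex_mem (b :: l))
          fun l' hl' x hx => hlt x (hl'.1.subset hx)
      rw [insertSimplex_of_forall_lt hlt, insertVertex_eq_cone hfaces, boundary_simplex_cons]
    · obtain rfl : b = a := ha b List.mem_cons_self hba
      rw [boundary_simplex_cons, map_sub, insertVertex_cone_of_eq rfl, insertVertex_simplex,
        insertSimplex_of_forall_lt hb]
      simp [insertSimplex]
    · have ih := ih hl fun x hx => ha x (List.mem_cons_of_mem b hx)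
      rw [insertSimplex, if_neg hab.not_gt, if_neg hab.ne', map_neg, boundary_cone, ih,
        boundary_simplex_cons, map_sub, map_sub, insertVertex_cone_of_lt hab, cone_simplex,
        insertVertex_simplex]
      abel

lemma insertSimplex_mem {a : L} {l : List L} (hl : l.Pairwise fun x y => key y < key x) :
    insertSimplex key a l ∈ chainsIn R
      {l' | l'.Pairwise (fun x y => key y < key x) ∧ l'.Perm (a :: l)} := by
  induction l with
  | nil => exact simplex_mem_chainsIn ⟨List.pairwise_singleton _ _, List.Perm.refl _⟩
  | cons b l ih =>
    obtain ⟨hb, hl'⟩ := List.pairwise_cons.1 hl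
    rw [insertSimplex]
    split_ifs with hba hba'
    · exact simplex_mem_chainsIn
        ⟨List.pairwise_cons.2 ⟨forall_mem_cons_lt hb hba, hl⟩, List.Perm.refl _⟩
    · exact Submodule.zero_mem _
    · have hab : key a < key b := lt_of_le_of_ne (not_lt.1 hba) (Ne.symm hba')
      refine Submodule.neg_mem _ (apply_mem_of_mem_chainsIn ?_ (ih hl'))
      rintro l' ⟨hl', hperm⟩
      rw [cone_simplex]
      refine simplex_mem_chainsIn ⟨List.pairwise_cons.2 ⟨fun x hx => ?_, hl'⟩,
        (hperm.cons b).trans (List.Perm.swap a b l)⟩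
      rcases List.mem_cons.1 (hperm.subset hx) with rfl | hx
      exacts [hab, hb x hx]

lemma sortChain_simplex_mem (l : List L) : sortChain key (simplex R l) ∈ chainsIn R
    {l' | l'.Pairwise (fun x y => key y < key x) ∧ l'.Perm l} := by
  induction l with
  | nil =>
    rw [sortChain_simplex_nil]
    exact simplex_mem_chainsIn ⟨List.Pairwise.nil, List.Perm.refl []⟩
  | cons a l ih =>
    rw [sortChain_simplex_cons]
    refine apply_mem_of_mem_chainsIn ?_ ih
    rintro l' ⟨hl', hperm⟩
    rw [insertVertex_simplex]
    exact mem_chainsIn_of_subset (insertSimplex_mem hl')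
      fun l'' hl'' => ⟨hl''.1, hl''.2.trans (hperm.cons a)⟩

lemma boundary_sortChain_simplex {l : List L} (hl : Set.InjOn key {x | x ∈ l}) :
    boundary (sortChain key (simplex R l)) = sortChain key (boundary (simplex R l)) := by
  induction l with
  | nil => simp
  | cons a l ih =>
    have hcone : boundary (insertVertex key a (sortChain key (simplex R l))) =
        sortChain key (simplex R l) -
          insertVertex key a (boundary (sortChain key (simplex R l))) := by
      refine eq_of_mem_chainsIn (R := R) (f := boundary ∘ₗ insertVertex key a)
        (g := LinearMap.id - insertVertex key a ∘ₗ boundary) ?_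
        (sortChain_simplex_mem (key := key) l)
      rintro l' ⟨hl', hperm⟩
      simpa using boundary_insertSimplex (key := key) hl' fun b hb hba =>
        hl (List.mem_cons_of_mem a (hperm.subset hb)) List.mem_cons_self hba
    rw [sortChain_simplex_cons, hcone, ih (hl.mono fun x hx => List.mem_cons_of_mem a hx),
      boundary_simplex_cons, map_sub, sortChain_cone]

lemma mapChain_insertSimplex {key' : L' → α} {f : L → L'} (hf : ∀ x, key' (f x) = key x)
    (a : L) (l : List L) :
    mapChain f (insertSimplex key a l) = insertSimplex (R := R) key' (f a) (l.map f) := by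
  induction l with
  | nil => simp [insertSimplex]
  | cons b l ih =>
    simp only [insertSimplex, List.map_cons, hf]
    split_ifs
    · simp
    · simp
    · rw [map_neg, mapChain_cone, ih]

lemma mapChain_sortChain {key' : L' → α} {f : L → L'} (hf : ∀ x, key' (f x) = key x)
    (c : Chain R L) : mapChain f (sortChain key c) = sortChain key' (mapChain f c) := by
  have hinsert (a : L) : mapChain f ∘ₗ insertVertex key a =
      insertVertex key' (f a) ∘ₗ (mapChain f : Chain R L →ₗ[R] Chain R L') :=
    hom_ext_simplex fun l => by simpa using mapChain_insertSimplex hf a l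
  refine LinearMap.congr_fun (f := mapChain f ∘ₗ sortChain key)
    (g := sortChain key' ∘ₗ mapChain f) (hom_ext_simplex fun l => ?_) c
  induction l with
  | nil => simp
  | cons a l ih =>
    have ih : mapChain f (sortChain key (simplex R l)) = sortChain key' (simplex R (l.map f)) := by
      simpa using ih
    simpa [← ih] using LinearMap.congr_fun (hinsert a) (sortChain key (simplex R l))

lemma sortChain_simplex_eq_zero [Fintype α] {l : List L} (hl : Fintype.card α < l.length) :
    sortChain key (simplex R l) = 0 := by
  refine eq_of_mem_chainsIn (R := R) (f := LinearMap.id) (g := 0) ?_ (sortChain_simplex_mem l)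
  rintro l' ⟨hl', hperm⟩
  have hnodup : (l'.map key).Nodup := List.pairwise_map.2 (hl'.imp fun h => h.ne')
  have := hnodup.length_le_card
  rw [List.length_map, hperm.length_eq] at this
  omega

end Sorting

/-! ### The periodic resolution of a cyclic group -/

section Resolution

variable {R V : Type*} [CommRing R] [AddCommGroup V] [Module R V] {p : ℕ}

/-- The generator of the cyclic group acting on `ZMod p`-indexed families by translation. -/
def cyclicShift (R V : Type*) [CommRing R] [AddCommGroup V] [Module R V] (p : ℕ) :
    Module.End R (ZMod p → V) :=
  LinearMap.funLeft R V (· - 1)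

@[simp] lemma cyclicShift_apply (x : ZMod p → V) (t : ZMod p) :
    cyclicShift R V p x t = x (t - 1) := rfl

lemma cyclicShift_pow_apply (n : ℕ) (x : ZMod p → V) (t : ZMod p) :
    (cyclicShift R V p ^ n) x t = x (t - n) := by
  induction n generalizing t with
  | zero => simp
  | succ n ih =>
    rw [pow_succ', Module.End.mul_apply, cyclicShift_apply, ih, Nat.cast_succ]
    congr 1
    ring

lemma cyclicShift_pow_self : cyclicShift R V p ^ p = 1 := by
  ext x t
  simp [cyclicShift_pow_apply]

lemma eq_of_cyclicShift_eq [NeZero p] {x : ZMod p → V} (hx : cyclicShift R V p x = x)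
    (s t : ZMod p) : x s = x t := by
  have hpow : (cyclicShift R V p ^ (s - t).val) x = x := by
    induction (s - t).val with
    | zero => rfl
    | succ n ih => rw [pow_succ, Module.End.mul_apply, hx, ih]
  have := congrFun hpow s
  rw [cyclicShift_pow_apply] at this
  simpa using this.symm

lemma sum_range_cast [NeZero p] (y : ZMod p → V) :
    ∑ u ∈ Finset.range p, y u = ∑ t, y t :=
  Finset.sum_bij' (fun u _ => (u : ZMod p)) (fun t _ => t.val) (by simp)
    (fun t _ => Finset.mem_range.2 (ZMod.val_lt t))
    (fun u hu => ZMod.val_cast_of_lt (Finset.mem_range.1 hu)) (by simp) (by simp)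

/-- The sum of `y` over the arc `h + 1, h + 2, …, t` of the cyclic group. -/
def arcSum (h t : ZMod p) (y : ZMod p → V) : V :=
  ∑ u ∈ Finset.range (t - h).val, y (h + u + 1)

lemma arcSum_sub_self [NeZero p] (h t : ZMod p) (x : ZMod p → V) :
    arcSum h t (fun u => x (u - 1) - x u) = x h - x t := by
  have := Finset.sum_range_sub' (fun u : ℕ => x (h + u)) (t - h).val
  simpa [arcSum, ← add_assoc] using this

lemma val_eq_val_sub_one_add_one [NeZero p] {t : ZMod p} (ht : t ≠ 0) :
    t.val = (t - 1).val + 1 := by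
  obtain ⟨q, rfl⟩ := Nat.exists_eq_succ_of_ne_zero (NeZero.ne p)
  have hpos : 0 < t.val := Nat.pos_of_ne_zero fun h => ht ((ZMod.val_eq_zero t).1 h)
  have : (t - 1).val = t.val - 1 := Fin.val_sub_one_of_ne_zero ht
  omega

lemma arcSum_sub_arcSum_sub_one [NeZero p] (h t : ZMod p) (y : ZMod p → V) :
    arcSum h t y - arcSum h (t - 1) y = y t - if t = h then ∑ u, y u else 0 := by
  split_ifs with hth
  · subst hth
    obtain ⟨q, rfl⟩ := Nat.exists_eq_succ_of_ne_zero (NeZero.ne p)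
    have hfull := (sum_range_cast fun u => y (t + u)).trans (Equiv.sum_comp (Equiv.addLeft t) y)
    rw [Finset.sum_range_succ'] at hfull
    simp [arcSum, ← hfull, add_assoc]
  · have hval := val_eq_val_sub_one_add_one (sub_ne_zero.2 hth)
    rw [sub_right_comm] at hval
    simp [arcSum, hval, Finset.sum_range_succ]

variable (R p) in
/-- The total complex of the `2`-periodic resolution, with both parities stored in one module: the
first components live in odd degrees and the second components in even degrees. -/
abbrev Resolution := ZMod p → R × R

/-- The differential of the `2`-periodic resolution. -/
def resDiff [NeZero p] : Module.End R (Resolution R p) where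
  toFun x t := (∑ u, (x u).2, (x (t - 1)).1 - (x t).1)
  map_add' x y := by ext <;> simp [Finset.sum_add_distrib, add_sub_add_comm]
  map_smul' r x := by ext <;> simp [Finset.mul_sum, mul_sub]

/-- The contracting homotopy of the `2`-periodic resolution based at `h`. -/
def contraction (h : ZMod p) : Module.End R (Resolution R p) where
  toFun x t := (-arcSum h t fun u => (x u).2, if t = h then (x h).1 else 0)
  map_add' x y := by ext <;> simp [arcSum, Finset.sum_add_distrib, add_comm, ite_add_ite]
  map_smul' r x := by ext <;> simp [arcSum, Finset.mul_sum]

lemma resDiff_contraction_add [NeZero p] (h : ZMod p) (x : Resolution R p) :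
    resDiff (contraction h x) + contraction h (resDiff x) = x := by
  ext t
  · have := arcSum_sub_self h t fun u => (x u).1
    simp [resDiff, contraction, this]
  · have := arcSum_sub_arcSum_sub_one h t fun u => (x u).2
    simp only [resDiff, contraction, LinearMap.coe_mk, AddHom.coe_mk, Pi.add_apply, Prod.mk_add_mk]
    linear_combination this

lemma contraction_cyclicShift (h : ZMod p) (x : Resolution R p) :
    contraction (h + 1) (cyclicShift R (R × R) p x) =
      cyclicShift R (R × R) p (contraction h x) := by
  ext t
  · have hval : t - (h + 1) = t - 1 - h := by ring
    have harg (u : ℕ) : h + 1 + u + 1 - 1 = h + u + 1 := by ring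
    simp [contraction, arcSum, hval, harg]
  · simp [contraction, sub_eq_iff_eq_add]

variable {α : Type*}

/-- The equivariant chain map from chains on the labels `α × ZMod p` to the periodic resolution
that turns cones over `(a, h)` into the contraction based at `h`. -/
noncomputable def toResolution : Chain R (α × ZMod p) →ₗ[R] Resolution R p :=
  Finsupp.linearCombination R fun l => l.foldr (fun a => contraction a.2) fun _ => (1, 0)

@[simp] lemma toResolution_simplex_nil :
    toResolution (simplex R ([] : List (α × ZMod p))) = fun _ => (1, 0) := by
  simp [toResolution]

@[simp] lemma toResolution_simplex_cons (a : α × ZMod p) (l : List (α × ZMod p)) :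
    toResolution (simplex R (a :: l)) = contraction a.2 (toResolution (simplex R l)) := by
  simp [toResolution]

lemma toResolution_cone (a : α × ZMod p) (c : Chain R (α × ZMod p)) :
    toResolution (cone a c) = contraction a.2 (toResolution c) :=
  LinearMap.congr_fun (f := toResolution ∘ₗ cone a) (g := contraction a.2 ∘ₗ toResolution)
    (hom_ext_simplex fun l => by simp) c

lemma toResolution_boundary [NeZero p] (c : Chain R (α × ZMod p)) :
    toResolution (boundary c) = resDiff (toResolution c) := by
  refine LinearMap.congr_fun (f := toResolution ∘ₗ boundary) (g := resDiff ∘ₗ toResolution)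
    (hom_ext_simplex fun l => ?_) c
  induction l with
  | nil => ext <;> simp [resDiff]
  | cons a l ih =>
    have ih : toResolution (boundary (simplex R l)) = resDiff (toResolution (simplex R l)) := ih
    simpa [boundary_simplex_cons, toResolution_cone, ih, sub_eq_iff_eq_add] using
      (resDiff_contraction_add a.2 (toResolution (simplex R l))).symm

/-- The action of the generator of the cyclic group on labels. -/
def shiftLabel (a : α × ZMod p) : α × ZMod p := (a.1, a.2 + 1)

lemma toResolution_mapChain_shiftLabel (c : Chain R (α × ZMod p)) :
    toResolution (mapChain shiftLabel c) = cyclicShift R (R × R) p (toResolution c) := by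
  refine LinearMap.congr_fun (f := toResolution ∘ₗ mapChain shiftLabel)
    (g := cyclicShift R (R × R) p ∘ₗ toResolution) (hom_ext_simplex fun l => ?_) c
  induction l with
  | nil => ext <;> simp
  | cons a l ih =>
    have ih : toResolution (simplex R (l.map shiftLabel)) =
        cyclicShift R (R × R) p (toResolution (simplex R l)) := by
      simpa using ih
    simpa [ih, shiftLabel] using contraction_cyclicShift a.2 (toResolution (simplex R l))

/-- The index of an element of degree `n` of the periodic resolution: the sum of its coefficients
in the parity of `n`. -/
def resIndex [NeZero p] (n : ℕ) (x : Resolution R p) : R :=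
  if Even n then ∑ t, (x t).2 else ∑ t, (x t).1

lemma resIndex_succ_of_isCyclicTower [NeZero p] [CharP R p] {N n : ℕ} {x : ℕ → Resolution R p}
    (hx : IsCyclicTower p N resDiff (cyclicShift R (R × R) p) x) (hn : n < N) :
    resIndex (n + 1) (x (n + 1)) = resIndex n (x n) := by
  have hstep := hx n hn
  by_cases hpar : Even n
  · have hinv : cyclicShift R R p (fun t => (x (n + 1) t).1 - (x n t).2) =
        fun t => (x (n + 1) t).1 - (x n t).2 := by
      ext t
      have := congrArg Prod.snd (congrFun hstep t)
      simp only [resDiff, cyclicDiff, if_pos hpar, LinearMap.coe_mk, AddHom.coe_mk,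
        LinearMap.sub_apply, Module.End.one_apply, Pi.sub_apply, Prod.snd_sub,
        cyclicShift_apply] at this ⊢
      linear_combination this
    have hsum : ∑ t, ((x (n + 1) t).1 - (x n t).2) = 0 := by
      rw [Finset.sum_congr rfl fun t _ => eq_of_cyclicShift_eq hinv t 0]
      simp
    simpa [resIndex, hpar, Nat.even_add_one, sub_eq_zero] using hsum
  · have hsum : ∑ u ∈ Finset.range p, (x n (0 - u)).1 = ∑ t, (x n t).1 :=
      (sum_range_cast fun u => (x n (0 - u)).1).trans
        (Equiv.sum_comp (Equiv.subLeft 0) fun t => (x n t).1)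
    have := congrArg Prod.fst (congrFun hstep 0)
    simp only [resDiff, cyclicDiff, if_neg hpar, LinearMap.coe_mk, AddHom.coe_mk,
      LinearMap.sum_apply, Finset.sum_apply, cyclicShift_pow_apply, Prod.fst_sum,
      hsum] at this
    simpa [resIndex, hpar, Nat.even_add_one] using this

lemma resIndex_eq_of_isCyclicTower [NeZero p] [CharP R p] {N : ℕ} {x : ℕ → Resolution R p}
    (hx : IsCyclicTower p N resDiff (cyclicShift R (R × R) p) x) :
    resIndex N (x N) = resIndex 0 (x 0) := by
  suffices ∀ n ≤ N, resIndex n (x n) = resIndex 0 (x 0) from this N le_rfl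
  intro n hn
  induction n with
  | zero => rfl
  | succ n ih => rw [resIndex_succ_of_isCyclicTower hx hn, ih (Nat.le_of_succ_le hn)]

lemma resIndex_toResolution_singleton [NeZero p] (a : α × ZMod p) :
    resIndex 0 (toResolution (simplex R [a])) = 1 := by
  simp [resIndex, contraction]

end Resolution

/-! ### Barycentric subdivision -/

section Barycenter

variable {X Y : Type*} [NormedAddCommGroup X] [NormedSpace ℝ X] [AddCommGroup Y] [Module ℝ Y]

/-- The barycenter of a simplex; the empty simplex gets the junk value `0`. -/
noncomputable def barycenter {X : Type*} [AddCommGroup X] [Module ℝ X] (l : List X) : X :=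
  (l.length : ℝ)⁻¹ • l.sum

lemma barycenter_eq_sum (l : List Y) :
    barycenter l = ∑ i : Fin l.length, (l.length : ℝ)⁻¹ • l[i] := by
  rw [barycenter, ← Finset.smul_sum]
  congr 1
  exact (Fin.sum_univ_getElem l).symm

lemma barycenter_map {Z : Type*} [AddCommGroup Z] [Module ℝ Z] (f : Y →ₗ[ℝ] Z) (l : List Y) :
    barycenter (l.map f) = f (barycenter l) := by
  simp [barycenter, map_list_sum]

lemma barycenter_mem_convexHull {l : List Y} (hl : l ≠ []) :
    barycenter l ∈ convexHull ℝ {x | x ∈ l} := by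
  rw [barycenter_eq_sum]
  refine (convex_convexHull ℝ _).sum_mem (fun i _ => by positivity) ?_
    fun i _ => subset_convexHull ℝ _ (List.getElem_mem i.isLt)
  simp [hl]

lemma dist_barycenter_le {l : List X} {v : X} (hv : v ∈ l) {δ : ℝ}
    (hδ : ∀ x ∈ l, dist x v ≤ δ) : dist (barycenter l) v ≤ (1 - 1 / (l.length : ℝ)) * δ := by
  obtain ⟨j, hj, rfl⟩ := List.getElem_of_mem hv
  have hlen : (0 : ℝ) < l.length := by exact_mod_cast List.length_pos_of_mem hv
  have hdiff : barycenter l - l[j] = ∑ i : Fin l.length, (l.length : ℝ)⁻¹ • (l[i] - l[j]) := by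
    simp only [smul_sub, Finset.sum_sub_distrib, ← barycenter_eq_sum, Finset.sum_const,
      Finset.card_univ, Fintype.card_fin]
    rw [← Nat.cast_smul_eq_nsmul ℝ, smul_inv_smul₀ hlen.ne']
  -- The vertex `v` itself contributes nothing, which is where the factor `1 - 1 / l.length` arises.
  have hterm (i : Fin l.length) : ‖(l.length : ℝ)⁻¹ • (l[i] - l[j])‖ ≤
      (l.length : ℝ)⁻¹ * (δ - if i = ⟨j, hj⟩ then δ else 0) := by
    rw [norm_smul, norm_inv, Real.norm_natCast]
    gcongr
    split_ifs with hij
    · simp [hij]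
    · simpa [← dist_eq_norm] using hδ l[i] (List.getElem_mem i.isLt)
  calc dist (barycenter l) l[j]
      ≤ ∑ i : Fin l.length, (l.length : ℝ)⁻¹ * (δ - if i = ⟨j, hj⟩ then δ else 0) := by
        rw [dist_eq_norm, hdiff]
        exact norm_sum_le_of_le _ fun i _ => hterm i
    _ = (1 - 1 / (l.length : ℝ)) * δ := by
        rw [← Finset.mul_sum, Finset.sum_sub_distrib]
        simp only [Finset.sum_const, Finset.card_univ, Fintype.card_fin, nsmul_eq_mul,
          Finset.sum_ite_eq', Finset.mem_univ, if_true]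
        field_simp

end Barycenter

section Subdivision

variable {R : Type*} [CommRing R] {X Y : Type*} [AddCommGroup X] [Module ℝ X] [AddCommGroup Y]
  [Module ℝ Y]

/-- The barycentric subdivision of a simplex: the cone from its barycenter over the subdivision of
its boundary. -/
noncomputable def subdivideSimplex (R : Type*) [CommRing R] : List X → Chain R X
  | [] => simplex R []
  | a :: l => cone (barycenter (a :: l)) (∑ i : Fin (a :: l).length,
      (-1 : R) ^ (i : ℕ) • subdivideSimplex R ((a :: l).eraseIdx i))
termination_by l => l.length
decreasing_by exact Nat.lt_of_succ_le (List.length_eraseIdx_add_one i.isLt).le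

/-- The barycentric subdivision operator on chains. -/
noncomputable def subdivide : Module.End R (Chain R X) :=
  Finsupp.linearCombination R (subdivideSimplex R)

@[simp] lemma subdivide_simplex_nil :
    subdivide (simplex R ([] : List X)) = simplex R [] := by
  simp [subdivide, subdivideSimplex]

lemma subdivide_simplex {l : List X} (hl : l ≠ []) : subdivide (simplex R l) =
    cone (barycenter l) (subdivide (boundary (simplex R l))) := by
  obtain ⟨a, l, rfl⟩ := List.exists_cons_of_ne_nil hl
  rw [boundary_simplex, map_sum]
  simp [subdivide, subdivideSimplex]

lemma subdivide_simplex_singleton (v : X) : subdivide (simplex R [v]) = simplex R [v] := by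
  rw [subdivide_simplex (List.cons_ne_nil v []), boundary_simplex_cons]
  simp [barycenter]

lemma boundary_subdivide (c : Chain R X) : boundary (subdivide c) = subdivide (boundary c) := by
  suffices hcomm : boundary ∘ₗ subdivide = subdivide ∘ₗ (boundary : Module.End R (Chain R X)) by
    simpa only [LinearMap.comp_apply] using LinearMap.congr_fun hcomm c
  refine hom_ext_simplex fun l => ?_
  induction hn : l.length generalizing l with
  | zero => simp [List.length_eq_zero_iff.1 hn]
  | succ n ih =>
    have hfaces : boundary (subdivide (boundary (simplex R l))) = 0 := by
      have := eq_of_mem_chainsIn (fun l' hl' => ih l' (by have := hl'.2; omega))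
        (boundary_simplex_mem l)
      simpa only [LinearMap.comp_apply, boundary_boundary, map_zero] using this
    rw [LinearMap.comp_apply, LinearMap.comp_apply,
      subdivide_simplex (List.ne_nil_of_length_eq_add_one hn), boundary_cone, hfaces, map_zero,
      sub_zero]

lemma mapChain_subdivide (f : X →ₗ[ℝ] Y) (c : Chain R X) :
    mapChain f (subdivide c) = subdivide (mapChain f c) := by
  refine LinearMap.congr_fun (f := mapChain f ∘ₗ subdivide) (g := subdivide ∘ₗ mapChain f)
    (hom_ext_simplex fun l => ?_) c
  simp only [LinearMap.comp_apply]
  induction hn : l.length generalizing l with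
  | zero => simp [List.length_eq_zero_iff.1 hn]
  | succ n ih =>
    have hl : l ≠ [] := List.ne_nil_of_length_eq_add_one hn
    have hfaces : mapChain f (subdivide (boundary (simplex R l))) =
        subdivide (mapChain f (boundary (simplex R l))) :=
      eq_of_mem_chainsIn (R := R) (f := mapChain f ∘ₗ subdivide) (g := subdivide ∘ₗ mapChain f)
        (fun l' hl' => ih l' (by have := hl'.2; omega)) (boundary_simplex_mem l)
    rw [mapChain_simplex, subdivide_simplex hl, subdivide_simplex (by simpa using hl),
      barycenter_map, mapChain_cone, hfaces, mapChain_boundary, mapChain_simplex]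

end Subdivision

section SmallSimplices

variable {R : Type*} [CommRing R] {X : Type*} [NormedAddCommGroup X] [NormedSpace ℝ X]

/-- Simplices with `m` vertices, of diameter at most `δ`, whose convex hull is contained in `G`. -/
def smallSimplices (G : Set X) (m : ℕ) (δ : ℝ) : Set (List X) :=
  {l | l.length = m ∧ convexHull ℝ {x | x ∈ l} ⊆ G ∧ ∀ x ∈ l, ∀ y ∈ l, dist x y ≤ δ}

lemma mem_of_mem_smallSimplices {G : Set X} {m : ℕ} {δ : ℝ} {l : List X}
    (hl : l ∈ smallSimplices G m δ) {x : X} (hx : x ∈ l) : x ∈ G :=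
  hl.2.1 (subset_convexHull ℝ {x | x ∈ l} hx)

lemma convexHull_subset_closedBall_barycenter {l : List X} {δ : ℝ}
    (hδ : ∀ x ∈ l, ∀ y ∈ l, dist x y ≤ δ) : convexHull ℝ {x | x ∈ l} ⊆
      Metric.closedBall (barycenter l) ((1 - 1 / (l.length : ℝ)) * δ) :=
  convexHull_min (fun v hv => by
    rw [Metric.mem_closedBall, dist_comm]
    exact dist_barycenter_le hv fun x hx => hδ x hx v hv) (convex_closedBall _ _)

lemma one_sub_one_div_nonneg (m : ℕ) : (0 : ℝ) ≤ 1 - 1 / m :=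
  sub_nonneg.2 (by simpa using Nat.cast_inv_le_one (α := ℝ) m)

lemma dist_le_of_forall_mem_closedBall {M : Type*} [PseudoMetricSpace M] {b : M} {l : List M}
    {r : ℝ} (hr : 0 ≤ r)
    (hb : ∀ x ∈ l, x ∈ Metric.closedBall b r) (hl : ∀ x ∈ l, ∀ y ∈ l, dist x y ≤ r) :
    ∀ x ∈ b :: l, ∀ y ∈ b :: l, dist x y ≤ r := by
  simp only [List.forall_mem_cons, dist_self]
  exact ⟨⟨hr, fun y hy => dist_comm b y ▸ hb y hy⟩, fun x hx => ⟨hb x hx, hl x hx⟩⟩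

lemma subdivide_simplex_mem {l : List X} {δ : ℝ} {m : ℕ} (hm : l.length ≤ m)
    (hδ : ∀ x ∈ l, ∀ y ∈ l, dist x y ≤ δ) :
    subdivide (simplex R l) ∈ chainsIn R
      (smallSimplices (convexHull ℝ {x | x ∈ l}) l.length ((1 - 1 / (m : ℝ)) * δ)) := by
  induction hn : l.length generalizing l with
  | zero =>
    rw [List.length_eq_zero_iff.1 hn, subdivide_simplex_nil]
    exact simplex_mem_chainsIn ⟨rfl, subset_rfl, by simp⟩
  | succ n ih =>
    have hl : l ≠ [] := List.ne_nil_of_length_eq_add_one hn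
    have hδ₀ : 0 ≤ δ := dist_nonneg.trans (hδ _ (l.head_mem hl) _ (l.head_mem hl))
    have hball : convexHull ℝ {x | x ∈ l} ⊆
        Metric.closedBall (barycenter l) ((1 - 1 / (m : ℝ)) * δ) :=
      (convexHull_subset_closedBall_barycenter hδ).trans (Metric.closedBall_subset_closedBall (by
        gcongr
        exact_mod_cast List.length_pos_of_ne_nil hl))
    have hfaces : subdivide (boundary (simplex R l)) ∈ chainsIn R
        (smallSimplices (convexHull ℝ {x | x ∈ l}) n ((1 - 1 / (m : ℝ)) * δ)) := by
      refine apply_mem_of_mem_chainsIn ?_ (boundary_simplex_mem l)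
      rintro l' ⟨hsub, hlen⟩
      refine mem_chainsIn_of_subset (ih (l := l') (by omega)
        (fun x hx y hy => hδ x (hsub.subset hx) y (hsub.subset hy)) (by omega)) ?_
      rintro l'' ⟨hlen', hhull, hdist⟩
      exact ⟨hlen', hhull.trans (convexHull_mono fun x hx => hsub.subset hx), hdist⟩
    rw [subdivide_simplex hl]
    refine apply_mem_of_mem_chainsIn (fun l' hl' => ?_) hfaces
    rw [cone_simplex]
    have hvert (x : X) (hx : x ∈ l') := mem_of_mem_smallSimplices hl' hx
    refine simplex_mem_chainsIn ⟨by simp [hl'.1], convexHull_min ?_ (convex_convexHull ℝ _),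
      dist_le_of_forall_mem_closedBall (mul_nonneg (one_sub_one_div_nonneg m) hδ₀)
        (fun x hx => hball (hvert x hx)) hl'.2.2⟩
    exact List.forall_mem_cons.2 ⟨barycenter_mem_convexHull hl, hvert⟩

lemma subdivide_mem {G : Set X} {m M : ℕ} (hm : m ≤ M) {δ : ℝ} {c : Chain R X}
    (hc : c ∈ chainsIn R (smallSimplices G m δ)) :
    subdivide c ∈ chainsIn R (smallSimplices G m ((1 - 1 / (M : ℝ)) * δ)) := by
  refine apply_mem_of_mem_chainsIn ?_ hc
  rintro l ⟨rfl, hhull, hdist⟩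
  exact mem_chainsIn_of_subset (subdivide_simplex_mem hm hdist) fun l' hl' =>
    ⟨hl'.1, hl'.2.1.trans hhull, hl'.2.2⟩

lemma subdivide_pow_mem {G : Set X} {m M : ℕ} (hm : m ≤ M) {δ : ℝ} {c : Chain R X}
    (hc : c ∈ chainsIn R (smallSimplices G m δ)) (r : ℕ) :
    (subdivide ^ r) c ∈ chainsIn R (smallSimplices G m ((1 - 1 / (M : ℝ)) ^ r * δ)) := by
  induction r with
  | zero => simpa using hc
  | succ r ih =>
    rw [pow_succ', pow_succ', mul_assoc]
    exact subdivide_mem hm ih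

lemma exists_subdivide_pow_mem (R : Type*) [CommRing R] (G : Set X) {M : ℕ} (hM : 0 < M) (D : ℝ)
    {δ : ℝ} (hδ : 0 < δ) : ∃ r : ℕ, ∀ m ≤ M, ∀ c ∈ chainsIn R (smallSimplices G m D),
      (subdivide ^ r) c ∈ chainsIn R (smallSimplices G m δ) := by
  have hlt : (1 - 1 / M : ℝ) < 1 := by
    have : (0 : ℝ) < M := by exact_mod_cast hM
    linarith [one_div_pos.2 this]
  have hlim := (tendsto_pow_atTop_nhds_zero_of_lt_one (one_sub_one_div_nonneg M) hlt).mul_const D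
  rw [zero_mul] at hlim
  obtain ⟨r, hr⟩ := (hlim.eventually_le_const hδ).exists
  refine ⟨r, fun m hm c hc => mem_chainsIn_of_subset (subdivide_pow_mem hm hc r) fun l hl => ?_⟩
  exact ⟨hl.1, hl.2.1, fun x hx y hy => (hl.2.2 x hx y hy).trans hr⟩

end SmallSimplices

/-! ### A `ZMod p`-equivariant Tucker lemma -/

section CyclicJoin

variable {R : Type*} [CommRing R] {X : Type*} {T : X → X} {p N : ℕ}

variable (R T p) in
/-- The tower of chains, one simplex dimension at a time, on the iterated join of the orbits of
`v 0, v 1, …` under `T`: the next chain is the cone from the new vertex over the image of the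
previous one under the differential of the periodic resolution. -/
noncomputable def joinChain (v : ℕ → X) : ℕ → Chain R X
  | 0 => simplex R [v 0]
  | n + 1 => cone (v (n + 1)) (cyclicDiff p (mapChain T) n (joinChain v n))

lemma mapChain_pow_eq_one (hT : T^[p] = id) :
    (mapChain T : Module.End R (Chain R X)) ^ p = 1 := by
  rw [mapChain_pow, hT]
  exact hom_ext_simplex fun l => by simp

lemma boundary_cyclicDiff (n : ℕ) (c : Chain R X) :
    boundary (cyclicDiff p (mapChain T) n c) = cyclicDiff p (mapChain T) n (boundary c) :=
  map_cyclicDiff (W := ⊤) (fun _ _ => trivial) (fun c _ => (mapChain_boundary T c).symm) n trivial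

lemma isCyclicTower_joinChain (hT : T^[p] = id) (v : ℕ → X) :
    IsCyclicTower p N boundary (mapChain T) (joinChain R T p v) := by
  suffices ∀ n, boundary (joinChain R T p v (n + 1)) =
    cyclicDiff p (mapChain T) n (joinChain R T p v n) from fun n _ => this n
  intro n
  have hcycle : cyclicDiff p (mapChain T) n (boundary (joinChain R T p v n)) = 0 := by
    induction n with
    | zero => simp [joinChain, boundary_simplex_cons, cyclicDiff]
    | succ n ih =>
      rw [joinChain, boundary_cone, boundary_cyclicDiff, ih, map_zero, sub_zero,
        ← Module.End.mul_apply, cyclicDiff_succ_mul_cyclicDiff (mapChain_pow_eq_one hT),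
        LinearMap.zero_apply]
  rw [joinChain, boundary_cone, boundary_cyclicDiff, hcycle, map_zero, sub_zero]

/-- Simplices with `n + 1` vertices that take at most one vertex from each of the `T`-orbits of
`v 0, …, v n`. -/
def joinSimplices (T : X → X) (v : ℕ → X) (n : ℕ) : Set (List X) :=
  {l | l.length = n + 1 ∧ ∃ γ : ℕ → ℕ, ∀ x ∈ l, ∃ i ≤ n, x = T^[γ i] (v i)}

lemma mapChain_mem_joinSimplices {v : ℕ → X} {n : ℕ} {c : Chain R X}
    (hc : c ∈ chainsIn R (joinSimplices T v n)) :
    mapChain T c ∈ chainsIn R (joinSimplices T v n) := by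
  refine apply_mem_of_mem_chainsIn (fun l hl => ?_) hc
  obtain ⟨hlen, γ, hγ⟩ := hl
  rw [mapChain_simplex]
  refine simplex_mem_chainsIn ⟨by simpa using hlen, fun i => γ i + 1, ?_⟩
  simp only [List.mem_map, forall_exists_index, and_imp, forall_apply_eq_imp_iff₂]
  intro x hx
  obtain ⟨i, hi, rfl⟩ := hγ x hx
  exact ⟨i, hi, (Function.iterate_succ_apply' T (γ i) (v i)).symm⟩

lemma cons_mem_joinSimplices {v : ℕ → X} {n : ℕ} {l : List X} (hl : l ∈ joinSimplices T v n) :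
    v (n + 1) :: l ∈ joinSimplices T v (n + 1) := by
  obtain ⟨hlen, γ, hγ⟩ := hl
  refine ⟨by simp [hlen], fun i => if i = n + 1 then 0 else γ i, ?_⟩
  rintro x (_ | ⟨_, hx⟩)
  · exact ⟨n + 1, le_rfl, by simp⟩
  · obtain ⟨i, hi, rfl⟩ := hγ x hx
    exact ⟨i, by omega, by simp [show i ≠ n + 1 by omega]⟩

lemma joinChain_mem (v : ℕ → X) (n : ℕ) :
    joinChain R T p v n ∈ chainsIn R (joinSimplices T v n) := by
  induction n with
  | zero => exact simplex_mem_chainsIn ⟨rfl, fun _ => 0, fun x hx => ⟨0, le_rfl, by simpa using hx⟩⟩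
  | succ n ih =>
    have hdiff : cyclicDiff p (mapChain T) n (joinChain R T p v n) ∈
        chainsIn R (joinSimplices T v n) :=
      cyclicDiff_apply_mem (W := chainsIn R (joinSimplices T v n))
        (fun _ => mapChain_mem_joinSimplices) n ih
    refine apply_mem_of_mem_chainsIn (f := cone (v (n + 1))) (fun l hl => ?_) hdiff
    rw [cone_simplex]
    exact simplex_mem_chainsIn (cons_mem_joinSimplices hl)

end CyclicJoin

section SmallTower

variable {X : Type*} [NormedAddCommGroup X] [NormedSpace ℝ X] {T : Module.End ℝ X} {G : Set X}
  {p N : ℕ} {v : ℕ → X}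

/-- The set `G` contains the geometric join of the `T`-orbits of `v 0, …, v N`: every simplex
spanned by one point of each orbit lies in `G`. -/
def ContainsCyclicJoin (T : X → X) (N : ℕ) (v : ℕ → X) (G : Set X) : Prop :=
  ∀ γ : ℕ → ℕ, convexHull ℝ ((fun i => T^[γ i] (v i)) '' Set.Iic N) ⊆ G

lemma joinChain_mem_smallSimplices {R : Type*} [CommRing R] {T : X → X}
    (hG : ContainsCyclicJoin T N v G) (hbdd : Bornology.IsBounded G) {n : ℕ} (hn : n ≤ N) :
    joinChain R T p v n ∈ chainsIn R (smallSimplices G (n + 1) (Metric.diam G)) := by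
  refine mem_chainsIn_of_subset (joinChain_mem v n) ?_
  rintro l ⟨hlen, γ, hγ⟩
  have hsub : convexHull ℝ {x | x ∈ l} ⊆ G := by
    refine (convexHull_mono fun x hx => ?_).trans (hG γ)
    obtain ⟨i, hi, rfl⟩ := hγ x hx
    exact ⟨i, hi.trans hn, rfl⟩
  have hmem (x : X) (hx : x ∈ l) : x ∈ G := hsub (subset_convexHull ℝ {x | x ∈ l} hx)
  exact ⟨hlen, hsub, fun x hx y hy => Metric.dist_le_diam_of_mem hbdd (hmem x hx) (hmem y hy)⟩

lemma exists_isCyclicTower_smallSimplices (R : Type*) [CommRing R] (hT : T ^ p = 1)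
    (hG : ContainsCyclicJoin T N v G) (hbdd : Bornology.IsBounded G) {δ : ℝ} (hδ : 0 < δ) :
    ∃ c : ℕ → Chain R X, IsCyclicTower p N boundary (mapChain T) c ∧ c 0 = simplex R [v 0] ∧
      ∀ n ≤ N, c n ∈ chainsIn R (smallSimplices G (n + 1) δ) := by
  obtain ⟨r, hr⟩ := exists_subdivide_pow_mem R G N.succ_pos (Metric.diam G) hδ
  have hT' : (⇑T)^[p] = id := by rw [← Module.End.coe_pow, hT]; rfl
  have hcomm (f : Module.End R (Chain R X)) (hf : Commute subdivide f) (c : Chain R X) :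
      (subdivide ^ r) (f c) = f ((subdivide ^ r) c) :=
    LinearMap.congr_fun (hf.pow_left r).eq c
  have hboundary : Commute (subdivide : Module.End R (Chain R X)) boundary :=
    LinearMap.ext fun c => (boundary_subdivide c).symm
  have hmap : Commute (subdivide : Module.End R (Chain R X)) (mapChain T) :=
    LinearMap.ext fun c => (mapChain_subdivide T c).symm
  refine ⟨fun n => (subdivide ^ r) (joinChain R T p v n), ?_, ?_, fun n hn => ?_⟩
  · exact (isCyclicTower_joinChain hT' v).map (W := ⊤) (fun _ _ => trivial) (fun _ _ => trivial)
      (fun c _ => hcomm _ hboundary c) (fun c _ => hcomm _ hmap c)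
  · simp only [Module.End.pow_apply, joinChain]
    exact Function.iterate_fixed (subdivide_simplex_singleton (v 0)) r
  · exact hr _ (Nat.succ_le_succ hn) _ (joinChain_mem_smallSimplices hG hbdd hn)

end SmallTower

section Tucker

variable {R : Type*} [CommRing R] {X α : Type*} {p N : ℕ} {lam : X → α × ZMod p} {T : X → X}
  {G : Set X}

/-- Simplices with vertices in `G` on which no colour occurs with two different labels. -/
def consistentSimplices (G : Set X) (lam : X → α × ZMod p) : Set (List X) :=
  {l | (∀ x ∈ l, x ∈ G) ∧ ∀ x ∈ l, ∀ y ∈ l, (lam x).1 = (lam y).1 → lam x = lam y}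

lemma mapChain_mem_consistentSimplices (hTG : Set.MapsTo T G G)
    (hlam : ∀ x ∈ G, lam (T x) = shiftLabel (lam x)) {c : Chain R X}
    (hc : c ∈ chainsIn R (consistentSimplices G lam)) :
    mapChain T c ∈ chainsIn R (consistentSimplices G lam) := by
  refine apply_mem_of_mem_chainsIn (fun l hl => ?_) hc
  rw [mapChain_simplex]
  refine simplex_mem_chainsIn ⟨?_, ?_⟩
  · simpa using fun x hx => hTG (hl.1 x hx)
  · simp only [List.mem_map, forall_exists_index, and_imp, forall_apply_eq_imp_iff₂]
    intro x hx y hy hxy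
    rw [hlam x (hl.1 x hx), hlam y (hl.1 y hy)] at hxy ⊢
    rw [hl.2 x hx y hy hxy]

variable [Fintype α]

/-- The key by which the vertices of labelled simplices are sorted: their colour in `α`. -/
noncomputable def colourKey (a : α × ZMod p) : Fin (Fintype.card α) := Fintype.equivFin α a.1

lemma colourKey_shiftLabel (a : α × ZMod p) : colourKey (shiftLabel a) = colourKey a := rfl

/-- The map from chains on `X` to the periodic resolution induced by a labelling `lam` of the
points of `X` by elements of the iterated join of `α` copies of `ZMod p`. -/
noncomputable def labelMap (R : Type*) [CommRing R] (lam : X → α × ZMod p) :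
    Chain R X →ₗ[R] Resolution R p :=
  toResolution ∘ₗ sortChain colourKey ∘ₗ mapChain lam

lemma labelMap_boundary [NeZero p] {c : Chain R X}
    (hc : c ∈ chainsIn R (consistentSimplices G lam)) :
    labelMap R lam (boundary c) = resDiff (labelMap R lam c) := by
  refine eq_of_mem_chainsIn (R := R) (f := labelMap R lam ∘ₗ boundary)
    (g := resDiff ∘ₗ labelMap R lam) (fun l hl => ?_) hc
  have hinj : Set.InjOn (colourKey (p := p)) {a : α × ZMod p | a ∈ l.map lam} := by
    intro a ha b hb hab
    obtain ⟨x, hx, rfl⟩ := List.mem_map.1 ha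
    obtain ⟨y, hy, rfl⟩ := List.mem_map.1 hb
    exact hl.2 x hx y hy ((Fintype.equivFin α).injective hab)
  simp only [labelMap, LinearMap.comp_apply, mapChain_boundary, mapChain_simplex]
  rw [← boundary_sortChain_simplex hinj, toResolution_boundary]

lemma labelMap_mapChain (hlam : ∀ x ∈ G, lam (T x) = shiftLabel (lam x)) {c : Chain R X}
    (hc : c ∈ chainsIn R (consistentSimplices G lam)) :
    labelMap R lam (mapChain T c) = cyclicShift R (R × R) p (labelMap R lam c) := by
  refine eq_of_mem_chainsIn (R := R) (f := labelMap R lam ∘ₗ mapChain T)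
    (g := cyclicShift R (R × R) p ∘ₗ labelMap R lam) (fun l hl => ?_) hc
  have hmap : (l.map T).map lam = (l.map lam).map shiftLabel := by
    simpa using fun x hx => hlam x (hl.1 x hx)
  simp only [labelMap, LinearMap.comp_apply, mapChain_simplex, hmap]
  rw [← toResolution_mapChain_shiftLabel, mapChain_sortChain colourKey_shiftLabel,
    mapChain_simplex]

lemma labelMap_eq_zero {c : Chain R X} {n : ℕ} (hn : Fintype.card α < n)
    (hc : c ∈ chainsIn R {l | l.length = n}) : labelMap R lam c = 0 := by
  refine eq_of_mem_chainsIn (R := R) (f := labelMap R lam) (g := 0) (fun l hl => ?_) hc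
  have hlen : Fintype.card (Fin (Fintype.card α)) < (l.map lam).length := by
    simpa [hl.out] using hn
  simp [labelMap, sortChain_simplex_eq_zero hlen]

/-- The labelling sends the tower of small simplices to a tower in the resolution, whose index is
one at the bottom; with at most `N` colours it vanishes at the top. -/
theorem exists_dist_le_of_equivariant_labelling [NormedAddCommGroup X] [NormedSpace ℝ X]
    (hp : 1 < p) {T : Module.End ℝ X} (hT : T ^ p = 1) (hTG : Set.MapsTo T G G) {v : ℕ → X}
    (hG : ContainsCyclicJoin T N v G) (hbdd : Bornology.IsBounded G)
    (hcard : Fintype.card α ≤ N) (hlam : ∀ x ∈ G, lam (T x) = shiftLabel (lam x))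
    {δ : ℝ} (hδ : 0 < δ) :
    ∃ x ∈ G, ∃ y ∈ G, dist x y ≤ δ ∧ (lam x).1 = (lam y).1 ∧ lam x ≠ lam y := by
  by_contra! hcons
  have : Fact (1 < p) := ⟨hp⟩
  have : NeZero p := ⟨by omega⟩
  obtain ⟨c, htower, hzero, hsmall⟩ :=
    exists_isCyclicTower_smallSimplices (ZMod p) hT hG hbdd hδ
  have hmem (n : ℕ) (hn : n ≤ N) : c n ∈ chainsIn (ZMod p) (consistentSimplices G lam) := by
    refine mem_chainsIn_of_subset (hsmall n hn) fun l hl => ?_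
    have hlG (x : X) (hx : x ∈ l) : x ∈ G := mem_of_mem_smallSimplices hl hx
    exact ⟨hlG, fun x hx y hy => hcons x (hlG x hx) y (hlG y hy) (hl.2.2 x hx y hy)⟩
  have hindex := resIndex_eq_of_isCyclicTower (htower.map
    (fun _ hc => mapChain_mem_consistentSimplices hTG hlam hc) hmem
    (fun _ hc => labelMap_boundary hc) (fun _ hc => labelMap_mapChain hlam hc))
  have htop : labelMap (ZMod p) lam (c N) = 0 :=
    labelMap_eq_zero (Nat.lt_succ_of_le hcard)
      (mem_chainsIn_of_subset (hsmall N le_rfl) fun l hl => hl.1)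
  have hbottom : resIndex 0 (labelMap (ZMod p) lam (c 0)) = 1 := by
    rw [hzero, ← resIndex_toResolution_singleton (lam (v 0))]
    simp [labelMap, insertSimplex]
  rw [htop, hbottom] at hindex
  simp [resIndex] at hindex

end Tucker

section Cover

variable {X α : Type*} [NormedAddCommGroup X] [NormedSpace ℝ X] [Fintype α] {p N : ℕ}
  {T : Module.End ℝ X} {G : Set X}

lemma exists_invariant_colouring {X α : Type*} {T : X → X} (hp : p ≠ 0) (hT : T^[p] = id)
    {G : Set X} (hG : G.Nonempty) {B : α × ZMod p → Set X}
    (hcover : ∀ x ∈ G, ∃ a, x ∈ B a) (hshift : ∀ a, ∀ x ∈ B a, T x ∈ B (shiftLabel a)) :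
    ∃ colour : X → α, ∀ x ∈ G, colour (T x) = colour x ∧ ∃ h, x ∈ B (colour x, h) := by
  let colours (x : X) : Set α := {a | ∃ h, x ∈ B (a, h)}
  have hsub (x : X) : colours x ⊆ colours (T x) := fun a ⟨h, hx⟩ => ⟨h + 1, hshift _ x hx⟩
  have hiter (x : X) (n : ℕ) : colours x ⊆ colours (T^[n] x) := by
    induction n with
    | zero => exact subset_rfl
    | succ n ih =>
      rw [Function.iterate_succ_apply']
      exact ih.trans (hsub _)
  have hinv (x : X) : colours (T x) = colours x := by
    refine (hsub x).antisymm' ?_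
    have := hiter (T x) (p - 1)
    rwa [← Function.iterate_succ_apply, Nat.succ_eq_add_one,
      Nat.sub_add_cancel (Nat.one_le_iff_ne_zero.2 hp), hT] at this
  have hne (x : X) (hx : x ∈ G) : (colours x).Nonempty :=
    let ⟨a, ha⟩ := hcover x hx
    ⟨a.1, a.2, ha⟩
  have : Nonempty α := let ⟨x, hx⟩ := hG; ⟨(hne x hx).some⟩
  exact ⟨fun x => Classical.epsilon (· ∈ colours x), fun x hx =>
    ⟨by simp only [hinv], Classical.epsilon_spec (hne x hx)⟩⟩

theorem exists_dist_le_of_equivariant_cover (hp : 1 < p) (hT : T ^ p = 1) (hTG : Set.MapsTo T G G)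
    {v : ℕ → X} (hG : ContainsCyclicJoin T N v G) (hbdd : Bornology.IsBounded G)
    (hcard : Fintype.card α ≤ N) {B : α × ZMod p → Set X} (hcover : ∀ x ∈ G, ∃ a, x ∈ B a)
    (hshift : ∀ a, ∀ x ∈ B a, T x ∈ B (shiftLabel a)) {δ : ℝ} (hδ : 0 < δ) :
    ∃ a h h', h ≠ h' ∧ ∃ x ∈ G ∩ B (a, h), ∃ y ∈ G ∩ B (a, h'), dist x y ≤ δ := by
  by_contra! hno
  have hvG : v 0 ∈ G := hG (fun _ => 0) (subset_convexHull ℝ _ ⟨0, Nat.zero_le N, rfl⟩)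
  have hT' : (⇑T)^[p] = id := by rw [← Module.End.coe_pow, hT]; rfl
  obtain ⟨colour, hcolour⟩ :=
    exists_invariant_colouring (by omega) hT' ⟨_, hvG⟩ hcover hshift
  have hunique {x : X} (hx : x ∈ G) {a : α} {h h' : ZMod p} (hh : x ∈ B (a, h))
      (hh' : x ∈ B (a, h')) : h = h' := by
    by_contra hne
    have := hno a h h' hne x ⟨hx, hh⟩ x ⟨hx, hh'⟩
    rw [dist_self] at this
    exact absurd hδ this.not_gt
  choose! height hheight using fun x hx => (hcolour x hx).2
  let lam (x : X) : α × ZMod p := (colour x, height x)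
  have hlam (x : X) (hx : x ∈ G) : lam (T x) = shiftLabel (lam x) := by
    refine Prod.ext (hcolour x hx).1 (hunique (hTG hx) (hheight _ (hTG hx)) ?_)
    rw [(hcolour x hx).1]
    exact hshift _ x (hheight x hx)
  obtain ⟨x, hx, y, hy, hxy, hfst, hne⟩ :=
    exists_dist_le_of_equivariant_labelling hp hT hTG hG hbdd hcard hlam hδ
  have hfst : colour x = colour y := hfst
  have hheights : height x ≠ height y := fun h => hne (Prod.ext hfst h)
  exact (hno _ _ _ hheights x ⟨hx, hheight x hx⟩ y ⟨hy, hfst ▸ hheight y hy⟩).not_ge hxy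

end Cover

/-! ### The join of boundaries of simplices -/

section BoundaryJoin

variable {p n : ℕ}

lemma continuous_uncurry_matrix :
    Continuous (Function.uncurry : (ZMod p → Fin n → ℝ) → ZMod p × Fin n → ℝ) :=
  continuous_pi fun _ => by simp only [Function.uncurry]; fun_prop

variable (p n) in
/-- The vertex `0` of the copy `i / (p - 1)` of the simplex, so that each copy is listed `p - 1`
times. -/
def joinVertex (i : ℕ) : ZMod p → Fin n → ℝ :=
  fun j c => if j = 0 ∧ (c : ℕ) = i / (p - 1) then 1 else 0

lemma iterate_cyclicShift_joinVertex (m i : ℕ) (j : ZMod p) (c : Fin n) :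
    (cyclicShift ℝ (Fin n → ℝ) p)^[m] (joinVertex p n i) j c =
      if j = m ∧ (c : ℕ) = i / (p - 1) then 1 else 0 := by
  rw [← Module.End.pow_apply, cyclicShift_pow_apply]
  simp only [joinVertex, sub_eq_zero]

variable [NeZero p]

variable (p n) in
/-- The join of `n` copies of the boundary of the simplex with vertex set `ZMod p`, realised by
matrices of barycentric coordinates; each column `x · c` misses at least one vertex. -/
def boundaryJoin : Set (ZMod p → Fin n → ℝ) :=
  {x | Function.uncurry x ∈ stdSimplex ℝ (ZMod p × Fin n) ∧ ∀ c, ∃ j, x j c = 0}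

lemma isCompact_boundaryJoin : IsCompact (boundaryJoin p n) := by
  refine Metric.isCompact_of_isClosed_isBounded ?_ ?_
  · have hzero : IsClosed {x : ZMod p → Fin n → ℝ | ∀ c, ∃ j, x j c = 0} := by
      simp only [Set.ofPred_forall, Set.ofPred_exists]
      exact isClosed_iInter fun c => isClosed_iUnion_of_finite fun j =>
        isClosed_eq (by fun_prop) continuous_const
    exact ((isClosed_stdSimplex _ _).preimage continuous_uncurry_matrix).inter hzero
  · refine (Metric.isBounded_Icc (0 : ZMod p → Fin n → ℝ) 1).subset fun x hx => ?_
    have hIcc (j : ZMod p) (c : Fin n) : x j c ∈ Set.Icc (0 : ℝ) 1 :=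
      mem_Icc_of_mem_stdSimplex hx.1 (j, c)
    exact ⟨fun j c => (hIcc j c).1, fun j c => (hIcc j c).2⟩

lemma mapsTo_cyclicShift_boundaryJoin :
    Set.MapsTo (cyclicShift ℝ (Fin n → ℝ) p) (boundaryJoin p n) (boundaryJoin p n) := by
  rintro x ⟨⟨hnonneg, hsum⟩, hzero⟩
  refine ⟨⟨fun jc => hnonneg (jc.1 - 1, jc.2), ?_⟩, fun c => ?_⟩
  · rw [← hsum]
    exact Equiv.sum_comp ((Equiv.subRight (1 : ZMod p)).prodCongr (Equiv.refl (Fin n)))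
      (Function.uncurry x)
  · obtain ⟨j, hj⟩ := hzero c
    exact ⟨j + 1, by simpa using hj⟩

lemma uncurry_iterate_cyclicShift_joinVertex_mem (m : ℕ) {i : ℕ} (hi : i / (p - 1) < n) :
    Function.uncurry ((cyclicShift ℝ (Fin n → ℝ) p)^[m] (joinVertex p n i)) ∈
      stdSimplex ℝ (ZMod p × Fin n) := by
  convert single_mem_stdSimplex ℝ ((m : ZMod p), (⟨i / (p - 1), hi⟩ : Fin n)) using 1
  ext ⟨j, c⟩
  simp [Function.uncurry, iterate_cyclicShift_joinVertex, Pi.single_apply, Fin.ext_iff]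

lemma exists_forall_ne_of_div_eq (hp : 1 < p) (γ : ℕ → ZMod p) (c : ℕ) :
    ∃ s : ZMod p, ∀ i, i / (p - 1) = c → s ≠ γ i := by
  have hcard : ((Finset.range (p - 1)).image fun t => γ (c * (p - 1) + t)).card < p :=
    Finset.card_image_le.trans_lt (by rw [Finset.card_range]; omega)
  obtain ⟨s, hs⟩ : ∃ s : ZMod p, s ∉ (Finset.range (p - 1)).image fun t => γ (c * (p - 1) + t) := by
    by_contra! hall
    rw [Finset.eq_univ_iff_forall.2 hall, Finset.card_univ, ZMod.card] at hcard
    exact hcard.false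
  refine ⟨s, fun i hi hsi => hs (Finset.mem_image.2 ⟨i % (p - 1), ?_, ?_⟩)⟩
  · exact Finset.mem_range.2 (Nat.mod_lt _ (by omega))
  · rw [hsi, ← hi, Nat.div_add_mod']

/-- At most `p - 1` of the listed vertices lie in any given copy of the simplex, so they miss a
vertex of that copy. -/
lemma containsCyclicJoin_boundaryJoin (hp : 1 < p) {N : ℕ} (hN : N < n * (p - 1)) :
    ContainsCyclicJoin (cyclicShift ℝ (Fin n → ℝ) p) N (joinVertex p n) (boundaryJoin p n) := by
  intro γ
  choose s hs using exists_forall_ne_of_div_eq hp fun i => (γ i : ZMod p)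
  let face : Set (ZMod p → Fin n → ℝ) :=
    {x | Function.uncurry x ∈ stdSimplex ℝ (ZMod p × Fin n) ∧ ∀ c : Fin n, x (s c) c = 0}
  have hconvex : Convex ℝ face := by
    rintro x ⟨hx, hx0⟩ y ⟨hy, hy0⟩ a b ha hb hab
    exact ⟨convex_stdSimplex ℝ _ hx hy ha hb hab, fun c => by simp [hx0, hy0]⟩
  have hface : face ⊆ boundaryJoin p n := fun x hx => ⟨hx.1, fun c => ⟨s c, hx.2 c⟩⟩
  refine (convexHull_min ?_ hconvex).trans hface
  rintro _ ⟨i, hi, rfl⟩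
  have hin : i / (p - 1) < n :=
    (Nat.div_lt_iff_lt_mul (by omega)).2 (lt_of_le_of_lt hi hN)
  refine ⟨uncurry_iterate_cyclicShift_joinVertex_mem (γ i) hin, fun c => ?_⟩
  simp only [iterate_cyclicShift_joinVertex]
  exact if_neg fun h => hs c i h.2.symm h.1

end BoundaryJoin

/-! ### Gapped sets and approximate coincidences -/

section Gapped

variable {ι : Type*} {η : ℝ} {z w : ι → ℝ} {A B : Finset ι}

/-- The values of `z` on `A` exceed those off `A` by more than `η`. -/
def IsGapped (η : ℝ) (z : ι → ℝ) (A : Finset ι) : Prop :=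
  ∀ a ∈ A, ∀ b ∉ A, z b + η < z a

lemma IsGapped.of_forall_abs_sub_le (hA : IsGapped η z A) {r : ℝ} (hzw : ∀ i, |z i - w i| ≤ r) :
    IsGapped (η - 2 * r) w A := fun a ha b hb => by
  have := hA a ha b hb
  have := abs_le.1 (hzw a)
  have := abs_le.1 (hzw b)
  linarith

lemma IsGapped.eq_of_card_eq (hη : 0 ≤ η) (hA : IsGapped η z A) (hB : IsGapped η z B)
    (hcard : A.card = B.card) : A = B := by
  by_contra hne
  obtain ⟨a, haA, haB⟩ :=
    Finset.not_subset.1 fun h => hne (Finset.eq_of_subset_of_card_le h hcard.ge)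
  obtain ⟨b, hbB, hbA⟩ :=
    Finset.not_subset.1 fun h => hne (Finset.eq_of_subset_of_card_le h hcard.le).symm
  linarith [hA a haA b hbA, hB b hbB a haB]

lemma exists_le_eq_succ_of_monotone {f : ℕ → ℕ} (hf : Monotone f) {K : ℕ} (hK : ∀ n, f n ≤ K) :
    ∃ n ≤ K, f n = f (n + 1) := by
  by_contra! hne
  have hgrow (n : ℕ) (hn : n ≤ K + 1) : n ≤ f n := by
    induction n with
    | zero => exact Nat.zero_le _
    | succ n ih =>
      have := ih (by omega)
      have := lt_of_le_of_ne (hf (Nat.le_add_right n 1)) (hne n (by omega))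
      omega
  have := hgrow (K + 1) le_rfl
  have := hK (K + 1)
  omega

/-- Among the level sets `{z ≤ z j' + n η}`, two consecutive ones coincide. -/
lemma exists_isGapped [Fintype ι] (hη : 0 < η) {j j' : ι}
    (hj : z j' + Fintype.card ι * η < z j) :
    ∃ A : Finset ι, A.card ∈ Finset.Ioo 0 (Fintype.card ι) ∧ IsGapped η z A := by
  classical
  let level (n : ℕ) : Finset ι := Finset.univ.filter fun l => z l ≤ z j' + n * η
  have hlevel : Monotone level := fun m n hmn l hl => by
    simp only [level, Finset.mem_filter_univ] at hl ⊢
    exact hl.trans (by gcongr)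
  obtain ⟨n, hn, hstable⟩ :=
    exists_le_eq_succ_of_monotone (Finset.card_mono.comp hlevel) fun n => (level n).card_le_univ
  have hstable : level n = level (n + 1) :=
    Finset.eq_of_subset_of_card_le (hlevel n.le_succ) hstable.ge
  refine ⟨(level n)ᶜ, Finset.mem_Ioo.2 ⟨Finset.card_pos.2 ⟨j, ?_⟩, ?_⟩, fun a ha b hb => ?_⟩
  · simp only [level, Finset.mem_compl, Finset.mem_filter_univ, not_le]
    exact hj.trans_le' (by gcongr)
  · refine Finset.card_lt_univ_of_notMem (x := j') ?_
    simp only [level, Finset.mem_compl, Finset.mem_filter_univ, not_not]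
    exact le_add_of_nonneg_right (by positivity)
  · rw [Finset.mem_compl, not_not] at hb
    rw [hstable] at ha
    simp only [level, Finset.mem_compl, Finset.mem_filter_univ, not_le, Nat.cast_succ] at ha hb
    linarith

end Gapped

section Coincidence

variable {p : ℕ} [Fact p.Prime] {κ X : Type*} {η : ℝ}

lemma IsGapped.cyclicShift {z : ZMod p → ℝ} {A : Finset (ZMod p)} (hA : IsGapped η z A) :
    IsGapped η (cyclicShift ℝ ℝ p z) (A.map (addRightEmbedding 1)) := by
  intro a ha b hb
  obtain ⟨a, haA, rfl⟩ := Finset.mem_map.1 ha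
  have hb_sub : b - 1 ∉ A := fun h => hb (Finset.mem_map.2 ⟨b - 1, h, by simp⟩)
  simpa using hA a haA (b - 1) hb_sub

/-- The mean in `ZMod p` of the elements of a set. It commutes with translations as long as the
cardinality of the set is prime to `p`. -/
def zmodMean (A : Finset (ZMod p)) : ZMod p := (∑ a ∈ A, a) / A.card

lemma zmodMean_map_addRightEmbedding {A : Finset (ZMod p)} (hA : A.card ∈ Finset.Ioo 0 p) :
    zmodMean (A.map (addRightEmbedding 1)) = zmodMean A + 1 := by
  obtain ⟨hpos, hlt⟩ := Finset.mem_Ioo.1 hA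
  have hcard : (A.card : ZMod p) ≠ 0 := fun h =>
    (Nat.le_of_dvd hpos ((ZMod.natCast_eq_zero_iff _ _).1 h)).not_gt hlt
  simp only [zmodMean, Finset.sum_map, addRightEmbedding_apply, Finset.sum_add_distrib,
    Finset.sum_const, nsmul_eq_mul, mul_one, Finset.card_map]
  field_simp

/-- The points `x` at which `M x i` has an `η`-gapped set with `s` elements and mean `h`, for
`a = ((i, s), h)`. -/
def gapCell (M : X → κ → ZMod p → ℝ) (η : ℝ) (a : (κ × Finset.Ioo 0 p) × ZMod p) : Set X :=
  {x | ∃ A : Finset (ZMod p), A.card = a.1.2 ∧ IsGapped η (M x a.1.1) A ∧ zmodMean A = a.2}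

variable {M : X → κ → ZMod p → ℝ}

lemma exists_mem_gapCell (hη : 0 < η) {x : X} {i : κ} {j j' : ZMod p}
    (hlt : M x i j' + p * η < M x i j) : ∃ a, x ∈ gapCell M η a := by
  obtain ⟨A, hcard, hA⟩ := exists_isGapped (z := M x i) hη (by rwa [ZMod.card])
  rw [ZMod.card] at hcard
  exact ⟨((i, ⟨A.card, hcard⟩), zmodMean A), A, rfl, hA, rfl⟩

lemma apply_mem_gapCell {T : X → X} (hT : ∀ x i, M (T x) i = cyclicShift ℝ ℝ p (M x i))
    {a : (κ × Finset.Ioo 0 p) × ZMod p} {x : X} (hx : x ∈ gapCell M η a) :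
    T x ∈ gapCell M η (shiftLabel a) := by
  obtain ⟨A, hcard, hA, hmean⟩ := hx
  refine ⟨A.map (addRightEmbedding 1), by rw [Finset.card_map, hcard, shiftLabel], ?_, ?_⟩
  · rw [hT]
    exact hA.cyclicShift
  · rw [zmodMean_map_addRightEmbedding (hcard ▸ a.1.2.2), hmean, shiftLabel]

lemma eq_of_mem_gapCell (hη : 0 ≤ η) {a : κ × Finset.Ioo 0 p} {h h' : ZMod p} {x y : X}
    (hx : x ∈ gapCell M η (a, h)) (hy : y ∈ gapCell M η (a, h'))
    (hxy : ∀ i j, |M x i j - M y i j| ≤ η / 2) : h = h' := by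
  obtain ⟨A, hAcard, hA, rfl⟩ := hx
  obtain ⟨B, hBcard, hB, rfl⟩ := hy
  have hA' : IsGapped 0 (M y a.1) A := by
    have := hA.of_forall_abs_sub_le (hxy a.1)
    rwa [mul_div_cancel₀ _ two_ne_zero, sub_self] at this
  have hB' : IsGapped 0 (M y a.1) B := fun b hb c hc => (hB b hb c hc).trans_le' (by linarith)
  rw [hA'.eq_of_card_eq le_rfl hB' (hAcard.trans hBcard.symm)]

theorem exists_mem_boundaryJoin_forall_le_add [Fintype κ] {n : ℕ} (hκ : Fintype.card κ < n)
    {M : (ZMod p → Fin n → ℝ) → κ → ZMod p → ℝ} (hM : ContinuousOn M (boundaryJoin p n))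
    (hshift : ∀ x i, M (cyclicShift ℝ (Fin n → ℝ) p x) i = cyclicShift ℝ ℝ p (M x i))
    {ε : ℝ} (hε : 0 < ε) : ∃ x ∈ boundaryJoin p n, ∀ i j j', M x i j ≤ M x i j' + ε := by
  by_contra! hno
  have hp := (Fact.out : p.Prime).one_lt
  have hp0 : (0 : ℝ) < p := by exact_mod_cast hp.le
  have hη : 0 < ε / p := by positivity
  have hcover (x) (hx : x ∈ boundaryJoin p n) : ∃ a, x ∈ gapCell M (ε / p) a := by
    obtain ⟨i, j, j', hlt⟩ := hno x hx
    exact exists_mem_gapCell hη (by rwa [mul_div_cancel₀ _ hp0.ne'])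
  obtain ⟨δ, hδ, hMδ⟩ := Metric.uniformContinuousOn_iff_le.1
    (isCompact_boundaryJoin.uniformContinuousOn_of_continuous hM) (ε / p / 2) (by positivity)
  have hN : Fintype.card (κ × Finset.Ioo 0 p) < n * (p - 1) := by
    rw [Fintype.card_prod, Fintype.card_coe, Nat.card_Ioo, Nat.sub_zero]
    exact Nat.mul_lt_mul_of_pos_right hκ (by omega)
  obtain ⟨a, h, h', hne, x, ⟨hx, hxa⟩, y, ⟨hy, hya⟩, hxy⟩ :=
    exists_dist_le_of_equivariant_cover hp cyclicShift_pow_self mapsTo_cyclicShift_boundaryJoin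
      (containsCyclicJoin_boundaryJoin hp hN) isCompact_boundaryJoin.isBounded le_rfl hcover
      (fun _ _ => apply_mem_gapCell hshift) hδ
  refine hne (eq_of_mem_gapCell hη.le hxa hya fun i j => ?_)
  rw [← Real.dist_eq]
  exact ((dist_le_pi_dist _ _ j).trans (dist_le_pi_dist _ _ i)).trans (hMδ x hx y hy hxy)

end Coincidence

/-! ### Softmax -/

section Softmax

open Filter Topology

variable {ι : Type*} [Fintype ι]

/-- The softmax weights of `t`: a continuous substitute for the indicator of the maximizing indices,
to which it converges when `t` is multiplied by a large factor. -/
noncomputable def softmax (t : ι → ℝ) (j : ι) : ℝ :=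
  Real.exp (t j) / ∑ l, Real.exp (t l)

lemma softmax_nonneg (t : ι → ℝ) (j : ι) : 0 ≤ softmax t j := by
  unfold softmax
  positivity

lemma softmax_le_exp_sub (t : ι → ℝ) (a b : ι) : softmax t a ≤ Real.exp (t a - t b) := by
  rw [Real.exp_sub]
  exact div_le_div_of_nonneg_left (Real.exp_pos _).le (Real.exp_pos _)
    (Finset.single_le_sum (f := fun l => Real.exp (t l)) (fun l _ => (Real.exp_pos _).le)
      (Finset.mem_univ b))

lemma softmax_comp_equiv {ι' : Type*} [Fintype ι'] (t : ι → ℝ) (e : ι' ≃ ι) (j : ι') :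
    softmax (t ∘ e) j = softmax t (e j) := by
  simp only [softmax, Function.comp_apply, e.sum_comp fun l => Real.exp (t l)]

section Nonempty

variable [Nonempty ι]

lemma sum_exp_pos (t : ι → ℝ) : 0 < ∑ l, Real.exp (t l) :=
  Finset.sum_pos (fun _ _ => Real.exp_pos _) Finset.univ_nonempty

lemma sum_softmax (t : ι → ℝ) : ∑ j, softmax t j = 1 := by
  simp only [softmax, ← Finset.sum_div]
  exact div_self (sum_exp_pos t).ne'

lemma sum_softmax_le_one (t : ι → ℝ) (B : Finset ι) : ∑ j ∈ B, softmax t j ≤ 1 := by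
  rw [← sum_softmax t]
  exact Finset.sum_le_univ_sum_of_nonneg fun j => softmax_nonneg t j

lemma abs_softmax_le_one (t : ι → ℝ) (j : ι) : |softmax t j| ≤ 1 := by
  rw [abs_of_nonneg (softmax_nonneg t j)]
  simpa only [Finset.sum_singleton] using sum_softmax_le_one t {j}

lemma continuous_softmax (j : ι) : Continuous fun t : ι → ℝ => softmax t j :=
  Continuous.div (by fun_prop) (by fun_prop) fun t => (sum_exp_pos t).ne'

end Nonempty

variable {α : Type*} {𝓕 : Filter α} {c : α → ℝ} {t : α → ι → ℝ} {s : ι → ℝ}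

lemma tendsto_softmax_smul_zero (hc : Tendsto c 𝓕 atTop) (ht : Tendsto t 𝓕 (𝓝 s)) {a b : ι}
    (hab : s a < s b) : Tendsto (fun n => softmax (c n • t n) a) 𝓕 (𝓝 0) := by
  rw [tendsto_pi_nhds] at ht
  have hdiff : Tendsto (fun n => c n * (t n a - t n b)) 𝓕 atBot :=
    hc.atTop_mul_neg (sub_neg.2 hab) ((ht a).sub (ht b))
  refine squeeze_zero (fun n => softmax_nonneg _ _) (fun n => ?_)
    (Real.tendsto_exp_atBot.comp hdiff)
  simpa only [Pi.smul_apply, smul_eq_mul, ← mul_sub, Function.comp_apply] using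
    softmax_le_exp_sub (c n • t n) a b

lemma tendsto_sum_softmax_smul_zero (hc : Tendsto c 𝓕 atTop) (ht : Tendsto t 𝓕 (𝓝 s))
    {B : Finset ι} (hB : ∀ l ∈ B, ∃ b, s l < s b) :
    Tendsto (fun n => ∑ l ∈ B, softmax (c n • t n) l) 𝓕 (𝓝 0) := by
  rw [← Finset.sum_const_zero (s := B)]
  refine tendsto_finsetSum _ fun l hl => ?_
  obtain ⟨b, hb⟩ := hB l hl
  exact tendsto_softmax_smul_zero hc ht hb

lemma tendsto_sum_softmax_smul_one [Nonempty ι] (hc : Tendsto c 𝓕 atTop)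
    (ht : Tendsto t 𝓕 (𝓝 s)) {B : Finset ι} (hB : ∀ l ∉ B, ∃ b, s l < s b) :
    Tendsto (fun n => ∑ l ∈ B, softmax (c n • t n) l) 𝓕 (𝓝 1) := by
  classical
  have hcompl : Tendsto (fun n => 1 - ∑ l ∈ Bᶜ, softmax (c n • t n) l) 𝓕 (𝓝 (1 - 0)) :=
    (tendsto_sum_softmax_smul_zero hc ht fun l hl => hB l (Finset.mem_compl.1 hl)).const_sub 1
  rw [sub_zero] at hcompl
  refine hcompl.congr fun n => ?_
  rw [← sum_softmax (c n • t n), ← Finset.sum_add_sum_compl B, add_sub_cancel_right]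

end Softmax

/-! ### Cells of maximal functions -/

section MaxCell

open Filter Topology

variable {Ω ι : Type*}

/-- The points at which `g j` is the largest of the functions `g l`; for affine functions these are
the cells of a power diagram. -/
def maxCell (g : ι → Ω → ℝ) (j : ι) : Set Ω :=
  {x | ∀ l, g l x ≤ g j x}

variable {g : ι → Ω → ℝ}

lemma measurableSet_maxCell [Countable ι] [MeasurableSpace Ω] (hg : ∀ l, Measurable (g l)) (j : ι) :
    MeasurableSet (maxCell g j) := by
  rw [maxCell, Set.ofPred_forall]
  exact .iInter fun l => measurableSet_le (hg l) (hg j)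

variable [Fintype ι]

/-- The share of the measure `μ` received by the index `j` when every point `x` is distributed
according to the softmax weights of `g · x`: a version of `μ (maxCell g j)` that depends
continuously on `g`. -/
noncomputable def softMass [MeasurableSpace Ω] (μ : Measure Ω) (g : ι → Ω → ℝ) (j : ι) : ℝ :=
  ∫ x, softmax (fun l => g l x) j ∂μ

lemma softMass_comp_equiv [MeasurableSpace Ω] {ι' : Type*} [Fintype ι'] (μ : Measure Ω)
    (g : ι → Ω → ℝ) (e : ι' ≃ ι) (j : ι') : softMass μ (g ∘ e) j = softMass μ g (e j) :=
  integral_congr_ae <| .of_forall fun x => softmax_comp_equiv (fun l => g l x) e j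

variable [Nonempty ι]

lemma tendsto_sum_softmax_smul_indicator_maxCell {c : ℕ → ℝ} (hc : Tendsto c atTop atTop)
    {G : ℕ → ι → Ω → ℝ} {x : Ω} (hG : ∀ l, Tendsto (fun n => G n l x) atTop (𝓝 (g l x)))
    {j : ι} {B : Finset ι} (hB : ∀ l, l ∈ B ↔ g l x = g j x) :
    Tendsto (fun n => ∑ l ∈ B, softmax (fun l => (c n • G n) l x) l) atTop
      (𝓝 ((maxCell g j).indicator (fun _ => 1) x)) := by
  have ht : Tendsto (fun n l => G n l x) atTop (𝓝 fun l => g l x) := tendsto_pi_nhds.2 hG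
  by_cases hx : x ∈ maxCell g j
  · rw [Set.indicator_of_mem hx]
    exact tendsto_sum_softmax_smul_one hc ht fun l hl => ⟨j, (hx l).lt_of_ne (mt (hB l).2 hl)⟩
  · rw [Set.indicator_of_notMem hx]
    obtain ⟨b, hb⟩ : ∃ b, g j x < g b x := by
      simpa only [maxCell, Set.mem_ofPred_eq, not_forall, not_le] using hx
    exact tendsto_sum_softmax_smul_zero hc ht fun l hl => ⟨b, ((hB l).1 hl).trans_lt hb⟩

variable [MeasurableSpace Ω]

lemma aestronglyMeasurable_softmax (μ : Measure Ω) (hg : ∀ l, Measurable (g l)) (j : ι) :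
    AEStronglyMeasurable (fun x => softmax (fun l => g l x) j) μ :=
  ((continuous_softmax j).measurable.comp (measurable_pi_lambda _ hg)).aestronglyMeasurable

variable {μ : Measure Ω}

lemma integrable_softmax [IsFiniteMeasure μ] (hg : ∀ l, Measurable (g l)) (j : ι) :
    Integrable (fun x => softmax (fun l => g l x) j) μ :=
  .of_bound (aestronglyMeasurable_softmax μ hg j) 1 (.of_forall fun _ => abs_softmax_le_one _ j)

lemma sum_softMass [IsProbabilityMeasure μ] (hg : ∀ l, Measurable (g l)) :
    ∑ j, softMass μ g j = 1 := by
  simp only [softMass, ← integral_finsetSum _ fun j _ => integrable_softmax hg j, sum_softmax,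
    integral_const, probReal_univ, one_smul]

lemma continuous_softMass [IsFiniteMeasure μ] {X : Type*} [TopologicalSpace X]
    [FirstCountableTopology X] {G : X → ι → Ω → ℝ} (hmeas : ∀ y l, Measurable (G y l))
    (hcont : ∀ l x, Continuous fun y => G y l x) (j : ι) :
    Continuous fun y => softMass μ (G y) j :=
  continuous_of_dominated (bound := fun _ => 1)
    (fun y => aestronglyMeasurable_softmax μ (hmeas y) j)
    (fun _ => .of_forall fun _ => abs_softmax_le_one _ j) (integrable_const 1)
    (.of_forall fun x => (continuous_softmax j).comp (continuous_pi fun l => hcont l x))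

lemma tendsto_sum_softMass_smul [IsFiniteMeasure μ] {c : ℕ → ℝ} (hc : Tendsto c atTop atTop)
    {G : ℕ → ι → Ω → ℝ} (hGmeas : ∀ n l, Measurable (G n l)) (hgmeas : ∀ l, Measurable (g l))
    (hG : ∀ l x, Tendsto (fun n => G n l x) atTop (𝓝 (g l x))) {j : ι} {B : Finset ι}
    (hB : ∀ᵐ x ∂μ, ∀ l, l ∈ B ↔ g l x = g j x) :
    Tendsto (fun n => ∑ l ∈ B, softMass μ (c n • G n) l) atTop (𝓝 (μ.real (maxCell g j))) := by
  have hmeas (n l) : Measurable ((c n • G n) l) := (hGmeas n l).const_smul (c n)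
  have hlim := tendsto_integral_of_dominated_convergence (μ := μ) (fun _ => (1 : ℝ))
    (fun n => (integrable_finsetSum B fun l _ => integrable_softmax (hmeas n) l).1)
    (integrable_const 1)
    (fun n => .of_forall fun x => by
      rw [Real.norm_of_nonneg (Finset.sum_nonneg fun l _ => softmax_nonneg _ _)]
      exact sum_softmax_le_one _ B)
    (hB.mono fun x hx => tendsto_sum_softmax_smul_indicator_maxCell hc (fun l => hG l x) hx)
  rw [integral_indicator_const _ (measurableSet_maxCell hgmeas j), smul_eq_mul, mul_one] at hlim
  exact hlim.congr fun n => integral_finsetSum _ fun l _ => integrable_softmax (hmeas n) l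

end MaxCell

lemma abs_sub_inv_card_le {ι : Type*} [Fintype ι] {z : ι → ℝ} (hz : ∑ j, z j = 1) {ε : ℝ}
    (hε : ∀ j j', z j ≤ z j' + ε) (j : ι) : |z j - (Fintype.card ι : ℝ)⁻¹| ≤ ε := by
  have hcard : (0 : ℝ) < Fintype.card ι := Nat.cast_pos.2 (Fintype.card_pos_iff.2 ⟨j⟩)
  have hupper : Fintype.card ι * z j ≤ 1 + Fintype.card ι * ε := by
    have := Finset.sum_le_sum fun l (_ : l ∈ Finset.univ) => hε j l
    simpa [Finset.sum_add_distrib, hz] using this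
  have hlower : 1 ≤ Fintype.card ι * z j + Fintype.card ι * ε := by
    have := Finset.sum_le_sum fun l (_ : l ∈ Finset.univ) => hε l j
    simpa [Finset.sum_add_distrib, hz, mul_add] using this
  have hsub : z j - (Fintype.card ι : ℝ)⁻¹ = (Fintype.card ι * z j - 1) / Fintype.card ι := by
    field_simp
  rw [hsub, abs_le, le_div_iff₀ hcard, div_le_iff₀ hcard]
  constructor <;> linarith

section Equidistribution

open Filter Topology

variable {Ω κ : Type*} [MeasurableSpace Ω] {p n : ℕ} [Fact p.Prime] {μ : κ → Measure Ω}
  {F : (Fin n → ℝ) → Ω → ℝ}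

lemma exists_ne_of_mem_boundaryJoin {f : ZMod p → Fin n → ℝ} (hf : f ∈ boundaryJoin p n)
    (j : ZMod p) : ∃ l, f l ≠ f j := by
  obtain ⟨⟨-, hsum⟩, hzero⟩ := hf
  by_contra! hconst
  have hf0 (l c) : f l c = 0 := by
    obtain ⟨t, ht⟩ := hzero c
    rw [hconst l, ← hconst t, ht]
  simp [Function.uncurry_def, hf0] at hsum

lemma exists_mem_boundaryJoin_abs_softMass_sub_le [Fintype κ] [∀ i, IsProbabilityMeasure (μ i)]
    (hκ : Fintype.card κ < n) (hmeas : ∀ v, Measurable (F v))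
    (hcont : ∀ x, Continuous fun v => F v x) (c : ℝ) {ε : ℝ} (hε : 0 < ε) :
    ∃ f ∈ boundaryJoin p n, ∀ i j, |softMass (μ i) (c • (F ∘ f)) j - (p : ℝ)⁻¹| ≤ ε := by
  have hmeas' (f : ZMod p → Fin n → ℝ) (l) : Measurable ((c • (F ∘ f)) l) :=
    (hmeas (f l)).const_smul c
  obtain ⟨f, hf, hle⟩ := exists_mem_boundaryJoin_forall_le_add hκ
    (M := fun f i => softMass (μ i) (c • (F ∘ f)))
    (Continuous.continuousOn <| continuous_pi fun i => continuous_pi <| continuous_softMass hmeas'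
      fun l x => ((hcont x).comp (continuous_apply l)).const_smul c)
    (fun f i => funext fun j => softMass_comp_equiv (μ i) (c • (F ∘ f)) (Equiv.subRight 1) j) hε
  refine ⟨f, hf, fun i j => ?_⟩
  simpa only [ZMod.card] using abs_sub_inv_card_le (sum_softMass (hmeas' f)) (hle i) j

theorem exists_measureReal_maxCell_eq [Fintype κ] [∀ i, IsProbabilityMeasure (μ i)]
    (hκ : Fintype.card κ < n) (hmeas : ∀ v, Measurable (F v))
    (hcont : ∀ x, Continuous fun v => F v x)
    (hnull : ∀ i v w, v ≠ w → ∀ᵐ x ∂μ i, F v x ≠ F w x) :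
    ∃ f : ZMod p → Fin n → ℝ, (∀ j, ∃ l, f l ≠ f j) ∧
      ∀ i j, (μ i).real (maxCell (F ∘ f) j) = Fintype.card {l // f l = f j} / p := by
  classical
  choose u hu huε using fun N : ℕ => exists_mem_boundaryJoin_abs_softMass_sub_le (p := p) (μ := μ)
    hκ hmeas hcont N (ε := 1 / ((N : ℝ) + 1)) (by positivity)
  obtain ⟨f, hf, φ, hφ, hlim⟩ := isCompact_boundaryJoin.tendsto_subseq hu
  refine ⟨f, exists_ne_of_mem_boundaryJoin hf, fun i j => ?_⟩
  have hmass (l) : Tendsto (fun N => softMass (μ i) ((φ N : ℝ) • (F ∘ u (φ N))) l) atTop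
      (𝓝 (p : ℝ)⁻¹) := by
    rw [tendsto_iff_norm_sub_tendsto_zero]
    exact squeeze_zero (fun _ => norm_nonneg _) (fun N => huε (φ N) i l)
      (tendsto_one_div_add_atTop_nhds_zero_nat.comp hφ.tendsto_atTop)
  have hcell : ∀ᵐ x ∂μ i, ∀ l, l ∈ Finset.univ.filter (f · = f j) ↔ F (f l) x = F (f j) x := by
    rw [ae_all_iff]
    intro l
    by_cases hl : f l = f j
    · simp [hl]
    · filter_upwards [hnull i _ _ hl] with x hx
      simp [hl, hx]
  have hsum := tendsto_sum_softMass_smul (tendsto_natCast_atTop_atTop.comp hφ.tendsto_atTop)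
    (fun N l => hmeas (u (φ N) l)) (fun l => hmeas (f l))
    (fun l x => ((hcont x).tendsto _).comp ((tendsto_pi_nhds.1 hlim) l)) hcell
  refine (tendsto_nhds_unique hsum (tendsto_finsetSum _ fun l _ => hmass l)).trans ?_
  rw [Finset.sum_const, nsmul_eq_mul, Fintype.card_subtype, div_eq_mul_inv]

end Equidistribution

/-! ### Convex partitions -/

section ConvexPartition

variable {E ι : Type*} [AddCommGroup E] [Module ℝ E] [TopologicalSpace E] {C : ι → Set E}

/-- A convex partition: closed convex sets that cover the space and have pairwise disjoint
interiors. -/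
structure IsConvexPartition (C : ι → Set E) : Prop where
  isClosed (j : ι) : IsClosed (C j)
  convex (j : ι) : Convex ℝ (C j)
  iUnion_eq_univ : ⋃ j, C j = Set.univ
  disjoint_interior {j j' : ι} : j ≠ j' → Disjoint (interior (C j)) (interior (C j'))

lemma isConvexPartition_univ [Nonempty ι] [Subsingleton ι] :
    IsConvexPartition fun _ : ι => (Set.univ : Set E) where
  isClosed _ := isClosed_univ
  convex _ := convex_univ
  iUnion_eq_univ := Set.iUnion_const _
  disjoint_interior hne := absurd (Subsingleton.elim _ _) hne

lemma IsConvexPartition.comp_equiv {ι' : Type*} (hC : IsConvexPartition C) (e : ι' ≃ ι) :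
    IsConvexPartition (C ∘ e) where
  isClosed j := hC.isClosed (e j)
  convex j := hC.convex (e j)
  iUnion_eq_univ := (e.surjective.iUnion_comp C).trans hC.iUnion_eq_univ
  disjoint_interior hne := hC.disjoint_interior (e.injective.ne hne)

lemma IsConvexPartition.sigma {τ : ι → Type*} (hC : IsConvexPartition C)
    {D : ∀ v, τ v → Set E} (hD : ∀ v, IsConvexPartition (D v)) :
    IsConvexPartition fun q : Σ v, τ v => C q.1 ∩ D q.1 q.2 where
  isClosed q := (hC.isClosed q.1).inter ((hD q.1).isClosed q.2)
  convex q := (hC.convex q.1).inter ((hD q.1).convex q.2)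
  iUnion_eq_univ := by
    simp only [Set.iUnion_sigma, ← Set.inter_iUnion, (hD _).iUnion_eq_univ, Set.inter_univ,
      hC.iUnion_eq_univ]
  disjoint_interior := by
    rintro ⟨v, t⟩ ⟨v', t'⟩ hne
    by_cases hv : v = v'
    · subst hv
      have hne' : t ≠ t' := mt (congrArg (Sigma.mk v)) hne
      exact ((hD v).disjoint_interior hne').mono (interior_mono Set.inter_subset_right)
        (interior_mono Set.inter_subset_right)
    · exact (hC.disjoint_interior hv).mono (interior_mono Set.inter_subset_left)
        (interior_mono Set.inter_subset_left)

end ConvexPartition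

lemma maxCell_comp_of_surjective {Ω ι ι' : Type*} (g : ι → Ω → ℝ) {e : ι' → ι}
    (he : e.Surjective) (j : ι') : maxCell (g ∘ e) j = maxCell g (e j) :=
  Set.ext fun x => (he.forall (p := fun l => g l x ≤ g (e j) x)).symm

section MaxCellAffine

variable {E ι : Type*} [NormedAddCommGroup E] [NormedSpace ℝ E] [FiniteDimensional ℝ E]

lemma isConvexPartition_maxCell [Finite ι] [Nonempty ι] {g : ι → E →ᵃ[ℝ] ℝ}
    (hg : g.Injective) : IsConvexPartition (maxCell fun j => ⇑(g j)) where
  isClosed j := by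
    rw [maxCell, Set.ofPred_forall]
    exact isClosed_iInter fun l => isClosed_le (g l).continuous_of_finiteDimensional
      (g j).continuous_of_finiteDimensional
  convex j := by
    have hhalf (l) : {x | g l x ≤ g j x} = (g j - g l) ⁻¹' Set.Ici 0 :=
      Set.ext fun x => by simp
    simp only [maxCell, Set.ofPred_forall, hhalf]
    exact convex_iInter fun l => (convex_Ici 0).affine_preimage _
  iUnion_eq_univ := Set.eq_univ_of_forall fun x =>
    Set.mem_iUnion.2 (Finite.exists_max fun l => g l x)
  disjoint_interior {j j'} hne := by
    rw [Set.disjoint_iff_inter_eq_empty, ← interior_inter, ← Set.not_nonempty_iff_eq_empty]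
    refine fun hnonempty => hg.ne hne (AffineMap.ext_on
      (isOpen_interior.affineSpan_eq_top hnonempty) fun x hx => ?_)
    obtain ⟨hj, hj'⟩ := interior_subset hx
    exact le_antisymm (hj' j) (hj j')

end MaxCellAffine

section AffineForm

lemma finrank_affineMap {K V : Type*} [Field K] [AddCommGroup V] [Module K V]
    [FiniteDimensional K V] : Module.finrank K (V →ᵃ[K] K) = Module.finrank K V + 1 := by
  rw [(AffineMap.toConstProdLinearMap (k := K) (V1 := V) (V2 := K) K).finrank_eq,
    Module.finrank_prod, Module.finrank_self, add_comm]
  exact congrArg (· + 1) Subspace.dual_finrank_eq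

variable (E : Type*) [AddCommGroup E] [Module ℝ E] [FiniteDimensional ℝ E]

/-- A linear coordinate system on the space of affine forms on `E`. -/
noncomputable def affineForm : (Fin (Module.finrank ℝ E + 1) → ℝ) ≃ₗ[ℝ] (E →ᵃ[ℝ] ℝ) :=
  have : FiniteDimensional ℝ (E →ᵃ[ℝ] ℝ) :=
    .of_finrank_pos (by rw [finrank_affineMap]; exact Nat.succ_pos _)
  LinearEquiv.ofFinrankEq _ _ (by rw [Module.finrank_fin_fun, finrank_affineMap])

variable {E}

lemma continuous_affineForm_apply (x : E) : Continuous fun v => affineForm E v x :=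
  LinearMap.continuous_of_finiteDimensional
    { toFun := fun v => affineForm E v x
      map_add' := fun v w => by rw [map_add, AffineMap.coe_add, Pi.add_apply]
      map_smul' := fun c v => by
        rw [map_smul, AffineMap.coe_smul, Pi.smul_apply, RingHom.id_apply] }

end AffineForm

lemma ae_affineMap_ne {E : Type*} [AddCommGroup E] [Module ℝ E] [MeasurableSpace E] {μ : Measure E}
    (hμ : ∀ H : AffineSubspace ℝ E, H ≠ ⊤ → μ H = 0) {f g : E →ᵃ[ℝ] ℝ} (hfg : f ≠ g) :
    ∀ᵐ x ∂μ, f x ≠ g x := by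
  have hspan : affineSpan ℝ {x | f x = g x} ≠ ⊤ :=
    fun htop => hfg (AffineMap.ext_on htop fun _ => id)
  simpa only [ae_iff, not_not] using measure_mono_null (subset_affineSpan ℝ _) (hμ _ hspan)

/-! ### Equipartitions -/

section Equipartition

open ProbabilityTheory

lemma exists_isConvexPartition_measure_eq_div {E κ : Type*} [NormedAddCommGroup E]
    [NormedSpace ℝ E] [FiniteDimensional ℝ E] [MeasurableSpace E] [BorelSpace E] [Fintype κ]
    {μ : κ → Measure E} [∀ i, IsProbabilityMeasure (μ i)] (hκ : Fintype.card κ ≤ Module.finrank ℝ E)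
    (hμ : ∀ i, ∀ H : AffineSubspace ℝ E, H ≠ ⊤ → μ i H = 0) {p : ℕ} (hp : p.Prime) :
    ∃ (V : Type) (_ : Fintype V) (w : V → ℕ) (A : V → Set E), IsConvexPartition A ∧
      (∀ v, 0 < w v ∧ w v < p) ∧ ∑ v, w v = p ∧ ∀ i v, μ i (A v) = w v / p := by
  classical
  have : Fact p.Prime := ⟨hp⟩
  obtain ⟨f, hne, hmass⟩ := exists_measureReal_maxCell_eq (p := p) (μ := μ)
    (F := fun v => ⇑(affineForm E v)) (Nat.lt_succ_of_le hκ)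
    (fun v => (affineForm E v).continuous_of_finiteDimensional.measurable)
    continuous_affineForm_apply
    fun i _ _ hvw => ae_affineMap_ne (hμ i) ((affineForm E).injective.ne hvw)
  have hinj : Function.Injective fun v : Set.range f => affineForm E v :=
    (affineForm E).injective.comp Subtype.val_injective
  refine ⟨Set.range f, Set.fintypeRange f, fun v => Fintype.card {l // f l = v}, _,
    isConvexPartition_maxCell hinj, ?_, ?_, ?_⟩
  · rintro ⟨_, j, rfl⟩
    obtain ⟨l, hl⟩ := hne j
    have hlt := Fintype.card_subtype_lt (p := fun l => f l = f j) hl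
    rw [ZMod.card] at hlt
    exact ⟨Fintype.card_pos_iff.2 ⟨j, rfl⟩, hlt⟩
  · have hfiber := Fintype.card_congr (Equiv.sigmaFiberEquiv (Set.rangeFactorization f))
    rw [Fintype.card_sigma, ZMod.card] at hfiber
    simpa only [Subtype.ext_iff, Set.rangeFactorization_coe] using hfiber
  · rintro i ⟨_, j, rfl⟩
    have hcell := maxCell_comp_of_surjective (fun v : Set.range f => ⇑(affineForm E v))
      Set.rangeFactorization_surjective j
    have hreal := hmass i j
    rw [← ENNReal.ofReal_natCast, ← ENNReal.ofReal_natCast, ← ENNReal.ofReal_div_of_pos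
      (Nat.cast_pos.2 hp.pos), ← hreal, ofReal_measureReal]
    exact congrArg (μ i) hcell.symm

lemma exists_isConvexPartition_measure_eq_of_cond {E κ V : Type*} [AddCommGroup E] [Module ℝ E]
    [TopologicalSpace E] [MeasurableSpace E] [OpensMeasurableSpace E] {μ : κ → Measure E}
    [∀ i, IsFiniteMeasure (μ i)] [Fintype V] {w : V → ℕ} {A : V → Set E} {m : ℕ}
    (hA : IsConvexPartition A) (hw : ∀ v, 0 < w v) (hm : 0 < m)
    (hμA : ∀ i v, μ i (A v) = w v / (∑ v, w v : ℕ))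
    (hC : ∀ v, ∃ C : Fin (w v * m) → Set E, IsConvexPartition C ∧
      ∀ i j, (μ i)[|A v] (C j) = 1 / (w v * m : ℕ)) :
    ∃ C : Fin ((∑ v, w v) * m) → Set E, IsConvexPartition C ∧
      ∀ i j, μ i (C j) = 1 / ((∑ v, w v) * m : ℕ) := by
  choose C hC hμC using hC
  have hcard : Fintype.card (Σ v, Fin (w v * m)) = (∑ v, w v) * m := by
    simp only [Fintype.card_sigma, Fintype.card_fin, Finset.sum_mul]
  refine ⟨_, (hA.sigma hC).comp_equiv (Fintype.equivFinOfCardEq hcard).symm, fun i j => ?_⟩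
  rw [Function.comp_apply]
  obtain ⟨v, t⟩ := (Fintype.equivFinOfCardEq hcard).symm j
  have hw0 : (w v : ENNReal) ≠ 0 := Nat.cast_ne_zero.2 (hw v).ne'
  have hm0 : (m : ENNReal) ≠ 0 := Nat.cast_ne_zero.2 hm.ne'
  calc μ i (A v ∩ C v t)
      = 1 / (w v * m : ℕ) * (w v / (∑ v, w v : ℕ)) := by
        rw [← cond_mul_eq_inter (hA.isClosed v).measurableSet, hμC, hμA]
    _ = 1 / ((∑ v, w v) * m : ℕ) := by
        simp only [div_eq_mul_inv, one_mul, Nat.cast_mul,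
          ENNReal.mul_inv (.inr (ENNReal.natCast_ne_top m)) (.inr hm0)]
        rw [mul_comm (w v : ENNReal)⁻¹, mul_assoc,
          ENNReal.inv_mul_cancel_left hw0 (ENNReal.natCast_ne_top _), mul_comm]

end Equipartition

end ConvexEquipartition

open ConvexEquipartition in
theorem convex_equipartition_general {E κ : Type*} [NormedAddCommGroup E] [NormedSpace ℝ E]
    [FiniteDimensional ℝ E] [MeasurableSpace E] [BorelSpace E] [Fintype κ]
    (hκ : Fintype.card κ ≤ Module.finrank ℝ E) {k : ℕ} (hk : 0 < k) (μ : κ → Measure E)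
    (hprob : ∀ i, IsProbabilityMeasure (μ i))
    (hμ : ∀ i, ∀ H : AffineSubspace ℝ E, H ≠ ⊤ → μ i H = 0) :
    ∃ C : Fin k → Set E, IsConvexPartition C ∧ ∀ i j, μ i (C j) = 1 / k := by
  induction k using Nat.strong_induction_on generalizing μ with
  | _ k ih =>
  obtain rfl | hk1 := eq_or_ne k 1
  · exact ⟨_, isConvexPartition_univ, fun i _ => by simp⟩
  have hp : k.minFac.Prime := Nat.minFac_prime hk1
  obtain ⟨V, _, w, A, hA, hw, hsum, hμA⟩ := exists_isConvexPartition_measure_eq_div hκ hμ hp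
  obtain ⟨m, hm⟩ : ∑ v, w v ∣ k := hsum ▸ k.minFac_dvd
  have hm0 : 0 < m := Nat.pos_of_mul_pos_left (hm ▸ hk)
  rw [hm]
  rw [← hsum] at hw hμA
  refine exists_isConvexPartition_measure_eq_of_cond hA (fun v => (hw v).1) hm0 hμA fun v => ?_
  have hA0 (i) : μ i (A v) ≠ 0 := by
    simp [hμA, (hw v).1.ne']
  exact ih (w v * m) (hm ▸ Nat.mul_lt_mul_of_pos_right (hw v).2 hm0)
    (Nat.mul_pos (hw v).1 hm0) _ (fun i => ProbabilityTheory.cond_isProbabilityMeasure (hA0 i))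
    fun i H hH => ProbabilityTheory.cond_absolutelyContinuous (hμ i H hH)

/-- Equipartition of `d` measures in `ℝ^d` into `k` convex parts. -/
theorem convex_equipartition (k d : ℕ) (hk : 0 < k) (hd : 0 < d)
    (μ : Fin d → Measure (EuclideanSpace ℝ (Fin d)))
    (hprob : ∀ i, IsProbabilityMeasure (μ i))
    (hac : ∀ i, μ i ≪ volume) :
    ∃ C : Fin k → Set (EuclideanSpace ℝ (Fin d)),
      (∀ j, IsClosed (C j)) ∧ (∀ j, Convex ℝ (C j)) ∧
      (⋃ j, C j) = Set.univ ∧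
      (∀ j j', j ≠ j' → Disjoint (interior (C j)) (interior (C j'))) ∧
      ∀ i j, μ i (C j) = 1 / k := by
  obtain ⟨C, hC, hμC⟩ := convex_equipartition_general (by simp) hk μ hprob
    fun i H hH => hac i (Measure.addHaar_affineSubspace volume H hH)
  exact ⟨C, hC.isClosed, hC.convex, hC.iUnion_eq_univ, fun _ _ => hC.disjoint_interior, hμC⟩
end

section
/- Let d ≥ 2, n ≥ 2, k ≥ 2, and c ≥ d be integers with m = n(c − d) + d. Then for every m finite measures μ₁, …, μ_m on ℝ^d, each positive and absolutely continuous with respect to the Lebesgue measure, there exists a convex partition of ℝ^d into n parts (C₁, …, C_n) such that each part C_j satisfies μ_i(C_j) > 0 for at least c of the indices i ∈ {1, …, m}. -/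
open MeasureTheory

/-!
The partition is built by cutting off one half-space at a time.

A measure `μ ≠ 0` that vanishes on hyperplanes has a support that is contained in no hyperplane, so
the convex hull of the support has an interior point `x`. Every closed half-space containing `x` has
positive measure, as otherwise the support would lie on one side of a hyperplane through `x`.
Choosing such a point for each measure, it suffices to cut a finite set of `a + b + d` points by a
hyperplane that leaves at least `a + d` points in one closed half-space and at least `b + d` in the
other: with `a = c - d` and `b = (n - 1) (c - d)` the first half-space becomes a part, and one
recurses on the restrictions of the measures to the second.

To find the hyperplane, regard the points as functionals on the `(d + 1)`-dimensional space of
affine functions. A generic linear function is minimised over the points at a single vertex;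
restricting to the affine functions that vanish there lowers the dimension by one and drops at least
one point, while some function is still positive at all points that remain. In dimension two, what
is left is to choose an order statistic of the ratios of two functions.
-/

open Finset Module

section OrderStatistic

lemma exists_card_filter_lt_le_and_card_filter_gt_le {ι α : Type*} [LinearOrder α] [Nonempty α]
    (r : ι → α) {S : Finset ι} {a b : ℕ} (hS : #S ≤ a + b + 1) :
    ∃ t, #{i ∈ S | r i < t} ≤ a ∧ #{i ∈ S | t < r i} ≤ b := by
  rcases S.eq_empty_or_nonempty with rfl | hne
  · exact ⟨Classical.arbitrary α, by simp⟩
  obtain ⟨top, htop, hle_top⟩ := S.exists_max_image r hne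
  have htop_mem : top ∈ {i ∈ S | #{j ∈ S | r i < r j} ≤ b} := by
    simp [htop, filter_false_of_mem fun j hj ↦ (hle_top j hj).not_gt]
  obtain ⟨i₀, hi₀, hmin⟩ := exists_min_image _ r ⟨top, htop_mem⟩
  refine ⟨r i₀, ?_, (mem_filter.1 hi₀).2⟩
  rcases ({i ∈ S | r i < r i₀} : Finset ι).eq_empty_or_nonempty with hempty | hbelow
  · simp [hempty]
  obtain ⟨j, hj, hmax⟩ := exists_max_image _ r hbelow
  obtain ⟨hjS, hji₀⟩ := mem_filter.1 hj
  have habove : b < #{i ∈ S | r j < r i} := by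
    by_contra! hcard
    exact (hmin j (mem_filter.2 ⟨hjS, hcard⟩)).not_gt hji₀
  have hbelow_le : #{i ∈ S | r i < r i₀} ≤ #{i ∈ S | ¬ r j < r i} :=
    card_le_card fun i hi ↦ mem_filter.2 ⟨(mem_filter.1 hi).1, (hmax i hi).not_gt⟩
  have hsplit := card_filter_add_card_filter_not (s := S) (fun i ↦ r j < r i)
  omega

end OrderStatistic

section LinearCut

variable {ι K F : Type*} [Field K] [LinearOrder K] [IsStrictOrderedRing K]
  [AddCommGroup F] [Module K F]

lemma exists_forall_apply_eq_zero_imp_eq_zero {κ : Type*} [Finite κ] (φ : κ → Dual K F) :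
    ∃ x, ∀ k, φ k x = 0 → φ k = 0 := by
  obtain ⟨x, hx⟩ := Dual.exists_forall_ne_zero_of_forall_exists
    (fun k : {k // φ k ≠ 0} ↦ φ k) fun k ↦ DFunLike.ne_iff.1 k.2
  exact ⟨x, fun k hk ↦ by_contra fun hne ↦ hx ⟨k, hne⟩ hk⟩

lemma exists_apply_eq_zero_and_pos_of_notMem_span (v : ι → Dual K F) {S : Finset ι}
    (hne : S.Nonempty) {e : F} (he : ∀ i ∈ S, 0 < v i e) :
    ∃ i₀ ∈ S, ∃ g, v i₀ g = 0 ∧ ∀ i ∈ S, v i ∉ Submodule.span K {v i₀} → 0 < v i g := by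
  -- For generic `h`, the ratios `v i h / v i e` agree only for proportional functionals.
  obtain ⟨h, hgeneric⟩ := exists_forall_apply_eq_zero_imp_eq_zero
    fun p : S × S ↦ (v p.2 e) • v p.1 - (v p.1 e) • v p.2
  obtain ⟨i₀, hi₀, hmin⟩ := S.exists_min_image (fun i ↦ v i h / v i e) hne
  have hpos₀ := he i₀ hi₀
  refine ⟨i₀, hi₀, v i₀ e • h - v i₀ h • e, by simp [mul_comm], fun i hi hspan ↦ ?_⟩
  have hle : v i₀ h * v i e ≤ v i h * v i₀ e := (div_le_div_iff₀ hpos₀ (he i hi)).1 (hmin i hi)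
  have hne : v i₀ e * v i h - v i e * v i₀ h ≠ 0 := by
    intro hzero
    have hprop : v i₀ e • v i = v i e • v i₀ :=
      sub_eq_zero.1 (hgeneric (⟨i, hi⟩, ⟨i₀, hi₀⟩) (by simpa using hzero))
    refine hspan (Submodule.mem_span_singleton.2 ⟨(v i₀ e)⁻¹ * v i e, ?_⟩)
    rw [mul_smul, ← hprop, inv_smul_smul₀ hpos₀.ne']
  calc 0 < v i₀ e * v i h - v i e * v i₀ h := lt_of_le_of_ne (by linarith) hne.symm
    _ = v i (v i₀ e • h - v i₀ h • e) := by simp [mul_comm]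

variable [FiniteDimensional K F]

lemma exists_ne_zero_card_neg_le_card_pos_le_of_card_le (hF : 2 ≤ finrank K F)
    (v : ι → Dual K F) {S : Finset ι} {e : F} (he : ∀ i ∈ S, 0 < v i e) {a b : ℕ}
    (hS : #S ≤ a + b + 1) :
    ∃ f ≠ 0, #{i ∈ S | v i f < 0} ≤ a ∧ #{i ∈ S | 0 < v i f} ≤ b := by
  obtain ⟨h, hh⟩ : ∃ h, ∀ c : K, c ≠ 0 → c • h ∉ Submodule.span K {e} :=
    Submodule.exists_of_finrank_lt _ <|
      (finrank_span_le_card {e}).trans_lt (by simpa using Nat.lt_of_succ_le hF)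
  obtain ⟨t, hlt, hgt⟩ :=
    exists_card_filter_lt_le_and_card_filter_gt_le (fun i ↦ v i h / v i e) hS
  refine ⟨h - t • e, fun hzero ↦ ?_, ?_, ?_⟩
  · refine hh 1 one_ne_zero (Submodule.mem_span_singleton.2 ⟨t, ?_⟩)
    rw [one_smul, sub_eq_zero.1 hzero]
  · have hneg_iff (i) (hi : i ∈ S) : v i (h - t • e) < 0 ↔ v i h / v i e < t := by
      simp [div_lt_iff₀ (he i hi)]
    rwa [filter_congr hneg_iff]
  · have hpos_iff (i) (hi : i ∈ S) : 0 < v i (h - t • e) ↔ t < v i h / v i e := by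
      simp [lt_div_iff₀ (he i hi)]
    rwa [filter_congr hpos_iff]

lemma exists_ne_zero_card_neg_le_card_pos_le (hF : 2 ≤ finrank K F)
    (v : ι → Dual K F) {S : Finset ι} {e : F} (he : ∀ i ∈ S, 0 < v i e) {a b : ℕ}
    (hS : #S < a + b + finrank K F) :
    ∃ f ≠ 0, #{i ∈ S | v i f < 0} ≤ a ∧ #{i ∈ S | 0 < v i f} ≤ b := by
  induction hD : finrank K F generalizing F S with
  | zero => omega
  | succ D ih =>
    by_cases hsmall : #S ≤ a + b + 1
    · exact exists_ne_zero_card_neg_le_card_pos_le_of_card_le hF v he hsmall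
    obtain ⟨i₀, hi₀, g, hg₀, hg⟩ := exists_apply_eq_zero_and_pos_of_notMem_span v
      (card_pos.1 (by omega)) he
    have hv₀ : v i₀ ≠ 0 := fun h ↦ by simpa [h] using he i₀ hi₀
    let w (i : ι) : Dual K (v i₀).ker := (v i).domRestrict _
    have hw_ne (i : ι) (hwi : w i ≠ 0) : v i ∉ Submodule.span K {v i₀} := by
      intro hspan
      obtain ⟨c, hc⟩ := Submodule.mem_span_singleton.1 hspan
      refine hwi (LinearMap.ext fun f ↦ ?_)
      simp [w, ← hc]
    classical
    have hfilter : ({i ∈ S | w i ≠ 0} : Finset ι) ⊂ S := by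
      refine filter_ssubset.2 ⟨i₀, hi₀, not_not.2 (LinearMap.ext fun f ↦ ?_)⟩
      simp [w]
    have hfinrank : finrank K (v i₀).ker = D := by
      have := Module.Dual.finrank_ker_add_one_of_ne_zero hv₀
      omega
    obtain ⟨f, hf, hneg, hpos⟩ := ih (by omega) w (S := {i ∈ S | w i ≠ 0}) (e := ⟨g, hg₀⟩)
      (fun i hi ↦ hg i (mem_filter.1 hi).1 (hw_ne i (mem_filter.1 hi).2))
      (by have := card_lt_card hfilter; omega) hfinrank
    have hmem {i : ι} (hi : i ∈ S) (hif : v i f ≠ 0) : i ∈ ({i ∈ S | w i ≠ 0} : Finset ι) :=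
      mem_filter.2 ⟨hi, fun h ↦ hif (LinearMap.congr_fun h f)⟩
    refine ⟨f, by simpa using hf, (card_le_card fun i hi ↦ ?_).trans hneg,
      (card_le_card fun i hi ↦ ?_).trans hpos⟩
    · obtain ⟨hiS, hif⟩ := mem_filter.1 hi
      exact mem_filter.2 ⟨hmem hiS hif.ne, hif⟩
    · obtain ⟨hiS, hif⟩ := mem_filter.1 hi
      exact mem_filter.2 ⟨hmem hiS hif.ne', hif⟩

end LinearCut

section AffineCut

variable {ι K E : Type*} [Field K] [LinearOrder K] [IsStrictOrderedRing K]
  [AddCommGroup E] [Module K E] [FiniteDimensional K E] [Nontrivial E]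

lemma exists_hyperplane_le_card_filter_le_and_le_card_filter_ge (x : ι → E) {S : Finset ι} {a b : ℕ}
    (hS : #S = a + b + finrank K E) :
    ∃ l : Dual K E, l ≠ 0 ∧ ∃ t : K,
      a + finrank K E ≤ #{i ∈ S | l (x i) ≤ t} ∧ b + finrank K E ≤ #{i ∈ S | t ≤ l (x i)} := by
  have hE : 0 < finrank K E := finrank_pos
  have hF : finrank K (Dual K E × K) = finrank K E + 1 := by simp
  let v (i : ι) : Dual K (Dual K E × K) := (Dual.eval K E (x i)).coprod (-LinearMap.id)
  have hv (i : ι) (l : Dual K E) (t : K) : v i (l, t) = l (x i) - t := by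
    simp [v, sub_eq_add_neg]
  obtain ⟨⟨l, t⟩, hne, hneg, hpos⟩ := exists_ne_zero_card_neg_le_card_pos_le (by omega) v
    (S := S) (e := (0, -1)) (fun i _ ↦ by simp [hv]) (a := a) (b := b) (by omega)
  simp only [hv, sub_neg, sub_pos] at hneg hpos
  have hsplit_neg := card_filter_add_card_filter_not (s := S) (fun i ↦ l (x i) < t)
  have hsplit_pos := card_filter_add_card_filter_not (s := S) (fun i ↦ t < l (x i))
  simp only [not_lt] at hsplit_neg hsplit_pos
  refine ⟨l, ?_, t, by omega, by omega⟩
  rintro rfl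
  have ht : t ≠ 0 := by simpa using hne
  rcases ht.lt_or_gt with ht | ht
  · have : #S ≤ b := by simpa [ht] using hpos
    omega
  · have : #S ≤ a := by simpa [ht] using hneg
    omega

end AffineCut

section ConvexPartition

variable {E : Type*} [AddCommGroup E] [Module ℝ E] [TopologicalSpace E]

/-- A convex partition of `E`: closed convex sets covering `E` with pairwise disjoint interiors.
The parts may share boundary points. -/
structure IsConvexPartition {ι : Type*} (C : ι → Set E) : Prop where
  isClosed (j : ι) : IsClosed (C j)
  convex (j : ι) : Convex ℝ (C j)
  iUnion_eq : ⋃ j, C j = Set.univ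
  disjoint_interior : Pairwise fun j j' ↦ Disjoint (interior (C j)) (interior (C j'))

lemma IsConvexPartition.const_univ {ι : Type*} [Unique ι] :
    IsConvexPartition fun _ : ι ↦ (Set.univ : Set E) where
  isClosed _ := isClosed_univ
  convex _ := convex_univ
  iUnion_eq := Set.iUnion_const _
  disjoint_interior := Subsingleton.pairwise

variable [IsTopologicalAddGroup E] [ContinuousSMul ℝ E]

lemma interior_halfSpace_le {l : StrongDual ℝ E} (hl : l ≠ 0) (t : ℝ) :
    interior {y | l y ≤ t} = {y | l y < t} := by
  have h := (l.isOpenMap_of_ne_zero hl).preimage_interior_eq_interior_preimage l.continuous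
    (Set.Iic t)
  rw [interior_Iic] at h
  exact h.symm

lemma interior_halfSpace_ge {l : StrongDual ℝ E} (hl : l ≠ 0) (t : ℝ) :
    interior {y | t ≤ l y} = {y | t < l y} := by
  have h := (l.isOpenMap_of_ne_zero hl).preimage_interior_eq_interior_preimage l.continuous
    (Set.Ici t)
  rw [interior_Ici] at h
  exact h.symm

lemma IsConvexPartition.cons_halfSpace {n : ℕ} {C : Fin n → Set E} (hC : IsConvexPartition C)
    {l : StrongDual ℝ E} (hl : l ≠ 0) (t : ℝ) :
    IsConvexPartition (Fin.cons {y | l y ≤ t} fun j ↦ C j ∩ {y | t ≤ l y} :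
      Fin (n + 1) → Set E) where
  isClosed := Fin.cases (isClosed_le l.continuous continuous_const) fun j ↦
    (hC.isClosed j).inter (isClosed_le continuous_const l.continuous)
  convex := Fin.cases (convex_halfSpace_le l.toLinearMap.isLinear t) fun j ↦
    (hC.convex j).inter (convex_halfSpace_ge l.toLinearMap.isLinear t)
  iUnion_eq := by
    refine Set.eq_univ_of_forall fun y ↦ Set.mem_iUnion.2 ?_
    rcases le_total (l y) t with hle | hge
    · exact ⟨0, hle⟩
    · obtain ⟨j, hj⟩ := Set.mem_iUnion.1 (hC.iUnion_eq ▸ Set.mem_univ y)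
      exact ⟨j.succ, hj, hge⟩
  disjoint_interior := by
    have hhalf (j : Fin n) :
        Disjoint (interior {y | l y ≤ t}) (interior (C j ∩ {y | t ≤ l y})) := by
      refine Disjoint.mono_right (interior_mono Set.inter_subset_right) ?_
      rw [interior_halfSpace_le hl, interior_halfSpace_ge hl]
      exact Set.disjoint_left.2 fun y (hlt : l y < t) hgt ↦ hlt.not_gt hgt
    refine Fin.cases (Fin.cases (absurd rfl) fun j _ ↦ hhalf j) fun j ↦
      Fin.cases (fun _ ↦ (hhalf j).symm) fun j' hne ↦ ?_
    exact (hC.disjoint_interior (ne_of_apply_ne Fin.succ hne)).mono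
      (interior_mono Set.inter_subset_left) (interior_mono Set.inter_subset_left)

end ConvexPartition

section Depth

variable {E : Type*} [AddCommGroup E] [Module ℝ E] [MeasurableSpace E] {μ ν : Measure E}

/-- The measure vanishes on every proper affine subspace. Measures that are
absolutely continuous with respect to Lebesgue measure have this property. -/
def ChargesNoHyperplane (μ : Measure E) : Prop :=
  ∀ A : AffineSubspace ℝ E, A ≠ ⊤ → μ A = 0

lemma ChargesNoHyperplane.mono_ac (hν : ChargesNoHyperplane ν) (h : μ ≪ ν) :
    ChargesNoHyperplane μ :=
  fun A hA ↦ h (hν A hA)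

variable [TopologicalSpace E]

/-- `x` has positive half-space (Tukey) depth: every closed half-space with `x` on its boundary has
positive measure. Such points stand in for the measures when a cutting hyperplane is chosen. -/
def HasPositiveDepth (μ : Measure E) (x : E) : Prop :=
  ∀ l : StrongDual ℝ E, l ≠ 0 → 0 < μ {y | l y ≤ l x}

namespace HasPositiveDepth

variable {x : E} {l : StrongDual ℝ E} {t : ℝ}

lemma measure_le_pos (hx : HasPositiveDepth μ x) (hl : l ≠ 0) (hxt : l x ≤ t) :
    0 < μ {y | l y ≤ t} :=
  (hx l hl).trans_le (measure_mono fun _ hy ↦ le_trans hy hxt)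

lemma measure_ge_pos (hx : HasPositiveDepth μ x) (hl : l ≠ 0) (hxt : t ≤ l x) :
    0 < μ {y | t ≤ l y} := by
  simpa using hx.measure_le_pos (neg_ne_zero.2 hl) (t := -t) (by simpa using hxt)

end HasPositiveDepth

lemma hasPositiveDepth_of_mem_interior_convexHull_support [IsTopologicalAddGroup E]
    [ContinuousSMul ℝ E] {x : E} (hx : x ∈ interior (convexHull ℝ μ.support)) :
    HasPositiveDepth μ x := by
  intro l hl
  by_contra! hnull
  have hsupport : μ.support ⊆ {y | l x ≤ l y} := by
    refine Measure.support_subset_of_isClosed (isClosed_le continuous_const l.continuous) ?_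
    refine measure_mono_null (fun y hy ↦ ?_) (nonpos_iff_eq_zero.1 hnull)
    exact (not_le.1 hy : l y < l x).le
  have hhull : convexHull ℝ μ.support ⊆ {y | l x ≤ l y} :=
    convexHull_min hsupport (convex_halfSpace_ge l.toLinearMap.isLinear _)
  have hlt : x ∈ {y | l x < l y} := interior_halfSpace_ge hl (l x) ▸ interior_mono hhull hx
  exact lt_irrefl (l x) hlt

lemma ChargesNoHyperplane.affineSpan_support_eq_top [HereditarilyLindelofSpace E]
    (hμ : ChargesNoHyperplane μ) (hμ₀ : μ ≠ 0) :
    affineSpan ℝ μ.support = ⊤ := by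
  by_contra hspan
  have hsupport : μ μ.support = 0 := measure_mono_null (subset_affineSpan ℝ _) (hμ _ hspan)
  have hcompl : μ μ.supportᶜ = 0 := Measure.measure_compl_support
  refine hμ₀ (Measure.measure_univ_eq_zero.1 ?_)
  rw [← Set.union_compl_self μ.support]
  exact measure_union_null hsupport hcompl

end Depth

section FiniteDimensional

variable {E : Type*} [NormedAddCommGroup E] [NormedSpace ℝ E] [FiniteDimensional ℝ E]
  [MeasurableSpace E] {μ : Measure E}

lemma ChargesNoHyperplane.of_isAddHaarMeasure [BorelSpace E] [μ.IsAddHaarMeasure] :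
    ChargesNoHyperplane μ :=
  μ.addHaar_affineSubspace

lemma ChargesNoHyperplane.exists_hasPositiveDepth (hμ : ChargesNoHyperplane μ) (hμ₀ : μ ≠ 0) :
    ∃ x, HasPositiveDepth μ x := by
  obtain ⟨x, hx⟩ :=
    interior_convexHull_nonempty_iff_affineSpan_eq_top.2 (hμ.affineSpan_support_eq_top hμ₀)
  exact ⟨x, hasPositiveDepth_of_mem_interior_convexHull_support hx⟩

end FiniteDimensional

section Partition

variable {ι E : Type*} [Finite ι] [NormedAddCommGroup E] [NormedSpace ℝ E] [FiniteDimensional ℝ E]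
  [Nontrivial E] [MeasurableSpace E] {μ : ι → Measure E}

lemma exists_hyperplane_le_ncard_measure_halfSpace_pos
    (hμ : ∀ i, ChargesNoHyperplane (μ i)) {a b : ℕ}
    (hcard : {i | 0 < μ i Set.univ}.ncard = a + b + finrank ℝ E) :
    ∃ l : StrongDual ℝ E, l ≠ 0 ∧ ∃ t : ℝ,
      a + finrank ℝ E ≤ {i | 0 < μ i {y | l y ≤ t}}.ncard ∧
      b + finrank ℝ E ≤ {i | 0 < μ i {y | t ≤ l y}}.ncard := by
  have hdeep (i : ι) (hi : 0 < μ i Set.univ) : ∃ x, HasPositiveDepth (μ i) x :=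
    (hμ i).exists_hasPositiveDepth (Measure.measure_univ_pos.1 hi)
  choose! x hx using hdeep
  have hfin := Set.toFinite {i | 0 < μ i Set.univ}
  rw [Set.ncard_eq_toFinset_card _ hfin] at hcard
  obtain ⟨l, hl, t, hle, hge⟩ := exists_hyperplane_le_card_filter_le_and_le_card_filter_ge x hcard
  have hL : l.toContinuousLinearMap ≠ 0 := by simpa using hl
  have hcount {p : ι → Prop} [DecidablePred p] {H : Set E}
      (hpos : ∀ i, HasPositiveDepth (μ i) (x i) → p i → 0 < μ i H) :
      #{i ∈ hfin.toFinset | p i} ≤ {i | 0 < μ i H}.ncard := by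
    rw [← Set.ncard_coe_finset]
    refine Set.ncard_le_ncard fun i hi ↦ ?_
    obtain ⟨hi, hpi⟩ := mem_filter.1 hi
    exact hpos i (hx i (hfin.mem_toFinset.1 hi)) hpi
  exact ⟨l.toContinuousLinearMap, hL, t,
    hle.trans (hcount fun i hxi hit ↦ hxi.measure_le_pos hL hit),
    hge.trans (hcount fun i hxi hit ↦ hxi.measure_ge_pos hL hit)⟩

theorem convex_partition_positive_measures_general [BorelSpace E] {n r : ℕ} (hn : 1 ≤ n)
    (hμ : ∀ i, ChargesNoHyperplane (μ i))
    (hcard : n * r + finrank ℝ E ≤ {i | 0 < μ i Set.univ}.ncard) :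
    ∃ C : Fin n → Set E, IsConvexPartition C ∧
      ∀ j, r + finrank ℝ E ≤ {i | 0 < μ i (C j)}.ncard := by
  induction n, hn using Nat.le_induction generalizing μ with
  | base => exact ⟨_, IsConvexPartition.const_univ, fun _ ↦ by simpa using hcard⟩
  | succ n _ ih =>
    rw [add_one_mul] at hcard
    obtain ⟨l, hl, t, hle, hge⟩ := exists_hyperplane_le_ncard_measure_halfSpace_pos hμ (a := r)
      (b := {i | 0 < μ i Set.univ}.ncard - r - finrank ℝ E) (by omega)
    have hclosed : IsClosed {y | t ≤ l y} := isClosed_le continuous_const l.continuous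
    obtain ⟨C, hC, hCpos⟩ := ih (μ := fun i ↦ (μ i).restrict {y | t ≤ l y})
      (fun i ↦ (hμ i).mono_ac Measure.restrict_le_self.absolutelyContinuous)
      (by simp only [Measure.restrict_apply_univ]; omega)
    refine ⟨_, hC.cons_halfSpace hl t, Fin.cases hle fun j ↦ ?_⟩
    simpa only [Fin.cons_succ, Measure.restrict_apply' hclosed.measurableSet] using hCpos j

end Partition

/-- Blagojević–Palić–Soberón–Ziegler: convex partitions where each part sees
at least `c` of the `m = n(c-d) + d` measures. -/
theorem convex_partition_positive_measures (d n k c : ℕ)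
    (hd : 2 ≤ d) (hn : 2 ≤ n) (hk : 2 ≤ k) (hc : d ≤ c)
    (μ : Fin (n * (c - d) + d) → Measure (EuclideanSpace ℝ (Fin d)))
    (hfin : ∀ i, IsFiniteMeasure (μ i))
    (hpos : ∀ i, 0 < μ i Set.univ)
    (hac : ∀ i, μ i ≪ volume) :
    ∃ C : Fin n → Set (EuclideanSpace ℝ (Fin d)),
      (∀ j, IsClosed (C j)) ∧ (∀ j, Convex ℝ (C j)) ∧
      (⋃ j, C j) = Set.univ ∧
      (∀ j j', j ≠ j' → Disjoint (interior (C j)) (interior (C j'))) ∧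
      ∀ j, c ≤ {i | 0 < μ i (C j)}.ncard := by
  have : NeZero d := ⟨by omega⟩
  obtain ⟨C, hC, hCpos⟩ := convex_partition_positive_measures_general (r := c - d)
    (by omega : 1 ≤ n) (fun i ↦ ChargesNoHyperplane.of_isAddHaarMeasure.mono_ac (hac i))
    (by simp [hpos])
  refine ⟨C, hC.isClosed, hC.convex, hC.iUnion_eq, fun _ _ h ↦ hC.disjoint_interior h, ?_⟩
  simpa [Nat.sub_add_cancel hc] using hCpos
end

section
/- Let d be a positive integer and let μ be a finite measure on ℝ^d, absolutely continuous with respect to the Lebesgue measure. Then there exists a convex partition of ℝ^d into 2^d parts C₁, …, C_{2^d} with μ(C_j) = μ(ℝ^d)/2^d for every j, such that no affine hyperplane intersects the interiors of all 2^d parts; that is, for every nonzero v ∈ ℝ^d and α ∈ ℝ there exists a part C_j whose interior is disjoint from {x : ⟨x, v⟩ = α}. -/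
open MeasureTheory
open scoped RealInnerProductSpace

/-!
The cells come from a binary tree of affine functions `z p`, indexed by words `p` of length less
than `d`: a point goes to `p ++ [true]` or `p ++ [false]` according to the sign of `z p`. The tree
is built so that every affine function `g` is `c + ∑ a p * z p` along each path from the root to a
leaf, with the same coefficients on all paths. If `0 ≤ c`, walking down the tree according to the
signs of the `a p` reaches a leaf on which `g` is nonnegative; if `c ≤ 0`, it reaches one on which
`g` is nonpositive. So the hyperplane `g = 0` misses the interior of some leaf.

To add a level, all leaves of the tree must be bisected by functions `x_k + c + ∑ a p * z p` with
common coefficients. These are found from the leaves upwards: `z p` is positive on one side of the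
node `p` and negative on the other, so by the intermediate value theorem some multiple of `z p`
makes the medians on the two sides agree, and the common value again behaves like a median.
-/

namespace YaoYao

open Filter Topology Set

section Median

variable {Ω : Type*} [MeasurableSpace Ω] {ν : Measure Ω} {f g z : Ω → ℝ}

/-- The least median of `f` under a finite nonzero measure `ν`; it is the least number satisfying
the defining inequality by `lowerMedian_le_iff`. -/
noncomputable def lowerMedian (ν : Measure Ω) (f : Ω → ℝ) : ℝ :=
  sInf {c | ν.real univ ≤ 2 * ν.real {x | f x ≤ c}}

variable [IsFiniteMeasure ν]

theorem tendsto_measureReal_of_ae_eventually_mem_iff {ι : Type*} {L : Filter ι}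
    [L.IsCountablyGenerated] {s : ι → Set Ω} {t : Set Ω} (hs : ∀ i, MeasurableSet (s i))
    (ht : MeasurableSet t) (h : ∀ᵐ x ∂ν, ∀ᶠ i in L, x ∈ s i ↔ x ∈ t) :
    Tendsto (fun i => ν.real (s i)) L (𝓝 (ν.real t)) :=
  (ENNReal.tendsto_toReal (measure_ne_top ν t)).comp
    (tendsto_measure_of_ae_tendsto_indicator_of_isFiniteMeasure L ht hs h)

theorem tendsto_measureReal_le_atTop (hf : Measurable f) :
    Tendsto (fun c => ν.real {x | f x ≤ c}) atTop (𝓝 (ν.real univ)) :=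
  tendsto_measureReal_of_ae_eventually_mem_iff
    (fun _ => measurableSet_le hf measurable_const) .univ <| ae_of_all _ fun x => by
      filter_upwards [eventually_ge_atTop (f x)] with c hc
      simpa using hc

theorem tendsto_measureReal_le_atBot (hf : Measurable f) :
    Tendsto (fun c => ν.real {x | f x ≤ c}) atBot (𝓝 0) := by
  rw [← measureReal_empty (μ := ν)]
  refine tendsto_measureReal_of_ae_eventually_mem_iff
    (fun _ => measurableSet_le hf measurable_const) .empty <| ae_of_all _ fun x => ?_
  filter_upwards [eventually_lt_atBot (f x)] with c hc
  simpa using hc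

theorem tendsto_measureReal_le_nhdsGT (hf : Measurable f) (c : ℝ) :
    Tendsto (fun c' => ν.real {x | f x ≤ c'}) (𝓝[>] c) (𝓝 (ν.real {x | f x ≤ c})) := by
  refine tendsto_measureReal_of_ae_eventually_mem_iff
    (fun _ => measurableSet_le hf measurable_const) (measurableSet_le hf measurable_const) <|
    ae_of_all _ fun x => ?_
  rcases le_or_gt (f x) c with hx | hx
  · filter_upwards [self_mem_nhdsWithin] with c' (hc' : c < c')
    simp [hx, hx.trans hc'.le]
  · filter_upwards [(eventually_lt_nhds hx).filter_mono nhdsWithin_le_nhds] with c' hc'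
    simp [hx.not_ge, hc'.not_ge]

theorem tendsto_measureReal_le_nhdsLT (hf : Measurable f) (c : ℝ) :
    Tendsto (fun c' => ν.real {x | f x ≤ c'}) (𝓝[<] c) (𝓝 (ν.real {x | f x < c})) := by
  refine tendsto_measureReal_of_ae_eventually_mem_iff
    (fun _ => measurableSet_le hf measurable_const) (measurableSet_lt hf measurable_const) <|
    ae_of_all _ fun x => ?_
  rcases lt_or_ge (f x) c with hx | hx
  · filter_upwards [(eventually_gt_nhds hx).filter_mono nhdsWithin_le_nhds] with c' hc'
    simp [hx, hc'.le]
  · filter_upwards [self_mem_nhdsWithin] with c' (hc' : c' < c)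
    simp [hx.not_gt, (hc'.trans_le hx).not_ge]

variable [NeZero ν]

theorem lowerMedian_le_iff (hf : Measurable f) {c : ℝ} :
    lowerMedian ν f ≤ c ↔ ν.real univ ≤ 2 * ν.real {x | f x ≤ c} := by
  have mass_pos : 0 < ν.real univ := measureReal_univ_pos
  have mono : Monotone fun c => ν.real {x | f x ≤ c} := fun _ _ hcd =>
    measureReal_mono fun _ hx => le_trans hx hcd
  have nonempty : {c | ν.real univ ≤ 2 * ν.real {x | f x ≤ c}}.Nonempty := by
    obtain ⟨b, hb⟩ := ((tendsto_measureReal_le_atTop (ν := ν) hf).eventually_const_lt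
      (half_lt_self mass_pos)).exists
    exact ⟨b, by rw [mem_ofPred_eq]; linarith⟩
  have bddBelow : BddBelow {c | ν.real univ ≤ 2 * ν.real {x | f x ≤ c}} := by
    obtain ⟨b, hb⟩ := ((tendsto_measureReal_le_atBot (ν := ν) hf).eventually_lt_const
      (half_pos mass_pos)).exists
    refine ⟨b, fun c hc => le_of_not_gt fun hcb => ?_⟩
    rw [mem_ofPred_eq] at hc
    linarith [mono hcb.le]
  refine ⟨fun h => ?_, fun h => csInf_le bddBelow h⟩
  refine ge_of_tendsto ((tendsto_measureReal_le_nhdsGT hf c).const_mul 2) ?_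
  filter_upwards [self_mem_nhdsWithin] with c' hc'
  obtain ⟨b, hb, hbc⟩ := exists_lt_of_csInf_lt nonempty (h.trans_lt hc')
  rw [mem_ofPred_eq] at hb
  linarith [mono hbc.le]

theorem lowerMedian_le_add (hf : Measurable f) (hg : Measurable g) {δ : ℝ}
    (h : ∀ᵐ x ∂ν, f x ≤ g x + δ) : lowerMedian ν f ≤ lowerMedian ν g + δ := by
  rw [lowerMedian_le_iff hf]
  refine ((lowerMedian_le_iff hg).1 le_rfl).trans ?_
  gcongr 2 * ?_
  refine ENNReal.toReal_mono (measure_ne_top _ _) (measure_mono_ae ?_)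
  filter_upwards [h] with x hx (hgx : g x ≤ _)
  exact hx.trans (by gcongr)

theorem tendsto_lowerMedian_add_smul_atTop (hf : Measurable f) (hz : Measurable z)
    (hz_pos : ∀ᵐ x ∂ν, 0 < z x) :
    Tendsto (fun a : ℝ => lowerMedian ν (f + a • z)) atTop atTop := by
  refine tendsto_atTop.2 fun K => ?_
  have vanish : Tendsto (fun a : ℝ => ν.real {x | (f + a • z) x ≤ K}) atTop (𝓝 0) := by
    rw [← measureReal_empty (μ := ν)]
    refine tendsto_measureReal_of_ae_eventually_mem_iff
      (fun a => measurableSet_le (hf.add (hz.const_smul a)) measurable_const) .empty ?_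
    filter_upwards [hz_pos] with x hx
    filter_upwards [(tendsto_atTop_add_const_left _ (f x)
      (tendsto_id.atTop_mul_const hx)).eventually_gt_atTop K] with a ha
    simpa using ha
  filter_upwards [vanish.eventually_lt_const (half_pos (measureReal_univ_pos (μ := ν)))] with a ha
  refine le_of_not_ge fun h => ?_
  linarith [(lowerMedian_le_iff (hf.add (hz.const_smul a))).1 h]

theorem tendsto_lowerMedian_add_smul_atBot (hf : Measurable f) (hz : Measurable z)
    (hz_pos : ∀ᵐ x ∂ν, 0 < z x) :
    Tendsto (fun a : ℝ => lowerMedian ν (f + a • z)) atBot atBot := by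
  refine tendsto_atBot.2 fun K => ?_
  have exhaust : Tendsto (fun a : ℝ => ν.real {x | (f + a • z) x ≤ K}) atBot
      (𝓝 (ν.real univ)) := by
    refine tendsto_measureReal_of_ae_eventually_mem_iff
      (fun a => measurableSet_le (hf.add (hz.const_smul a)) measurable_const) .univ ?_
    filter_upwards [hz_pos] with x hx
    filter_upwards [(tendsto_atBot_add_const_left _ (f x)
      (tendsto_id.atBot_mul_const hx)).eventually_le_atBot K] with a ha
    simpa using ha
  filter_upwards [exhaust.eventually_const_lt (half_lt_self measureReal_univ_pos)] with a ha
  exact (lowerMedian_le_iff (hf.add (hz.const_smul a))).2 (by linarith)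

end Median

section Bisection

variable {Ω : Type*} [MeasurableSpace Ω] {ν : Measure Ω} {h : Ω → ℝ}

/-- Zero is a median of `h` under `ν`: neither open side of the zero set of `h` carries more than
half of the mass. -/
def Bisects (ν : Measure Ω) (h : Ω → ℝ) : Prop :=
  2 * ν.real {x | 0 < h x} ≤ ν.real univ ∧ 2 * ν.real {x | h x < 0} ≤ ν.real univ

theorem Bisects.of_mul_pos {w : Ω → ℝ} (hw : ∀ x, 0 < w x)
    (H : Bisects ν fun x => w x * h x) : Bisects ν h := by
  simpa only [Bisects, ← smul_eq_mul, smul_pos_iff_of_pos_left (hw _),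
    smul_neg_iff_of_pos_left (hw _)] using H

theorem Bisects.neg (H : Bisects ν h) : Bisects ν (-h) := by
  simpa [Bisects] using And.symm H

variable [IsFiniteMeasure ν]

theorem bisects_of_lowerMedian_eq_zero [NeZero ν] (hh : Measurable h)
    (h0 : lowerMedian ν h = 0) : Bisects ν h := by
  constructor
  · have compl : ν.real {x | 0 < h x} = ν.real univ - ν.real {x | h x ≤ 0} := by
      rw [← measureReal_compl (measurableSet_le hh measurable_const)]
      simp [compl_ofPred]
    linarith [(lowerMedian_le_iff hh).1 h0.le]
  · refine le_of_tendsto ((tendsto_measureReal_le_nhdsLT hh 0).const_mul 2) ?_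
    filter_upwards [self_mem_nhdsWithin] with c hc
    exact (not_le.1 (mt (lowerMedian_le_iff hh).2 (by rw [h0]; exact not_le.2 hc))).le

theorem Bisects.measureReal_setOf_nonneg (H : Bisects ν h) (hh : Measurable h)
    (h0 : ν {x | h x = 0} = 0) : ν.real {x | 0 ≤ h x} = ν.real univ / 2 := by
  have nonneg_eq_pos : ν.real {x | 0 ≤ h x} = ν.real {x | 0 < h x} := by
    refine measureReal_congr ?_
    filter_upwards [measure_eq_zero_iff_ae_notMem.1 h0] with x (hx : ¬h x = 0)
    exact propext ⟨fun h => lt_of_le_of_ne h (Ne.symm hx), le_of_lt⟩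
  have compl : ν.real {x | h x < 0} = ν.real univ - ν.real {x | 0 ≤ h x} := by
    rw [← measureReal_compl (measurableSet_le measurable_const hh)]
    simp [compl_ofPred]
  linarith [H.1, H.2]

end Bisection

section LocationFunctional

variable {Ω : Type*} [MeasurableSpace Ω] {F G : Filter Ω} {Φ Ψ : (Ω → ℝ) → ℝ} {f g z : Ω → ℝ}
  {C : ℝ}

/-- A functional on measurable functions that behaves like a median along `F`: it is monotone,
is 1-Lipschitz for uniform perturbations, and adding a large multiple of a function positive along
`F` makes it arbitrarily large. -/
structure IsLocationFunctional (F : Filter Ω) (Φ : (Ω → ℝ) → ℝ) : Prop where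
  le_add : ∀ {f g : Ω → ℝ}, Measurable f → Measurable g → ∀ {δ : ℝ},
    (∀ᶠ x in F, f x ≤ g x + δ) → Φ f ≤ Φ g + δ
  tendsto_atTop : ∀ {f z : Ω → ℝ}, Measurable f → Measurable z → (∀ᶠ x in F, 0 < z x) →
    Tendsto (fun a : ℝ => Φ (f + a • z)) atTop atTop
  tendsto_atBot : ∀ {f z : Ω → ℝ}, Measurable f → Measurable z → (∀ᶠ x in F, 0 < z x) →
    Tendsto (fun a : ℝ => Φ (f + a • z)) atBot atBot

theorem isLocationFunctional_lowerMedian (ν : Measure Ω) [IsFiniteMeasure ν] [NeZero ν] :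
    IsLocationFunctional (ae ν) (lowerMedian ν) where
  le_add := lowerMedian_le_add
  tendsto_atTop := tendsto_lowerMedian_add_smul_atTop
  tendsto_atBot := tendsto_lowerMedian_add_smul_atBot

namespace IsLocationFunctional

theorem filter_mono (hΦ : IsLocationFunctional F Φ) (hFG : F ≤ G) :
    IsLocationFunctional G Φ where
  le_add hf hg _ h := hΦ.le_add hf hg (h.filter_mono hFG)
  tendsto_atTop hf hz h := hΦ.tendsto_atTop hf hz (h.filter_mono hFG)
  tendsto_atBot hf hz h := hΦ.tendsto_atBot hf hz (h.filter_mono hFG)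

theorem continuous_add_smul (hΦ : IsLocationFunctional F Φ) (hf : Measurable f)
    (hz : Measurable z) (hC : ∀ x, |z x| ≤ C) : Continuous fun a : ℝ => Φ (f + a • z) := by
  refine (LipschitzWith.of_le_add_mul C.toNNReal fun a b => ?_).continuous
  refine hΦ.le_add (hf.add (hz.const_smul a)) (hf.add (hz.const_smul b)) (.of_forall fun x => ?_)
  have bound : (a - b) * z x ≤ C.toNNReal * |a - b| := calc
    (a - b) * z x ≤ |a - b| * |z x| := (le_abs_self _).trans (abs_mul _ _).le
    _ ≤ C.toNNReal * |a - b| := by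
      rw [mul_comm]
      gcongr
      exact (hC x).trans (Real.le_coe_toNNReal C)
  simp only [Pi.add_apply, Pi.smul_apply, smul_eq_mul, Real.dist_eq]
  linarith

theorem exists_add_smul_eq (hΦ : IsLocationFunctional F Φ) (hf : Measurable f)
    (hz : Measurable z) (hC : ∀ x, |z x| ≤ C) (hz_pos : ∀ᶠ x in F, 0 < z x) (c : ℝ) :
    ∃ a : ℝ, Φ (f + a • z) = c :=
  (hΦ.continuous_add_smul hf hz hC).surjective (hΦ.tendsto_atTop hf hz hz_pos)
    (hΦ.tendsto_atBot hf hz hz_pos) c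

theorem exists_add_smul_eq_add_smul (hΦ : IsLocationFunctional F Φ)
    (hΨ : IsLocationFunctional G Ψ) (hf : Measurable f) (hz : Measurable z)
    (hC : ∀ x, |z x| ≤ C) (hzF : ∀ᶠ x in F, 0 < z x) (hzG : ∀ᶠ x in G, z x < 0) :
    ∃ a : ℝ, Φ (f + a • z) = Ψ (f + a • z) := by
  have hzG' : ∀ᶠ x in G, 0 < (-z) x := hzG.mono fun x hx => neg_pos.2 hx
  have Ψ_atTop : Tendsto (fun a : ℝ => Ψ (f + a • z)) atTop atBot := by
    simpa [Function.comp_def] using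
      (hΨ.tendsto_atBot hf hz.neg hzG').comp tendsto_neg_atTop_atBot
  have Ψ_atBot : Tendsto (fun a : ℝ => Ψ (f + a • z)) atBot atTop := by
    simpa [Function.comp_def] using
      (hΨ.tendsto_atTop hf hz.neg hzG').comp tendsto_neg_atBot_atTop
  have surj : Function.Surjective fun a : ℝ => Φ (f + a • z) - Ψ (f + a • z) := by
    simp only [sub_eq_add_neg]
    exact ((hΦ.continuous_add_smul hf hz hC).add (hΨ.continuous_add_smul hf hz hC).neg).surjective
      ((hΦ.tendsto_atTop hf hz hzF).atTop_add_atTop (tendsto_neg_atBot_atTop.comp Ψ_atTop))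
      ((hΦ.tendsto_atBot hf hz hzF).atBot_add_atBot (tendsto_neg_atTop_atBot.comp Ψ_atBot))
  obtain ⟨a, ha⟩ := surj 0
  exact ⟨a, sub_eq_zero.1 ha⟩

theorem le_add_of_smul_le (hΦ : IsLocationFunctional F Φ) (hf : Measurable f) (hg : Measurable g)
    (hz : Measurable z) {δ a b : ℝ} (hfg : ∀ᶠ x in F, f x ≤ g x + δ)
    (hab : ∀ᶠ x in F, a * z x ≤ b * z x) : Φ (f + a • z) ≤ Φ (g + b • z) + δ := by
  refine hΦ.le_add (hf.add (hz.const_smul a)) (hg.add (hz.const_smul b)) ?_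
  filter_upwards [hfg, hab] with x hx hx'
  simp only [Pi.add_apply, Pi.smul_apply, smul_eq_mul]
  linarith

theorem min_le_max_add (hΦ : IsLocationFunctional F Φ) (hΨ : IsLocationFunctional G Ψ)
    (hf : Measurable f) (hg : Measurable g) (hz : Measurable z) (hzF : ∀ᶠ x in F, 0 < z x)
    (hzG : ∀ᶠ x in G, z x < 0) {δ : ℝ} (hfg : ∀ᶠ x in F ⊔ G, f x ≤ g x + δ) (a b : ℝ) :
    min (Φ (f + a • z)) (Ψ (f + a • z)) ≤ max (Φ (g + b • z)) (Ψ (g + b • z)) + δ := by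
  obtain ⟨hfgF, hfgG⟩ := eventually_sup.1 hfg
  rcases le_total a b with hab | hba
  · calc
      _ ≤ Φ (f + a • z) := min_le_left _ _
      _ ≤ Φ (g + b • z) + δ := hΦ.le_add_of_smul_le hf hg hz hfgF
        (hzF.mono fun x hx => mul_le_mul_of_nonneg_right hab hx.le)
      _ ≤ _ := by gcongr; exact le_max_left _ _
  · calc
      _ ≤ Ψ (f + a • z) := min_le_right _ _
      _ ≤ Ψ (g + b • z) + δ := hΨ.le_add_of_smul_le hf hg hz hfgG
        (hzG.mono fun x hx => mul_le_mul_of_nonpos_right hba hx.le)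
      _ ≤ _ := by gcongr; exact le_max_right _ _

theorem sup_of_forall_exists (hΦ : IsLocationFunctional F Φ) (hΨ : IsLocationFunctional G Ψ)
    (hz : Measurable z) (hzF : ∀ᶠ x in F, 0 < z x) (hzG : ∀ᶠ x in G, z x < 0)
    {Θ : (Ω → ℝ) → ℝ}
    (hΘ : ∀ f, Measurable f → ∃ a : ℝ, Φ (f + a • z) = Θ f ∧ Ψ (f + a • z) = Θ f) :
    IsLocationFunctional (F ⊔ G) Θ where
  le_add {f g} hf hg δ hfg := by
    obtain ⟨a, hΦa, hΨa⟩ := hΘ f hf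
    obtain ⟨b, hΦb, hΨb⟩ := hΘ g hg
    simpa only [hΦa, hΨa, hΦb, hΨb, min_self, max_self] using
      hΦ.min_le_max_add hΨ hf hg hz hzF hzG hfg a b
  tendsto_atTop {f w} hf hw hw_pos := by
    obtain ⟨hwF, hwG⟩ := eventually_sup.1 hw_pos
    refine tendsto_atTop_mono (fun t => ?_)
      (tendsto_inf_atTop _ (hΦ.tendsto_atTop hf hw hwF) (hΨ.tendsto_atTop hf hw hwG))
    have hft : Measurable (f + t • w) := hf.add (hw.const_smul t)
    obtain ⟨b, hΦb, hΨb⟩ := hΘ _ hft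
    simpa only [zero_smul, add_zero, hΦb, hΨb, max_self] using
      hΦ.min_le_max_add hΨ hft hft hz hzF hzG (δ := 0) (by simp) 0 b
  tendsto_atBot {f w} hf hw hw_pos := by
    obtain ⟨hwF, hwG⟩ := eventually_sup.1 hw_pos
    refine tendsto_atBot_mono (fun t => ?_)
      (tendsto_sup_atBot _ (hΦ.tendsto_atBot hf hw hwF) (hΨ.tendsto_atBot hf hw hwG))
    have hft : Measurable (f + t • w) := hf.add (hw.const_smul t)
    obtain ⟨a, hΦa, hΨa⟩ := hΘ _ hft
    simpa only [zero_smul, add_zero, hΦa, hΨa, min_self] using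
      hΦ.min_le_max_add hΨ hft hft hz hzF hzG (δ := 0) (by simp) a 0

theorem exists_sup (hΦ : IsLocationFunctional F Φ) (hΨ : IsLocationFunctional G Ψ)
    (hz : Measurable z) (hC : ∀ x, |z x| ≤ C) (hzF : ∀ᶠ x in F, 0 < z x)
    (hzG : ∀ᶠ x in G, z x < 0) :
    ∃ Θ, IsLocationFunctional (F ⊔ G) Θ ∧
      ∀ f, Measurable f → ∃ a : ℝ, Φ (f + a • z) = Θ f ∧ Ψ (f + a • z) = Θ f := by
  choose! α hα using fun f (hf : Measurable f) =>
    hΦ.exists_add_smul_eq_add_smul hΨ hf hz hC hzF hzG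
  have hΘ : ∀ f, Measurable f → ∃ a : ℝ,
      Φ (f + a • z) = Φ (f + α f • z) ∧ Ψ (f + a • z) = Φ (f + α f • z) :=
    fun f hf => ⟨α f, rfl, (hα f hf).symm⟩
  exact ⟨fun f => Φ (f + α f • z), hΦ.sup_of_forall_exists hΨ hz hzF hzG hΘ, hΘ⟩

end IsLocationFunctional

end LocationFunctional

section PathSum

variable {α M : Type*} [AddCommMonoid M]

/-- The sum of the weights `w` over all proper prefixes of the word `e`, that is, over the nodes
of the tree strictly above `e`. -/
def pathSum (w : List α → M) (e : List α) : M :=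
  ∑ i ∈ Finset.range e.length, w (e.take i)

@[simp]
theorem pathSum_nil (w : List α → M) : pathSum w [] = 0 := rfl

theorem pathSum_cons (w : List α → M) (b : α) (e : List α) :
    pathSum w (b :: e) = w [] + pathSum (fun p => w (b :: p)) e := by
  simp only [pathSum, List.length_cons, Finset.sum_range_succ', List.take_succ_cons,
    List.take_zero, add_comm]

theorem pathSum_congr {w w' : List α → M} {e : List α}
    (h : ∀ p : List α, p.length < e.length → w p = w' p) : pathSum w e = pathSum w' e :=
  Finset.sum_congr rfl fun i hi => h _ <| by simpa using Finset.mem_range.1 hi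

theorem pathSum_concat (w : List α → M) (e : List α) (b : α) :
    pathSum w (e ++ [b]) = pathSum w e + w e := by
  rw [pathSum, List.length_append, List.length_singleton, Finset.sum_range_succ,
    List.take_left' rfl]
  congr 1
  refine Finset.sum_congr rfl fun i hi => ?_
  rw [List.take_append_of_le_length (Finset.mem_range.1 hi).le]

theorem map_pathSum {N F : Type*} [AddCommMonoid N] [FunLike F M N] [AddMonoidHomClass F M N]
    (φ : F) (w : List α → M) (e : List α) :
    φ (pathSum w e) = pathSum (fun p => φ (w p)) e :=
  map_sum φ _ _

theorem pathSum_apply {Ω : Type*} (w : List α → Ω → M) (e : List α) (x : Ω) :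
    pathSum w e x = pathSum (fun p => w p x) e :=
  map_pathSum (Pi.evalAddMonoidHom (fun _ => M) x) w e

end PathSum

section Tree

/-- The sign attached to a branch of the binary tree. -/
def boolSign (b : Bool) : ℝ := if b then 1 else -1

theorem boolSign_ne_zero (b : Bool) : boolSign b ≠ 0 := by
  cases b <;> simp [boolSign]

theorem boolSign_not (b : Bool) : boolSign (!b) = -boolSign b := by
  cases b <;> simp [boolSign]

variable {Ω : Type*} [MeasurableSpace Ω] {μ : List Bool → Measure Ω} {z : List Bool → Ω → ℝ}
  {f : Ω → ℝ} {m : ℕ} {C : ℝ}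

/-- At every node `p` of the binary tree of depth `m`, the function `z p` is almost surely positive
for the measures on the leaves below `p ++ [true]`, and almost surely negative for those below
`p ++ [false]`. -/
def SeparatesLeaves (m : ℕ) (μ : List Bool → Measure Ω) (z : List Bool → Ω → ℝ) : Prop :=
  ∀ e : List Bool, e.length = m → ∀ p b, p ++ [b] <+: e → ∀ᵐ x ∂μ e, 0 < boolSign b * z p x

theorem SeparatesLeaves.cons (h : SeparatesLeaves (m + 1) μ z) (b : Bool) :
    SeparatesLeaves m (fun e => μ (b :: e)) fun p => z (b :: p) := fun e he p b' hp =>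
  h (b :: e) (by simp [he]) (b :: p) b' (by simpa using hp)

theorem SeparatesLeaves.eventually_root (h : SeparatesLeaves (m + 1) μ z) (b : Bool) :
    ∀ᶠ x in ⨆ (e : List Bool) (_ : e.length = m), ae (μ (b :: e)), 0 < boolSign b * z [] x := by
  simp only [eventually_iSup]
  exact fun e he => h (b :: e) (by simp [he]) [] b (by simp)

theorem SeparatesLeaves.exists_lowerMedian_eq [∀ e, IsFiniteMeasure (μ e)]
    (hμ : ∀ e : List Bool, e.length = m → NeZero (μ e)) (hz : ∀ p, Measurable (z p))
    (hC : ∀ p : List Bool, p.length < m → ∀ x, |z p x| ≤ C) (h : SeparatesLeaves m μ z) :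
    ∃ Φ, IsLocationFunctional (⨆ (e : List Bool) (_ : e.length = m), ae (μ e)) Φ ∧
      ∀ f, Measurable f → ∃ a : List Bool → ℝ, ∀ e : List Bool, e.length = m →
        lowerMedian (μ e) (f + pathSum (fun p => a p • z p) e) = Φ f := by
  induction m generalizing μ z with
  | zero =>
    have := hμ [] rfl
    refine ⟨lowerMedian (μ []), (isLocationFunctional_lowerMedian _).filter_mono <|
      le_iSup₂_of_le [] rfl le_rfl, fun f _ => ⟨0, fun e he => ?_⟩⟩
    rw [List.length_eq_zero_iff.1 he, pathSum_nil, add_zero]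
  | succ m ih =>
    have child (b : Bool) := ih (μ := fun e => μ (b :: e)) (z := fun p => z (b :: p))
      (fun e he => hμ (b :: e) (by simp [he])) (fun p => hz _)
      (fun p hp => hC (b :: p) (by simpa using hp)) (h.cons b)
    choose Φ hΦ a ha using child
    obtain ⟨Θ, hΘ, hΘ_eq⟩ := (hΦ true).exists_sup (hΦ false) (hz []) (hC [] (by simp))
      (by simpa [boolSign] using h.eventually_root true)
      (by simpa [boolSign] using h.eventually_root false)
    refine ⟨Θ, hΘ.filter_mono (sup_le ?_ ?_), fun f hf => ?_⟩
    · exact iSup₂_le fun e he => le_iSup₂_of_le (true :: e) (by simp [he]) le_rfl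
    · exact iSup₂_le fun e he => le_iSup₂_of_le (false :: e) (by simp [he]) le_rfl
    obtain ⟨t, ht_true, ht_false⟩ := hΘ_eq f hf
    have hft : Measurable (f + t • z []) := hf.add ((hz []).const_smul t)
    refine ⟨fun p => p.casesOn t fun b q => a b _ hft q, fun e he => ?_⟩
    obtain ⟨b, e, rfl⟩ := List.exists_cons_of_length_eq_add_one he
    rw [pathSum_cons, ← add_assoc, ha b _ hft e (by simpa using he)]
    cases b <;> assumption

theorem SeparatesLeaves.mul_of_pos {w : Ω → ℝ} (hw : ∀ x, 0 < w x) (h : SeparatesLeaves m μ z) :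
    SeparatesLeaves m μ fun p => w * z p := fun e he p b hp => by
  filter_upwards [h e he p b hp] with x hx
  simpa [mul_left_comm _ (w x)] using mul_pos (hw x) hx

theorem exists_pos_forall_abs_mul_le_one {ι : Type*} (s : Finset ι) {z : ι → Ω → ℝ}
    (hz : ∀ i, Measurable (z i)) :
    ∃ w : Ω → ℝ, Measurable w ∧ (∀ x, 0 < w x) ∧ (∀ x, |w x| ≤ 1) ∧
      ∀ i ∈ s, ∀ x, |(w * z i) x| ≤ 1 := by
  have one_le (x : Ω) : 1 ≤ 1 + ∑ i ∈ s, |z i x| :=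
    le_add_of_nonneg_right (Finset.sum_nonneg fun _ _ => abs_nonneg _)
  have pos (x : Ω) : 0 < 1 + ∑ i ∈ s, |z i x| := one_pos.trans_le (one_le x)
  refine ⟨fun x => (1 + ∑ i ∈ s, |z i x|)⁻¹, by fun_prop, fun x => inv_pos.2 (pos x),
    fun x => ?_, fun i hi x => ?_⟩
  · rw [abs_of_pos (inv_pos.2 (pos x))]
    exact inv_le_one_of_one_le₀ (one_le x)
  · rw [Pi.mul_apply, abs_mul, abs_of_pos (inv_pos.2 (pos x)),
      inv_mul_le_one₀ (pos x)]
    have := Finset.single_le_sum (f := fun i => |z i x|) (fun _ _ => abs_nonneg _) hi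
    linarith

/-- A positive weight does not change what is bisected; it is chosen to make the `z p` bounded, and
the constant function `1` becomes the weight itself. -/
theorem SeparatesLeaves.exists_forall_bisects [∀ e, IsFiniteMeasure (μ e)]
    (hμ : ∀ e : List Bool, e.length = m → NeZero (μ e)) (hz : ∀ p, Measurable (z p))
    (h : SeparatesLeaves m μ z) (hf : Measurable f) :
    ∃ (c : ℝ) (a : List Bool → ℝ), ∀ e : List Bool, e.length = m →
      Bisects (μ e) fun x => f x + c + pathSum (fun p => a p * z p x) e := by
  obtain ⟨w, hw, hw_pos, hw_one, hwz⟩ :=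
    exists_pos_forall_abs_mul_le_one (List.finite_length_lt Bool m).toFinset hz
  obtain ⟨Φ, hΦ, hΦ_eq⟩ := SeparatesLeaves.exists_lowerMedian_eq hμ (fun p => hw.mul (hz p))
    (fun p hp => hwz p (by simpa using hp)) (h.mul_of_pos hw_pos)
  obtain ⟨c, hc⟩ := hΦ.exists_add_smul_eq (hw.mul hf) hw hw_one (.of_forall hw_pos) 0
  obtain ⟨a, ha⟩ := hΦ_eq _ ((hw.mul hf).add (hw.const_smul c))
  refine ⟨c, a, fun e he => .of_mul_pos hw_pos ?_⟩
  have := hμ e he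
  have weighted : (fun x => w x * (f x + c + pathSum (fun p => a p * z p x) e)) =
      w * f + c • w + pathSum (fun p => a p • (w * z p)) e := by
    ext x
    have := map_pathSum (AddMonoidHom.mulLeft (w x)) (fun p => a p * z p x) e
    simp only [AddMonoidHom.coe_mulLeft] at this
    simp only [Pi.add_apply, Pi.mul_apply, Pi.smul_apply, pathSum_apply,
      smul_eq_mul, mul_add, this, mul_comm c, mul_left_comm (w x)]
  rw [weighted]
  refine bisects_of_lowerMedian_eq_zero ?_ ((ha e he).trans hc)
  unfold pathSum
  fun_prop

end Tree

section Cell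

variable {E : Type*} [AddCommGroup E] [Module ℝ E] {z z' : List Bool → E →ᵃ[ℝ] ℝ}
  {e e' : List Bool} {k : ℕ}

/-- The points sent to the node `e` of the binary tree when at each node `p` the points with
`0 ≤ z p x` may go to `p ++ [true]` and those with `z p x ≤ 0` to `p ++ [false]`. -/
def cell (z : List Bool → E →ᵃ[ℝ] ℝ) (e : List Bool) : Set E :=
  {x | ∀ p b, p ++ [b] <+: e → 0 ≤ boolSign b * z p x}

@[simp]
theorem cell_nil (z : List Bool → E →ᵃ[ℝ] ℝ) : cell z [] = univ := by
  simp [cell]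

theorem cell_concat (z : List Bool → E →ᵃ[ℝ] ℝ) (e : List Bool) (b : Bool) :
    cell z (e ++ [b]) = {x | 0 ≤ boolSign b * z e x} ∩ cell z e := by
  ext x
  simp [cell, List.prefix_concat_iff, or_imp, forall_and]

theorem length_lt_of_concat_prefix {α : Type*} {p e : List α} {b : α} (h : p ++ [b] <+: e) :
    p.length < e.length :=
  Nat.lt_of_succ_le (by simpa using h.length_le)

theorem exists_eq_concat_of_length_eq_add_one {α : Type*} {e : List α} (he : e.length = k + 1) :
    ∃ (e' : List α) (b : α), e'.length = k ∧ e = e' ++ [b] := by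
  obtain rfl | ⟨e', b, rfl⟩ := List.eq_nil_or_concat' e
  · simp at he
  · exact ⟨e', b, by simpa using he, rfl⟩

theorem cell_congr (h : ∀ p : List Bool, p.length < e.length → z p = z' p) :
    cell z e = cell z' e := by
  ext x
  simp only [cell, mem_ofPred_eq]
  exact forall₃_congr fun p b hp => by rw [h p (length_lt_of_concat_prefix hp)]

theorem cell_eq_iInter (z : List Bool → E →ᵃ[ℝ] ℝ) (e : List Bool) :
    cell z e = ⋂ (p) (b) (_ : p ++ [b] <+: e), (boolSign b • z p) ⁻¹' Ici 0 := by
  ext x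
  simp [cell]

theorem convex_cell (z : List Bool → E →ᵃ[ℝ] ℝ) (e : List Bool) : Convex ℝ (cell z e) := by
  rw [cell_eq_iInter]
  exact convex_iInter fun p => convex_iInter₂ fun b _ => (convex_Ici 0).affine_preimage _

theorem exists_mem_cell (z : List Bool → E →ᵃ[ℝ] ℝ) (k : ℕ) (x : E) :
    ∃ e : List Bool, e.length = k ∧ x ∈ cell z e := by
  induction k with
  | zero => exact ⟨[], rfl, by simp⟩
  | succ k ih =>
    obtain ⟨e, he, hx⟩ := ih
    obtain ⟨b, hb⟩ : ∃ b, 0 ≤ boolSign b * z e x := by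
      rcases le_total 0 (z e x) with h | h
      · exact ⟨true, by simpa [boolSign] using h⟩
      · exact ⟨false, by simpa [boolSign] using h⟩
    exact ⟨e ++ [b], by simp [he], by rw [cell_concat]; exact ⟨hb, hx⟩⟩

theorem exists_forall_mem_cell_pathSum_nonneg (z : List Bool → E →ᵃ[ℝ] ℝ) (k : ℕ)
    (a : List Bool → ℝ) :
    ∃ e : List Bool, e.length = k ∧ ∀ x ∈ cell z e, 0 ≤ pathSum (fun p => a p * z p x) e := by
  induction k with
  | zero => exact ⟨[], rfl, fun x _ => le_rfl⟩
  | succ k ih =>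
    obtain ⟨e, he, hsum⟩ := ih
    obtain ⟨b, hb⟩ : ∃ b, ∀ x, 0 ≤ boolSign b * z e x → 0 ≤ a e * z e x := by
      rcases le_total 0 (a e) with ha | ha
      · exact ⟨true, fun x hx => mul_nonneg ha (by simpa [boolSign] using hx)⟩
      · exact ⟨false, fun x hx => mul_nonneg_of_nonpos_of_nonpos ha
          (by simpa [boolSign] using hx)⟩
    refine ⟨e ++ [b], by simp [he], fun x hx => ?_⟩
    rw [cell_concat] at hx
    rw [pathSum_concat]
    exact add_nonneg (hsum x hx.2) (hb x hx.1)

theorem exists_concat_prefix_of_ne (h : e.length = e'.length) (hne : e ≠ e') :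
    ∃ p b, p ++ [b] <+: e ∧ p ++ [!b] <+: e' := by
  induction e generalizing e' with
  | nil => exact absurd (List.length_eq_zero_iff.1 h.symm).symm hne
  | cons b e ih =>
    obtain ⟨b', e', rfl⟩ := List.exists_cons_of_length_eq_add_one h.symm
    by_cases hb : b' = b
    · subst hb
      obtain ⟨p, c, hp, hp'⟩ := ih (by simpa using h) (by simpa using hne)
      exact ⟨b' :: p, c, by simpa using hp, by simpa using hp'⟩
    · exact ⟨[], b, by simp, by simpa using (Bool.eq_not_of_ne hb).symm⟩

end Cell

section PathSpan

variable {E : Type*} [AddCommGroup E] [Module ℝ E] {z z' : List Bool → E →ᵃ[ℝ] ℝ}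
  {g : E →ᵃ[ℝ] ℝ} {k : ℕ}

/-- The affine functions `g` that can be written as `c + ∑ a p * z p`, summed over the nodes `p`
above a leaf `e` of the tree of depth `k`, with coefficients that do not depend on the leaf. -/
def pathSpan (k : ℕ) (z : List Bool → E →ᵃ[ℝ] ℝ) : Submodule ℝ (E →ᵃ[ℝ] ℝ) where
  carrier := {g | ∃ (c : ℝ) (a : List Bool → ℝ), ∀ e : List Bool, e.length = k →
    ∀ x, g x = c + pathSum (fun p => a p * z p x) e}
  zero_mem' := ⟨0, 0, fun e _ x => by simp [pathSum]⟩
  add_mem' := by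
    rintro g h ⟨c, a, hg⟩ ⟨c', a', hh⟩
    refine ⟨c + c', a + a', fun e he x => ?_⟩
    simp only [AffineMap.coe_add, Pi.add_apply, hg e he, hh e he, pathSum, add_mul,
      Finset.sum_add_distrib]
    ring
  smul_mem' := by
    rintro t g ⟨c, a, hg⟩
    refine ⟨t * c, t • a, fun e he x => ?_⟩
    simp only [AffineMap.coe_smul, Pi.smul_apply, smul_eq_mul, hg e he, pathSum, mul_add,
      Finset.mul_sum, mul_assoc]

theorem mem_pathSpan : g ∈ pathSpan k z ↔ ∃ (c : ℝ) (a : List Bool → ℝ), ∀ e : List Bool,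
    e.length = k → ∀ x, g x = c + pathSum (fun p => a p * z p x) e := Iff.rfl

theorem mem_pathSpan_add_one {t c : ℝ} {a : List Bool → ℝ} (h : ∀ e : List Bool, e.length = k →
    ∀ x, g x = c + pathSum (fun p => a p * z p x) e + t * z e x) : g ∈ pathSpan (k + 1) z := by
  refine mem_pathSpan.2 ⟨c, fun p => if p.length < k then a p else t, fun e he' x => ?_⟩
  obtain ⟨e, b, he, rfl⟩ := exists_eq_concat_of_length_eq_add_one he'
  rw [h e he x, pathSum_concat, add_assoc]
  dsimp only
  rw [if_neg he.not_lt]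
  congr 2
  exact pathSum_congr fun p hp => by rw [if_pos (hp.trans_eq he)]

theorem const_add_pathSum_apply (c : ℝ) (a : List Bool → ℝ) (z : List Bool → E →ᵃ[ℝ] ℝ)
    (e : List Bool) (x : E) :
    (AffineMap.const ℝ E c + pathSum (fun p => a p • z p) e) x =
      c + pathSum (fun p => a p * z p x) e :=
  congrArg (c + ·) <| map_pathSum (AddMonoidHom.mk' (fun g : E →ᵃ[ℝ] ℝ => g x) fun _ _ => rfl)
    (fun p => a p • z p) e

theorem mem_pathSpan_add_one_of_eq_add {c : ℝ} {a : List Bool → ℝ}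
    (h : ∀ e : List Bool, e.length = k →
      z e = g + (AffineMap.const ℝ E c + pathSum (fun p => a p • z p) e)) :
    g ∈ pathSpan (k + 1) z := by
  refine mem_pathSpan_add_one (t := 1) (c := -c) (a := -a) fun e he x => ?_
  have z_apply : z e x = g x + (c + pathSum (fun p => a p * z p x) e) := by
    rw [← const_add_pathSum_apply, ← Pi.add_apply, ← AffineMap.coe_add, ← h e he]
  simp only [z_apply, Pi.neg_apply, neg_mul, pathSum, Finset.sum_neg_distrib]
  ring

theorem pathSpan_congr (h : ∀ p : List Bool, p.length < k → z p = z' p) :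
    pathSpan k z = pathSpan k z' := by
  ext g
  simp only [mem_pathSpan]
  refine exists₂_congr fun c a => forall₃_congr fun e he x => ?_
  rw [pathSum_congr fun p hp => by rw [h p (hp.trans_eq he)]]

theorem pathSpan_le_add_one (k : ℕ) (z : List Bool → E →ᵃ[ℝ] ℝ) :
    pathSpan k z ≤ pathSpan (k + 1) z := fun g hg => by
  obtain ⟨c, a, hca⟩ := mem_pathSpan.1 hg
  exact mem_pathSpan_add_one (t := 0) (by simpa using hca)

end PathSpan

section Interior

variable {E : Type*} [AddCommGroup E] [Module ℝ E] [TopologicalSpace E] [IsTopologicalAddGroup E]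
  [ContinuousSMul ℝ E] {z : List Bool → E →ᵃ[ℝ] ℝ} {g : E →ᵃ[ℝ] ℝ} {s : Set E} {x : E}
  {p e e' : List Bool} {b : Bool} {k : ℕ}

theorem pos_of_mem_interior_of_forall_nonneg (hg : g.linear ≠ 0) (hs : ∀ y ∈ s, 0 ≤ g y)
    (hx : x ∈ interior s) : 0 < g x := by
  have isOpenMap : IsOpenMap g := AffineMap.isOpenMap_linear_iff.1 <|
    g.linear.isOpenMap_of_finiteDimensional (LinearMap.surjective hg)
  rw [← mem_Ioi, ← interior_Ici]
  exact interior_mono (image_subset_iff.2 hs)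
    (isOpenMap.image_interior_subset s (mem_image_of_mem g hx))

theorem boolSign_mul_pos_of_mem_interior_cell (hz : (z p).linear ≠ 0) (hp : p ++ [b] <+: e)
    (hx : x ∈ interior (cell z e)) : 0 < boolSign b * z p x :=
  pos_of_mem_interior_of_forall_nonneg (g := boolSign b • z p) (s := cell z e)
    (smul_ne_zero (boolSign_ne_zero b) hz) (fun _ hy => hy p b hp) hx

theorem disjoint_interior_cell (hz : ∀ p : List Bool, p.length < k → (z p).linear ≠ 0)
    (he : e.length = k) (he' : e'.length = k) (hne : e ≠ e') :
    Disjoint (interior (cell z e)) (interior (cell z e')) := by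
  obtain ⟨p, b, hp, hp'⟩ := exists_concat_prefix_of_ne (he.trans he'.symm) hne
  have hzp := hz p (he ▸ length_lt_of_concat_prefix hp)
  refine disjoint_left.2 fun x hx hx' => ?_
  have pos := boolSign_mul_pos_of_mem_interior_cell hzp hp hx
  have pos' := boolSign_mul_pos_of_mem_interior_cell hzp hp' hx'
  rw [boolSign_not, neg_mul, neg_pos] at pos'
  exact lt_asymm pos pos'

theorem exists_interior_cell_ne_zero (hg : g ∈ pathSpan k z) (hg_lin : g.linear ≠ 0) :
    ∃ e : List Bool, e.length = k ∧ ∀ x ∈ interior (cell z e), g x ≠ 0 := by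
  obtain ⟨c, a, hca⟩ := mem_pathSpan.1 hg
  wlog hc : 0 ≤ c generalizing g c a
  · have neg_eq : ∀ e : List Bool, e.length = k → ∀ x,
        (-g) x = -c + pathSum (fun p => (-a) p * z p x) e := fun e he x => by
      simp only [AffineMap.coe_neg, Pi.neg_apply, hca e he, neg_add, pathSum, neg_mul,
        Finset.sum_neg_distrib]
    simpa using this (neg_mem hg) (by simpa using hg_lin) (-c) (-a) neg_eq (by linarith)
  obtain ⟨e, he, hsum⟩ := exists_forall_mem_cell_pathSum_nonneg z k a
  refine ⟨e, he, fun x hx => (pos_of_mem_interior_of_forall_nonneg hg_lin (fun y hy => ?_) hx).ne'⟩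
  rw [hca e he]
  exact add_nonneg hc (hsum y hy)

end Interior

section InitialAffine

variable {E : Type*} [AddCommGroup E] [Module ℝ E] {d k : ℕ}
  {b : Module.Basis (Fin d) ℝ E} {g : E →ᵃ[ℝ] ℝ}

/-- The affine functions that depend only on the first `k` coordinates with respect to `b`. -/
def initialAffine (b : Module.Basis (Fin d) ℝ E) (k : ℕ) : Submodule ℝ (E →ᵃ[ℝ] ℝ) where
  carrier := {g | ∀ j : Fin d, k ≤ j → g.linear (b j) = 0}
  zero_mem' _ _ := by simp
  add_mem' hg hh j hj := by simp [hg j hj, hh j hj]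
  smul_mem' t g hg j hj := by simp [hg j hj]

theorem mem_initialAffine :
    g ∈ initialAffine b k ↔ ∀ j : Fin d, k ≤ j → g.linear (b j) = 0 := Iff.rfl

theorem const_mem_initialAffine (c : ℝ) : AffineMap.const ℝ E c ∈ initialAffine b k :=
  mem_initialAffine.2 fun _ _ => by simp

theorem initialAffine_le_add_one (b : Module.Basis (Fin d) ℝ E) (k : ℕ) :
    initialAffine b k ≤ initialAffine b (k + 1) := fun _ hg j hj =>
  hg j (k.le_succ.trans hj)

theorem mem_initialAffine_self (g : E →ᵃ[ℝ] ℝ) : g ∈ initialAffine b d := fun j hj =>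
  absurd j.2 hj.not_gt

theorem exists_eq_const_of_mem_initialAffine_zero (hg : g ∈ initialAffine b 0) :
    ∃ c, g = AffineMap.const ℝ E c :=
  (AffineMap.linear_eq_zero_iff_exists_const g).1 <|
    b.ext fun j => by simpa using hg j (Nat.zero_le _)

theorem coord_mem_initialAffine (K : Fin d) :
    (b.coord K).toAffineMap ∈ initialAffine b (K + 1) := fun j hj => by
  have : j ≠ K := by omega
  simp [this]

theorem linear_coord_add_ne_zero (K : Fin d) (hg : g ∈ initialAffine b K) :
    ((b.coord K).toAffineMap + g).linear ≠ 0 := fun h => by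
  simpa [hg K le_rfl] using LinearMap.congr_fun h (b K)

theorem initialAffine_add_one_le {K : Fin d} {S : Submodule ℝ (E →ᵃ[ℝ] ℝ)}
    (hS : initialAffine b K ≤ S) (hK : (b.coord K).toAffineMap ∈ S) :
    initialAffine b (K + 1) ≤ S := fun g hg => by
  rw [← sub_add_cancel g (g.linear (b K) • (b.coord K).toAffineMap)]
  refine add_mem (hS fun j hj => ?_) (S.smul_mem _ hK)
  rcases eq_or_ne j K with rfl | hne
  · simp
  · simp [hne, hg j (by omega)]

end InitialAffine

section YaoYaoTree

variable {E : Type*} [AddCommGroup E] [Module ℝ E] {d k : ℕ}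
  {b : Module.Basis (Fin d) ℝ E} [MeasurableSpace E] {μ : Measure E}
  {z : List Bool → E →ᵃ[ℝ] ℝ} {g : E →ᵃ[ℝ] ℝ}

/-- A binary tree of depth `k` of affine functions of the first `k` coordinates whose leaves have
equal measure and whose paths represent every affine function of the first `k` coordinates. -/
structure IsYaoYaoTree (b : Module.Basis (Fin d) ℝ E) (μ : Measure E) (k : ℕ)
    (z : List Bool → E →ᵃ[ℝ] ℝ) : Prop where
  linear_ne_zero : ∀ p : List Bool, p.length < k → (z p).linear ≠ 0
  mem_initialAffine : ∀ p : List Bool, p.length < k → z p ∈ initialAffine b k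
  measureReal_cell : ∀ e : List Bool, e.length = k → μ.real (cell z e) = μ.real univ / 2 ^ k
  initialAffine_le_pathSpan : initialAffine b k ≤ pathSpan k z

theorem isYaoYaoTree_zero (z : List Bool → E →ᵃ[ℝ] ℝ) : IsYaoYaoTree b μ 0 z where
  linear_ne_zero _ hp := absurd hp (Nat.not_lt_zero _)
  mem_initialAffine _ hp := absurd hp (Nat.not_lt_zero _)
  measureReal_cell e he := by simp [List.length_eq_zero_iff.1 he]
  initialAffine_le_pathSpan g hg := by
    obtain ⟨c, rfl⟩ := exists_eq_const_of_mem_initialAffine_zero hg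
    exact mem_pathSpan.2 ⟨c, 0, fun e he x => by simp [List.length_eq_zero_iff.1 he]⟩

theorem IsYaoYaoTree.const_add_pathSum_mem_initialAffine (h : IsYaoYaoTree b μ k z) (c : ℝ)
    (a : List Bool → ℝ) {e : List Bool} (he : e.length ≤ k) :
    AffineMap.const ℝ E c + pathSum (fun p => a p • z p) e ∈ initialAffine b k := by
  refine add_mem (const_mem_initialAffine c) (sum_mem fun i hi => ?_)
  have : i < e.length := Finset.mem_range.1 hi
  exact Submodule.smul_mem _ _ (h.mem_initialAffine _ (by simp; omega))

/-- Every affine hyperplane is a null set of `μ`. -/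
def ChargesNoHyperplane (μ : Measure E) : Prop :=
  ∀ φ : E →ₗ[ℝ] ℝ, φ ≠ 0 → ∀ α : ℝ, μ {x | φ x = α} = 0

theorem ChargesNoHyperplane.measure_affineMap_eq_zero (hμ : ChargesNoHyperplane μ)
    (hg : g.linear ≠ 0) : μ {x | g x = 0} = 0 := by
  have zeros_eq : {x | g x = 0} = {x | g.linear x = -g 0} := by
    ext x
    simp [g.decomp', sub_eq_neg_self]
  rw [zeros_eq]
  exact hμ g.linear hg _

end YaoYaoTree

section Construction

variable {E : Type*} [NormedAddCommGroup E] [NormedSpace ℝ E] [FiniteDimensional ℝ E] {d k : ℕ}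
  {b : Module.Basis (Fin d) ℝ E} {z z' : List Bool → E →ᵃ[ℝ] ℝ}

theorem isClosed_cell (z : List Bool → E →ᵃ[ℝ] ℝ) (e : List Bool) :
    IsClosed (cell z e) := by
  rw [cell_eq_iInter]
  exact isClosed_iInter fun p => isClosed_iInter fun b => isClosed_iInter fun _ =>
    isClosed_Ici.preimage (AffineMap.continuous_of_finiteDimensional _)

variable [MeasurableSpace E] [BorelSpace E] {μ : Measure E}

theorem ChargesNoHyperplane.of_absolutelyContinuous {ν : Measure E} [ν.IsAddHaarMeasure]
    (h : μ ≪ ν) : ChargesNoHyperplane μ := fun φ hφ α => h <| by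
  obtain ⟨x, rfl⟩ := LinearMap.surjective hφ α
  have hyperplane_eq : {y | φ y = φ x} = (fun y => y + -x) ⁻¹' φ.ker := by
    ext y
    simp [add_neg_eq_zero]
  rw [hyperplane_eq, measure_preimage_add_right]
  exact Measure.addHaar_submodule ν φ.ker (mt LinearMap.ker_eq_top.1 hφ)

theorem measurable_affineMap (g : E →ᵃ[ℝ] ℝ) : Measurable g :=
  (AffineMap.continuous_of_finiteDimensional g).measurable

theorem measurableSet_cell (z : List Bool → E →ᵃ[ℝ] ℝ) (e : List Bool) :
    MeasurableSet (cell z e) :=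
  (isClosed_cell z e).measurableSet

theorem measureReal_cell_concat [IsFiniteMeasure μ] {e : List Bool}
    (hz : μ {x | z e x = 0} = 0) (hbis : Bisects (μ.restrict (cell z e)) (z e)) (s : Bool) :
    μ.real (cell z (e ++ [s])) = μ.real (cell z e) / 2 := by
  have hz' : μ.restrict (cell z e) {x | z e x = 0} = 0 :=
    Measure.restrict_le_self.absolutelyContinuous hz
  rw [cell_concat, ← measureReal_restrict_apply' (measurableSet_cell z e)]
  cases s
  · simpa [boolSign] using hbis.neg.measureReal_setOf_nonneg (measurable_affineMap (z e)).neg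
      (by simpa using hz')
  · simpa [boolSign] using hbis.measureReal_setOf_nonneg (measurable_affineMap (z e)) hz'

namespace IsYaoYaoTree

theorem separatesLeaves (h : IsYaoYaoTree b μ k z)
    (hμ : ChargesNoHyperplane μ) :
    SeparatesLeaves k (fun e => μ.restrict (cell z e)) fun p => z p := by
  intro e he p s hp
  have z_ne_zero : ∀ᵐ x ∂μ, z p x ≠ 0 := measure_eq_zero_iff_ae_notMem.1 <|
    hμ.measure_affineMap_eq_zero (h.linear_ne_zero p (he ▸ length_lt_of_concat_prefix hp))
  filter_upwards [ae_restrict_mem (measurableSet_cell z e), ae_restrict_of_ae z_ne_zero]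
    with x hx hzx
  exact (hx p s hp).lt_of_ne' (mul_ne_zero (boolSign_ne_zero s) hzx)

theorem exists_bisects [IsFiniteMeasure μ] (h : IsYaoYaoTree b μ k z)
    (hμ : ChargesNoHyperplane μ) {f : E → ℝ} (hf : Measurable f) :
    ∃ (c : ℝ) (a : List Bool → ℝ), ∀ e : List Bool, e.length = k →
      Bisects (μ.restrict (cell z e)) fun x => f x + c + pathSum (fun p => a p * z p x) e := by
  rcases eq_or_ne μ 0 with rfl | hμ0
  · exact ⟨0, 0, fun e _ => by simp [Bisects]⟩
  have := NeZero.mk hμ0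
  refine (h.separatesLeaves hμ).exists_forall_bisects (fun e he => ⟨fun h0 => ?_⟩)
    (fun p => measurable_affineMap (z p)) hf
  have cell_pos : 0 < μ.real (cell z e) := by
    rw [h.measureReal_cell e he]
    have := measureReal_univ_pos (μ := μ)
    positivity
  simp [Measure.real, Measure.restrict_eq_zero.1 h0] at cell_pos

theorem add_one [IsFiniteMeasure μ] {K : Fin d} (h : IsYaoYaoTree b μ K z)
    (hμ : ChargesNoHyperplane μ)
    (hz' : ∀ p : List Bool, p.length < K → z p = z' p) {c : ℝ} {a : List Bool → ℝ}
    (hz'_eq : ∀ e : List Bool, e.length = K → z' e = (b.coord K).toAffineMap +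
      (AffineMap.const ℝ E c + pathSum (fun p => a p • z p) e))
    (hbis : ∀ e : List Bool, e.length = K → Bisects (μ.restrict (cell z e)) (z' e)) :
    IsYaoYaoTree b μ (K + 1) z' := by
  have linear_ne_zero (p : List Bool) (hp : p.length < K + 1) : (z' p).linear ≠ 0 := by
    rcases Nat.lt_succ_iff_lt_or_eq.1 hp with hp | hp
    · exact hz' p hp ▸ h.linear_ne_zero p hp
    · exact hz'_eq p hp ▸
        linear_coord_add_ne_zero K (h.const_add_pathSum_mem_initialAffine c a hp.le)
  refine ⟨linear_ne_zero, fun p hp => ?_, fun e he' => ?_, ?_⟩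
  · rcases Nat.lt_succ_iff_lt_or_eq.1 hp with hp | hp
    · exact initialAffine_le_add_one b K (hz' p hp ▸ h.mem_initialAffine p hp)
    · exact hz'_eq p hp ▸ add_mem (coord_mem_initialAffine K) (initialAffine_le_add_one b K
        (h.const_add_pathSum_mem_initialAffine c a hp.le))
  · obtain ⟨e, s, he, rfl⟩ := exists_eq_concat_of_length_eq_add_one he'
    have cell_eq : cell z e = cell z' e := cell_congr fun p hp => hz' p (he ▸ hp)
    rw [measureReal_cell_concat (hμ.measure_affineMap_eq_zero (linear_ne_zero e (by omega)))
      (cell_eq ▸ hbis e he), ← cell_eq, h.measureReal_cell e he, pow_succ, div_div]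
  · refine initialAffine_add_one_le ?_ (mem_pathSpan_add_one_of_eq_add (c := c) (a := a)
      fun e he => ?_)
    · exact (h.initialAffine_le_pathSpan.trans_eq (pathSpan_congr hz')).trans
        (pathSpan_le_add_one K z')
    · rw [hz'_eq e he, pathSum_congr fun p hp => by rw [hz' p (he ▸ hp)]]

theorem exists_add_one [IsFiniteMeasure μ] {K : Fin d} (h : IsYaoYaoTree b μ K z)
    (hμ : ChargesNoHyperplane μ) :
    ∃ z', IsYaoYaoTree b μ (K + 1) z' := by
  obtain ⟨c, a, hbis⟩ := h.exists_bisects hμ (measurable_affineMap (b.coord K).toAffineMap)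
  refine ⟨fun p => if p.length < K then z p else (b.coord K).toAffineMap +
    (AffineMap.const ℝ E c + pathSum (fun p => a p • z p) p),
    h.add_one hμ (fun p hp => (if_pos hp).symm) (fun e he => if_neg he.not_lt) fun e he => ?_⟩
  simp only [if_neg he.not_lt]
  convert hbis e he using 2 with x
  rw [AffineMap.coe_add, Pi.add_apply, const_add_pathSum_apply, add_assoc]

end IsYaoYaoTree

theorem exists_isYaoYaoTree [IsFiniteMeasure μ] (b : Module.Basis (Fin d) ℝ E)
    (hμ : ChargesNoHyperplane μ) (hk : k ≤ d) : ∃ z, IsYaoYaoTree b μ k z := by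
  induction k with
  | zero => exact ⟨0, isYaoYaoTree_zero 0⟩
  | succ k ih =>
    obtain ⟨z, hz⟩ := ih (by omega)
    exact hz.exists_add_one (K := ⟨k, hk⟩) hμ

end Construction

end YaoYao

open YaoYao in
theorem yao_yao_general {E : Type*} [NormedAddCommGroup E] [NormedSpace ℝ E]
    [FiniteDimensional ℝ E] [MeasurableSpace E] [BorelSpace E] {d : ℕ}
    (hd : Module.finrank ℝ E = d) (μ : Measure E) [IsFiniteMeasure μ]
    (hμ : ∀ φ : E →ₗ[ℝ] ℝ, φ ≠ 0 → ∀ α : ℝ, μ {x | φ x = α} = 0) :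
    ∃ C : Fin (2 ^ d) → Set E,
      (∀ j, IsClosed (C j)) ∧ (∀ j, Convex ℝ (C j)) ∧ (⋃ j, C j) = Set.univ ∧
      (∀ j j', j ≠ j' → Disjoint (interior (C j)) (interior (C j'))) ∧
      (∀ j, μ (C j) = μ Set.univ / 2 ^ d) ∧
      ∀ φ : E →ₗ[ℝ] ℝ, φ ≠ 0 → ∀ α : ℝ, ∃ j, interior (C j) ∩ {x | φ x = α} = ∅ := by
  obtain ⟨z, hz⟩ := exists_isYaoYaoTree (Module.finBasisOfFinrankEq ℝ E hd) hμ le_rfl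
  let leaf : Fin (2 ^ d) ≃ List.Vector Bool d := (Fintype.equivFinOfCardEq (by simp)).symm
  have exists_leaf {e : List Bool} (he : e.length = d) : ∃ j, (leaf j).toList = e :=
    (leaf.surjective ⟨e, he⟩).imp fun j hj => by rw [hj]; rfl
  refine ⟨fun j => cell z (leaf j).toList, fun j => isClosed_cell _ _, fun j => convex_cell _ _,
    Set.eq_univ_of_forall fun x => ?_, fun j j' hne => ?_, fun j => ?_, fun φ hφ α => ?_⟩
  · obtain ⟨e, he, hx⟩ := exists_mem_cell z d x
    obtain ⟨j, rfl⟩ := exists_leaf he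
    exact Set.mem_iUnion.2 ⟨j, hx⟩
  · exact disjoint_interior_cell hz.linear_ne_zero (leaf j).toList_length (leaf j').toList_length
      fun h => hne (leaf.injective (List.Vector.toList_injective h))
  · rw [← ENNReal.toReal_eq_toReal_iff' (by simp) (by simp [ENNReal.div_eq_top])]
    simpa [Measure.real] using hz.measureReal_cell _ (leaf j).toList_length
  · obtain ⟨e, he, hne⟩ := exists_interior_cell_ne_zero (g := φ.toAffineMap - .const ℝ E α)
      (hz.initialAffine_le_pathSpan (mem_initialAffine_self _)) (by simpa using hφ)
    obtain ⟨j, rfl⟩ := exists_leaf he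
    exact ⟨j, Set.disjoint_iff_inter_eq_empty.1 <| Set.disjoint_left.2 fun x hx hφx =>
      hne x hx (sub_eq_zero.2 hφx)⟩

/-- The Yao–Yao theorem: an equipartition into `2^d` convex parts such that no
hyperplane meets the interior of every part. -/
theorem yao_yao (d : ℕ) (hd : 0 < d)
    (μ : Measure (EuclideanSpace ℝ (Fin d)))
    (hfin : IsFiniteMeasure μ) (hac : μ ≪ volume) :
    ∃ C : Fin (2 ^ d) → Set (EuclideanSpace ℝ (Fin d)),
      (∀ j, IsClosed (C j)) ∧ (∀ j, Convex ℝ (C j)) ∧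
      (⋃ j, C j) = Set.univ ∧
      (∀ j j', j ≠ j' → Disjoint (interior (C j)) (interior (C j'))) ∧
      (∀ j, μ (C j) = μ Set.univ / 2 ^ d) ∧
      ∀ (v : EuclideanSpace ℝ (Fin d)) (α : ℝ), v ≠ 0 →
        ∃ j, interior (C j) ∩ {x | ⟪x, v⟫ = α} = ∅ := by
  obtain ⟨C, hclosed, hconvex, hcover, hdisjoint, hmeasure, hmiss⟩ := yao_yao_general
    finrank_euclideanSpace_fin μ (YaoYao.ChargesNoHyperplane.of_absolutelyContinuous hac)
  refine ⟨C, hclosed, hconvex, hcover, hdisjoint, hmeasure, fun v α hv => ?_⟩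
  simpa [real_inner_comm] using hmiss (innerₛₗ ℝ v)
    (fun h => hv (inner_self_eq_zero.1 (LinearMap.congr_fun h v))) α
end

section
/- Let d be a positive integer and let X be a finite set of points in ℝ^d. Then there exists a point p ∈ ℝ^d such that every closed half-space containing p contains at least |X|/(d+1) points of X. -/
open MeasureTheory
open scoped RealInnerProductSpace

/-!
Call a subset `T` of `X` small if `(d + 1) * |T| < |X|`. At most `d + 1` small sets never cover `X`,
so the convex hulls of any `d + 1` of the sets `X \ T` have a common point, and by Helly's theorem
all of these hulls share a point `p`. If a half-space `H` meets `X` in a small set `T`, then `X \ T`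
lies in the complement of `H`, which is convex and therefore contains `p`.
-/

theorem card_biUnion_lt_of_forall_mul_card_lt {ι α : Type*} [DecidableEq α] {s : Finset ι}
    {f : ι → Finset α} {m n : ℕ} (hs : s.Nonempty) (hsn : s.card ≤ n)
    (hf : ∀ i ∈ s, n * (f i).card < m) : (s.biUnion f).card < m := by
  refine lt_of_mul_lt_mul_left (a := n) ?_ n.zero_le
  calc n * (s.biUnion f).card
      ≤ n * ∑ i ∈ s, (f i).card := Nat.mul_le_mul_left n Finset.card_biUnion_le
    _ = ∑ i ∈ s, n * (f i).card := Finset.mul_sum ..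
    _ < ∑ _i ∈ s, m := Finset.sum_lt_sum_of_nonempty hs hf
    _ = s.card * m := Finset.sum_const_nat fun _ _ ↦ rfl
    _ ≤ n * m := Nat.mul_le_mul_right m hsn

section Convex

variable {𝕜 E : Type*} [Field 𝕜] [LinearOrder 𝕜] [IsStrictOrderedRing 𝕜]
  [AddCommGroup E] [Module 𝕜 E]

theorem exists_forall_mem_convexHull_sdiff [FiniteDimensional 𝕜 E] (X : Finset E) :
    ∃ p : E, ∀ T ⊆ X, (Module.finrank 𝕜 E + 1) * T.card < X.card →
      p ∈ convexHull 𝕜 (X \ T : Set E) := by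
  classical
  let small := X.powerset.filter fun T ↦ (Module.finrank 𝕜 E + 1) * T.card < X.card
  suffices (⋂ T ∈ small, convexHull 𝕜 (X \ T : Set E)).Nonempty by
    obtain ⟨p, hp⟩ := this
    exact ⟨p, fun T hTX hT ↦
      Set.mem_iInter₂.1 hp T (Finset.mem_filter.2 ⟨Finset.mem_powerset.2 hTX, hT⟩)⟩
  refine Convex.helly_theorem' (𝕜 := 𝕜) (fun T _ ↦ convex_convexHull 𝕜 _) fun I hI hIcard ↦ ?_
  obtain rfl | hIne := I.eq_empty_or_nonempty
  · simp
  have union_card_lt : (I.biUnion id).card < X.card :=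
    card_biUnion_lt_of_forall_mul_card_lt hIne hIcard fun T hT ↦ (Finset.mem_filter.1 (hI hT)).2
  obtain ⟨x, hxX, hxI⟩ := Finset.exists_mem_notMem_of_card_lt_card union_card_lt
  refine ⟨x, Set.mem_iInter₂.2 fun T hT ↦ subset_convexHull 𝕜 _ ⟨hxX, fun hxT ↦ hxI ?_⟩⟩
  exact Finset.mem_biUnion.2 ⟨T, hT, hxT⟩

theorem convex_compl_halfSpace_le {f : E → 𝕜} (hf : IsLinearMap 𝕜 f) (r : 𝕜) :
    Convex 𝕜 {x | f x ≤ r}ᶜ := by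
  simpa only [Set.compl_ofPred, not_le] using convex_halfSpace_gt hf r

theorem centerpoint_general [FiniteDimensional 𝕜 E] (X : Finset E) :
    ∃ p : E, ∀ H : Set E, Convex 𝕜 Hᶜ → p ∈ H →
      X.card ≤ (Module.finrank 𝕜 E + 1) * (X ∩ H : Set E).ncard := by
  classical
  obtain ⟨p, hp⟩ := exists_forall_mem_convexHull_sdiff (𝕜 := 𝕜) X
  refine ⟨p, fun H hH hpH ↦ ?_⟩
  have inter_eq : (X ∩ H : Set E) = X.filter (· ∈ H) := (Finset.coe_filter _ X).symm
  rw [inter_eq, Set.ncard_coe_finset]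
  by_contra! few
  have sdiff_subset : (X \ X.filter (· ∈ H) : Set E) ⊆ Hᶜ :=
    fun x hx hxH ↦ hx.2 (Finset.mem_filter.2 ⟨hx.1, hxH⟩)
  exact convexHull_min sdiff_subset hH (hp _ (Finset.filter_subset _ _) few) hpH

end Convex

/-- Rado's centerpoint theorem. -/
theorem centerpoint (d : ℕ) (hd : 0 < d)
    (X : Finset (EuclideanSpace ℝ (Fin d))) :
    ∃ p : EuclideanSpace ℝ (Fin d),
      ∀ (v : EuclideanSpace ℝ (Fin d)) (α : ℝ), v ≠ 0 →
        ⟪p, v⟫ ≤ α →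
        (X.card : ℝ) / (d + 1)
          ≤ (((↑X : Set (EuclideanSpace ℝ (Fin d))) ∩ {x | ⟪x, v⟫ ≤ α}).ncard : ℝ) := by
  obtain ⟨p, hp⟩ := centerpoint_general (𝕜 := ℝ) X
  refine ⟨p, fun v α _ hpv ↦ ?_⟩
  have count := hp _ (convex_compl_halfSpace_le ((innerₗ _).flip v).isLinear α) hpv
  rw [finrank_euclideanSpace_fin] at count
  rw [div_le_iff₀' (by positivity)]
  exact_mod_cast count
end
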